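/- Let q = p^f be a power of an odd prime p, let n ≥ 7, let Q be a nondegenerate quadratic form on V = F_q^n, and let GO(V,Q) be the group of similitudes of Q; suppose GO(V,Q) is not solvable. Let π be a set of primes with 2 ∉ π and p ∉ π such that |π ∩ π(GO(V,Q))| ≥ 2, and suppose GO(V,Q) has a Hall π-subgroup H. Set G = H·(GO(V,Q) ∩ SL_n(F_q)). Then there exist x, y, z ∈ G such that H ∩ H^x ∩ H^y ∩ H^z is contained in the center of GO(V,Q), i.e. consists of scalar matrices. -/

import Mathlib

open Matrix Pointwise

/-- `H^x = x⁻¹ H x`. -/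
def conjBy {G : Type*} [Group G] (H : Subgroup G) (x : G) : Subgroup G :=
  Subgroup.map ((MulAut.conj x⁻¹).toMonoidHom) H

/-- Hall π-subgroup of the whole group. -/
def IsHallSubgroup {G : Type*} [Group G] (π : Set ℕ) (H : Subgroup G) : Prop :=
  (∀ r : ℕ, r.Prime → r ∣ Nat.card H → r ∈ π) ∧ ∀ r ∈ π, ¬ r ∣ H.index

/-- Hall π-subgroup of the subgroup `K`. -/
def IsHallSubgroupIn {G : Type*} [Group G] (π : Set ℕ) (K H : Subgroup G) : Prop :=
  H ≤ K ∧ (∀ r : ℕ, r.Prime → r ∣ Nat.card H → r ∈ π) ∧ ∀ r ∈ π, ¬ r ∣ H.relIndex K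

/-- The subgroup `SL_n` of `GL_n`. -/
def SLsub (n : ℕ) (F : Type*) [Field F] : Subgroup (GL (Fin n) F) where
  carrier := {g | Matrix.det (g : Matrix (Fin n) (Fin n) F) = 1}
  one_mem' := by simp
  mul_mem' := by
    intro a b ha hb
    simp only [Set.mem_setOf_eq, Units.val_mul, Matrix.det_mul] at *
    rw [ha, hb, one_mul]
  inv_mem' := by
    intro g hg
    simp only [Set.mem_setOf_eq] at *
    have h1 : ((g⁻¹ : GL (Fin n) F) : Matrix (Fin n) (Fin n) F) *
        (g : Matrix (Fin n) (Fin n) F) = 1 := g.inv_mul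
    have := congrArg Matrix.det h1
    rw [Matrix.det_mul, Matrix.det_one, hg, mul_one] at this
    exact this

/-- The group of similitudes of the bilinear form `B` (acting on row vectors). -/
def similitudeGroup {n : ℕ} {F : Type*} [Field F]
    (B : (Fin n → F) → (Fin n → F) → F) : Subgroup (GL (Fin n) F) where
  carrier := {g | ∃ c : Fˣ, ∀ u v : Fin n → F,
    B (Matrix.vecMul u (g : Matrix (Fin n) (Fin n) F))
      (Matrix.vecMul v (g : Matrix (Fin n) (Fin n) F)) = (c : F) * B u v}
  one_mem' := ⟨1, by simp⟩
  mul_mem' := by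
    rintro a b ⟨c, hc⟩ ⟨d, hd⟩
    refine ⟨c * d, fun u v => ?_⟩
    simp only [Units.val_mul, ← Matrix.vecMul_vecMul, hd, hc]
    ring
  inv_mem' := by
    rintro g ⟨c, hc⟩
    refine ⟨c⁻¹, fun u v => ?_⟩
    have h1 : ∀ w : Fin n → F, Matrix.vecMul
        (Matrix.vecMul w ((g⁻¹ : GL (Fin n) F) : Matrix (Fin n) (Fin n) F))
        (g : Matrix (Fin n) (Fin n) F) = w := by
      intro w
      rw [Matrix.vecMul_vecMul, g.inv_mul, Matrix.vecMul_one]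
    have h2 := hc (Matrix.vecMul u ((g⁻¹ : GL (Fin n) F) : Matrix (Fin n) (Fin n) F))
      (Matrix.vecMul v ((g⁻¹ : GL (Fin n) F) : Matrix (Fin n) (Fin n) F))
    rw [h1, h1] at h2
    rw [h2, Units.val_inv_eq_inv_val, inv_mul_cancel_left₀ (by exact_mod_cast c.ne_zero)]

/-- The isometry group of the bilinear form `B` (acting on row vectors). -/
def isometryGroup {n : ℕ} {F : Type*} [Field F]
    (B : (Fin n → F) → (Fin n → F) → F) : Subgroup (GL (Fin n) F) where
  carrier := {g | ∀ u v : Fin n → F,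
    B (Matrix.vecMul u (g : Matrix (Fin n) (Fin n) F))
      (Matrix.vecMul v (g : Matrix (Fin n) (Fin n) F)) = B u v}
  one_mem' := by simp
  mul_mem' := by
    intro a b ha hb u v
    simp only [Set.mem_setOf_eq] at ha hb
    simp only [Units.val_mul, ← Matrix.vecMul_vecMul]
    rw [hb, ha]
  inv_mem' := by
    intro g hg u v
    have h1 : ∀ w : Fin n → F, Matrix.vecMul
        (Matrix.vecMul w ((g⁻¹ : GL (Fin n) F) : Matrix (Fin n) (Fin n) F))
        (g : Matrix (Fin n) (Fin n) F) = w := by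
      intro w
      rw [Matrix.vecMul_vecMul, g.inv_mul, Matrix.vecMul_one]
    have h2 := hg (Matrix.vecMul u ((g⁻¹ : GL (Fin n) F) : Matrix (Fin n) (Fin n) F))
      (Matrix.vecMul v ((g⁻¹ : GL (Fin n) F) : Matrix (Fin n) (Fin n) F))
    rw [h1, h1] at h2
    exact h2.symm

/-- The group of similitudes of the quadratic form `Q` (acting on row vectors). -/
def qSimilitudeGroup {n : ℕ} {F : Type*} [Field F]
    (Q : (Fin n → F) → F) : Subgroup (GL (Fin n) F) where
  carrier := {g | ∃ c : Fˣ, ∀ v : Fin n → F,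
    Q (Matrix.vecMul v (g : Matrix (Fin n) (Fin n) F)) = (c : F) * Q v}
  one_mem' := ⟨1, by simp⟩
  mul_mem' := by
    rintro a b ⟨c, hc⟩ ⟨d, hd⟩
    refine ⟨c * d, fun v => ?_⟩
    simp only [Units.val_mul, ← Matrix.vecMul_vecMul, hd, hc]
    ring
  inv_mem' := by
    rintro g ⟨c, hc⟩
    refine ⟨c⁻¹, fun v => ?_⟩
    have h1 : ∀ w : Fin n → F, Matrix.vecMul
        (Matrix.vecMul w ((g⁻¹ : GL (Fin n) F) : Matrix (Fin n) (Fin n) F))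
        (g : Matrix (Fin n) (Fin n) F) = w := by
      intro w
      rw [Matrix.vecMul_vecMul, g.inv_mul, Matrix.vecMul_one]
    have h2 := hc (Matrix.vecMul v ((g⁻¹ : GL (Fin n) F) : Matrix (Fin n) (Fin n) F))
    rw [h1] at h2
    rw [h2, Units.val_inv_eq_inv_val, inv_mul_cancel_left₀ (by exact_mod_cast c.ne_zero)]

/-- The unitary group `GU_n` with respect to the field automorphism `φ`. -/
def GUgrp (n : ℕ) {K : Type*} [Field K] (φ : K →+* K) : Subgroup (GL (Fin n) K) where
  carrier := {g | ((g : Matrix (Fin n) (Fin n) K).map φ)ᵀ * (g : Matrix (Fin n) (Fin n) K) = 1}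
  one_mem' := by
    simp [Matrix.map_one φ φ.map_zero φ.map_one]
  mul_mem' := by
    intro a b ha hb
    simp only [Set.mem_setOf_eq, Units.val_mul, Matrix.map_mul, Matrix.transpose_mul] at *
    calc ((b : Matrix (Fin n) (Fin n) K).map φ)ᵀ * ((a : Matrix (Fin n) (Fin n) K).map φ)ᵀ *
          ((a : Matrix (Fin n) (Fin n) K) * (b : Matrix (Fin n) (Fin n) K))
        = ((b : Matrix (Fin n) (Fin n) K).map φ)ᵀ *
          (((a : Matrix (Fin n) (Fin n) K).map φ)ᵀ * (a : Matrix (Fin n) (Fin n) K)) *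
          (b : Matrix (Fin n) (Fin n) K) := by noncomm_ring
      _ = 1 := by rw [ha, mul_one, hb]
  inv_mem' := by
    intro g hg
    simp only [Set.mem_setOf_eq] at *
    have hcomm : (g : Matrix (Fin n) (Fin n) K) * ((g : Matrix (Fin n) (Fin n) K).map φ)ᵀ = 1 :=
      mul_eq_one_comm.mp hg
    have h1 : ((g : Matrix (Fin n) (Fin n) K) * ((g⁻¹ : GL (Fin n) K) : Matrix (Fin n) (Fin n) K)).map φ = 1 := by
      rw [g.mul_inv]
      exact Matrix.map_one φ φ.map_zero φ.map_one
    rw [Matrix.map_mul] at h1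
    have h2 := congrArg Matrix.transpose h1
    rw [Matrix.transpose_mul, Matrix.transpose_one] at h2
    calc (((g⁻¹ : GL (Fin n) K) : Matrix (Fin n) (Fin n) K).map φ)ᵀ *
          ((g⁻¹ : GL (Fin n) K) : Matrix (Fin n) (Fin n) K)
        = (((g⁻¹ : GL (Fin n) K) : Matrix (Fin n) (Fin n) K).map φ)ᵀ *
          (((g : Matrix (Fin n) (Fin n) K).map φ)ᵀ * (g : Matrix (Fin n) (Fin n) K)) *
          ((g⁻¹ : GL (Fin n) K) : Matrix (Fin n) (Fin n) K) := by rw [hg, mul_one]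
      _ = ((((g⁻¹ : GL (Fin n) K) : Matrix (Fin n) (Fin n) K).map φ)ᵀ *
          ((g : Matrix (Fin n) (Fin n) K).map φ)ᵀ) *
          ((g : Matrix (Fin n) (Fin n) K) * ((g⁻¹ : GL (Fin n) K) : Matrix (Fin n) (Fin n) K)) := by
            noncomm_ring
      _ = 1 := by rw [h2, g.mul_inv, mul_one]





set_option linter.all false

/-! ### Group theory preliminaries -/

lemma hall_conj {G : Type*} [Group G] [Finite G] (H : Subgroup G) (s : ℕ) [Fact s.Prime]
    (hs : ¬ s ∣ H.index) (P : Subgroup G) (hP : IsPGroup s P) :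
    ∃ y : G, ∀ g ∈ P, y⁻¹ * g * y ∈ H := by
  classical
  have h1 : ¬ s ∣ Nat.card (G ⧸ H) := hs
  obtain ⟨a, ha⟩ := hP.nonempty_fixed_point_of_prime_not_dvd_card (G ⧸ H) h1
  induction a using QuotientGroup.induction_on with
  | H y =>
    refine ⟨y, fun g hg => ?_⟩
    have := ha ⟨g, hg⟩
    have h2 : ((g * y : G) : G ⧸ H) = (y : G ⧸ H) := this
    have h3 := QuotientGroup.eq.1 h2.symm
    simpa [mul_assoc] using h3

section MNA
variable {M : Type*} [Group M] [Finite M]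

lemma mna_aux (hnc : ∃ a b : M, ¬ Commute a b)
    (hprop : ∀ K : Subgroup M, K ≠ ⊤ → ∀ a ∈ K, ∀ b ∈ K, Commute a b) :
    ∃ x : M, (∃ b, ¬ Commute x b) ∧ ∀ g a : M, Commute a x → Commute (g * a * g⁻¹) x := by
  classical
  haveI := Fintype.ofFinite M
  by_contra hcon
  push Not at hcon
  -- noncentral elements
  let nc : M → Prop := fun x => ∃ b, ¬ Commute x b
  have hC : ∀ x, nc x → ∀ a b, Commute a x → Commute b x → Commute a b := by
    rintro x ⟨b0, hb0⟩ a b ha hb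
    refine hprop (Subgroup.centralizer {x}) ?_ a ?_ b ?_
    · intro h
      apply hb0
      have : b0 ∈ Subgroup.centralizer {x} := by rw [h]; trivial
      exact (Subgroup.mem_centralizer_singleton_iff.1 this).symm
    · exact Subgroup.mem_centralizer_singleton_iff.2 ha
    · exact Subgroup.mem_centralizer_singleton_iff.2 hb
  -- sharing
  have hsh : ∀ x z, nc x → nc z → Commute z x → ∀ a, Commute a x ↔ Commute a z := by
    intro x z hx hz hzx a
    exact ⟨fun h => hC x hx a z h hzx, fun h => hC z hz a x h hzx.symm⟩
  have hconj : ∀ (g a b : M), Commute (g * a * g⁻¹) (g * b * g⁻¹) ↔ Commute a b := by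
    intro g a b
    have := Commute.conj_iff (a := a) (b := b) g
    exact this
  have hncconj : ∀ g a, nc a → nc (g * a * g⁻¹) := by
    rintro g a ⟨b, hb⟩
    exact ⟨g * b * g⁻¹, fun h => hb ((hconj g a b).1 h)⟩
  -- normalizer
  have hN : ∀ x, nc x → ∀ n, (∀ a, Commute a x → Commute (n * a * n⁻¹) x) → Commute n x := by
    intro x hx n hn
    let N : Subgroup M := Subgroup.normalizer (Subgroup.centralizer {x} : Set M)
    have hmem : ∀ g, (∀ a, Commute a x → Commute (g * a * g⁻¹) x) → g ∈ N := by
      intro g hg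
      have hle : (Subgroup.centralizer {x}).map (MulAut.conj g).toMonoidHom
          ≤ Subgroup.centralizer {x} := by
        rintro _ ⟨a, ha, rfl⟩
        exact Subgroup.mem_centralizer_singleton_iff.2
          (hg a (Subgroup.mem_centralizer_singleton_iff.1 ha))
      have heq : (Subgroup.centralizer {x}).map (MulAut.conj g).toMonoidHom
          = Subgroup.centralizer {x} := by
        apply Subgroup.eq_of_le_of_card_ge hle
        rw [Subgroup.card_map_of_injective (MulAut.conj g).injective]
      rw [Subgroup.mem_normalizer_iff]
      intro a
      constructor
      · intro ha
        exact hle ⟨a, ha, rfl⟩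
      · intro ha
        have : g * a * g⁻¹ ∈ (Subgroup.centralizer {x}).map (MulAut.conj g).toMonoidHom := by
          rw [heq]; exact ha
        obtain ⟨b, hb, hb2⟩ := this
        have : b = a := by
          have := hb2
          simp only [MulEquiv.toMonoidHom_eq_coe, MonoidHom.coe_coe, MulAut.conj_apply] at this
          simpa using this
        rw [← this]; exact hb
    have hNtop : N ≠ ⊤ := by
      intro htop
      obtain ⟨g, a, ha, hga⟩ := hcon x hx
      apply hga
      have : g ∈ N := by rw [htop]; trivial
      have := (Subgroup.mem_normalizer_iff.1 this a).1
        (Subgroup.mem_centralizer_singleton_iff.2 ha)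
      exact Subgroup.mem_centralizer_singleton_iff.1 this
    refine hprop N hNtop n (hmem n hn) x (hmem x ?_)
    intro a ha
    have : x * a * x⁻¹ = a := by rw [← ha.eq]; group
    rw [this]; exact ha
  let Z : Finset M := Finset.univ.filter (fun z => ¬ nc z)
  let A : M → Finset M := fun x => Finset.univ.filter (fun a => Commute a x)
  let A' : M → Finset M := fun x => (A x).filter nc
  let U : M → Finset M := fun x => (Finset.univ ×ˢ A' x).image (fun ga : M × M => ga.1 * ga.2 * ga.1⁻¹)
  have hcardA : ∀ x, nc x → (A' x).card + Z.card = (A x).card := by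
    intro x hx
    rw [← Finset.card_filter_add_card_filter_not (s := A x) nc]
    congr 2
    ext z
    simp only [Z, A, Finset.mem_filter, Finset.mem_univ, true_and]
    constructor
    · intro h
      refine ⟨?_, h⟩
      by_contra h2
      exact h ⟨x, h2⟩
    · exact fun h => h.2
  have hAx : ∀ x, (A x).card = Nat.card (Subgroup.centralizer {x}) := by
    intro x
    rw [Nat.card_eq_fintype_card]
    rw [Fintype.card_subtype]
    congr 1
    ext a
    simp [A, Subgroup.mem_centralizer_singleton_iff, commute_iff_eq]
  have hZ : Z.card = Nat.card (Subgroup.center M) := by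
    rw [Nat.card_eq_fintype_card, Fintype.card_subtype]
    congr 1
    ext a
    simp only [Z, nc, Finset.mem_filter, Finset.mem_univ, true_and, Subgroup.mem_center_iff]
    push Not
    exact ⟨fun h g => ((h g).eq).symm, fun h g => (h g).symm⟩
  have hZpos : 0 < Z.card := by rw [hZ]; exact Nat.card_pos
  have h2Z : ∀ x, nc x → 2 * Z.card ≤ (A x).card := by
    intro x hx
    have hle : Subgroup.center M ≤ Subgroup.centralizer {x} := Subgroup.center_le_centralizer _
    have hdvd := Subgroup.card_dvd_of_le hle
    rw [← hZ, ← hAx] at hdvd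
    obtain ⟨c, hc⟩ := hdvd
    have hne : c ≠ 1 := by
      rintro rfl
      have h1 := hcardA x hx
      have h2 : (A' x).card = 0 := by rw [mul_one] at hc; omega
      have h3 : x ∈ A' x := by
        simp only [A', A, Finset.mem_filter, Finset.mem_univ, true_and]
        exact ⟨Commute.refl x, hx⟩
      rw [Finset.card_eq_zero] at h2
      rw [h2] at h3
      simp at h3
    have hne0 : c ≠ 0 := by
      rintro rfl
      have h1 := hcardA x hx
      omega
    have : 2 ≤ c := by omega
    rw [hc, mul_comm]
    exact Nat.mul_le_mul_left _ this
  have hlow : ∀ x, nc x → Fintype.card M * (A' x).card ≤ (A x).card * (U x).card := by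
    intro x hx
    have := Finset.card_le_mul_card_image (f := fun ga : M × M => ga.1 * ga.2 * ga.1⁻¹)
      (Finset.univ ×ˢ A' x) (A x).card ?_
    · rw [Finset.card_product, Finset.card_univ] at this
      exact this
    · intro u hu
      obtain ⟨⟨g, a⟩, hga, rfl⟩ := Finset.mem_image.1 hu
      apply Finset.card_le_card_of_injOn (fun hb : M × M => g⁻¹ * hb.1)
      · rintro ⟨h, b⟩ hb
        simp only [Finset.coe_filter, Finset.mem_product, Finset.mem_univ, true_and,
          Set.mem_setOf_eq, A', A, Finset.mem_filter] at hb hga ⊢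
        obtain ⟨⟨hb1, hb2⟩, hb3⟩ := hb
        apply hN x hx
        intro c hc
        have e1 : Commute c b := (hsh x b hx hb2 hb1 c).1 hc
        have e2 : Commute (g⁻¹ * h * c * (g⁻¹ * h)⁻¹) (g⁻¹ * h * b * (g⁻¹ * h)⁻¹) :=
          (hconj _ _ _).2 e1
        have e3 : g⁻¹ * h * b * (g⁻¹ * h)⁻¹ = a := by
          have : g⁻¹ * h * b * (g⁻¹ * h)⁻¹ = g⁻¹ * (h * b * h⁻¹) * g := by group
          rw [this, hb3]; group
        rw [e3] at e2
        exact (hsh x a hx hga.2 hga.1 _).2 e2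
      · rintro ⟨h, b⟩ hb ⟨h', b'⟩ hb' heq
        simp only [Finset.coe_filter, Set.mem_setOf_eq] at hb hb' heq
        have hh : h = h' := mul_left_cancel heq
        subst hh
        have : h * b * h⁻¹ = h * b' * h⁻¹ := hb.2.trans hb'.2.symm
        have : b = b' := by simpa using this
        rw [this]
  have hup : ∀ x, nc x → (U x).card * (A x).card ≤ Fintype.card M * (A' x).card := by
    intro x hx
    let C := Subgroup.centralizer {x}
    have hsub : U x ⊆ ((Finset.univ : Finset (M ⧸ C)) ×ˢ A' x).image
        (fun ga : (M ⧸ C) × M => ga.1.out * ga.2 * ga.1.out⁻¹) := by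
      intro u hu
      obtain ⟨⟨g, a⟩, hga, rfl⟩ := Finset.mem_image.1 hu
      refine Finset.mem_image.2 ⟨((g : M ⧸ C), a), ?_, ?_⟩
      · simpa using hga
      · obtain ⟨c, hc⟩ := QuotientGroup.mk_out_eq_mul C g
        simp only
        rw [hc]
        have hcx : Commute (c : M) x := Subgroup.mem_centralizer_singleton_iff.1 c.2
        have hax : Commute a x := by
          simp [A', A] at hga; exact hga.1
        have := (hC x hx _ _ hcx hax).eq
        rw [_root_.mul_inv_rev]
        calc g * c * a * ((c:M)⁻¹ * g⁻¹) = g * (c * a) * (c:M)⁻¹ * g⁻¹ := by group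
          _ = g * a * g⁻¹ := by rw [this]; group
    have h1 := (Finset.card_le_card hsub).trans Finset.card_image_le
    rw [Finset.card_product, Finset.card_univ] at h1
    have h2 : Fintype.card (M ⧸ C) * (A x).card = Fintype.card M := by
      rw [hAx, ← Nat.card_eq_fintype_card, ← Nat.card_eq_fintype_card]
      exact (Subgroup.card_eq_card_quotient_mul_card_subgroup C).symm
    calc (U x).card * (A x).card ≤ (Fintype.card (M ⧸ C) * (A' x).card) * (A x).card :=
          Nat.mul_le_mul_right _ h1
      _ = _ := by rw [← h2]; ring
  obtain ⟨x, b0, hxb⟩ := hnc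
  have hx : nc x := ⟨b0, hxb⟩
  have hUnc : ∀ x, U x ⊆ Finset.univ.filter nc := by
    intro x u hu
    obtain ⟨⟨g, a⟩, hga, rfl⟩ := Finset.mem_image.1 hu
    simp only [A', A, Finset.mem_product, Finset.mem_filter, Finset.mem_univ, true_and] at hga ⊢
    exact hncconj g a hga.2
  have hsplit : (Finset.univ.filter nc).card + Z.card = Fintype.card M := by
    rw [← Finset.card_univ]
    exact Finset.card_filter_add_card_filter_not nc
  have hAlt : (A x).card < Fintype.card M := by
    rw [← Finset.card_univ]
    apply Finset.card_lt_card
    refine ⟨Finset.subset_univ _, fun h => ?_⟩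
    have := h (Finset.mem_univ b0)
    simp only [A, Finset.mem_filter, Finset.mem_univ, true_and] at this
    exact hxb this.symm
  have hex : ∃ x', nc x' ∧ x' ∉ U x := by
    by_contra hall
    push Not at hall
    have hUe : U x = Finset.univ.filter nc := by
      apply Finset.Subset.antisymm (hUnc x)
      intro z hz
      simp only [Finset.mem_filter, Finset.mem_univ, true_and] at hz
      exact hall z hz
    have h1 := hup x hx
    rw [hUe] at h1
    have h2 := hcardA x hx
    have h3 : 0 < Z.card := hZpos
    nlinarith
  obtain ⟨x', hx', hx'U⟩ := hex
  have hdisj : Disjoint (U x) (U x') := by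
    rw [Finset.disjoint_left]
    intro u hu hu'
    obtain ⟨⟨g, a⟩, hga, rfl⟩ := Finset.mem_image.1 hu
    obtain ⟨⟨h, b⟩, hhb, heq⟩ := Finset.mem_image.1 hu'
    simp only [A', A, Finset.mem_product, Finset.mem_filter, Finset.mem_univ, true_and] at hga hhb heq
    apply hx'U
    refine Finset.mem_image.2 ⟨(h⁻¹ * g, (h⁻¹ * g)⁻¹ * x' * (h⁻¹ * g)), ?_, ?_⟩
    · simp only [A', A, Finset.mem_product, Finset.mem_filter, Finset.mem_univ, true_and]
      have hb : b = (h⁻¹ * g) * a * (h⁻¹ * g)⁻¹ := by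
        have : b = h⁻¹ * (h * b * h⁻¹) * h := by group
        rw [this, heq]; group
      constructor
      · rw [hsh x a hx hga.2 hga.1]
        rw [← hconj (h⁻¹ * g), ← hb]
        have : h⁻¹ * g * ((h⁻¹ * g)⁻¹ * x' * (h⁻¹ * g)) * (h⁻¹ * g)⁻¹ = x' := by group
        rw [this]
        exact hhb.1.symm
      · have := hncconj (h⁻¹ * g)⁻¹ x' hx'
        simpa using this
    · simp only; group
  have hsum : (U x).card + (U x').card ≤ (Finset.univ.filter nc).card := by
    rw [← Finset.card_union_of_disjoint hdisj]
    exact Finset.card_le_card (Finset.union_subset (hUnc x) (hUnc x'))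
  have hhalf : ∀ x, nc x → Fintype.card M ≤ 2 * (U x).card := by
    intro x hx
    have h1 := hlow x hx
    have h2 := h2Z x hx
    have h3 := hcardA x hx
    have h4 : (A x).card ≤ 2 * (A' x).card := by omega
    have h5 : 0 < (A x).card := by omega
    have h6 : Fintype.card M * (A x).card ≤ (2 * (U x).card) * (A x).card := by nlinarith
    exact Nat.le_of_mul_le_mul_right h6 h5
  have := hhalf x hx
  have := hhalf x' hx'
  omega

lemma mna (hnc : ∃ a b : M, ¬ Commute a b)
    (hprop : ∀ K : Subgroup M, K ≠ ⊤ → ∀ a ∈ K, ∀ b ∈ K, Commute a b) :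
    ∃ (x y : M) (s : ℕ), s.Prime ∧ s ∣ Nat.card M ∧ ¬ Commute x y ∧ Commute (y ^ s) x ∧
      ∀ g h : M, Commute (g * x * g⁻¹) (h * x * h⁻¹) := by
  classical
  obtain ⟨x, ⟨b, hb⟩, hx⟩ := mna_aux hnc hprop
  let C := Subgroup.centralizer {x}
  have hCn : C.Normal := ⟨fun a ha g => Subgroup.mem_centralizer_singleton_iff.2
    (hx g a (Subgroup.mem_centralizer_singleton_iff.1 ha))⟩
  have hbC : b ∉ C := fun h => hb (Subgroup.mem_centralizer_singleton_iff.1 h : Commute b x).symm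
  have hCtop : C ≠ ⊤ := by
    intro h
    apply hbC
    rw [h]; trivial
  have hcomm := hprop C hCtop
  have hnt : Nat.card (M ⧸ C) ≠ 1 := by
    intro h
    apply hCtop
    exact Subgroup.index_eq_one.1 h
  obtain ⟨s, hs, hsd⟩ := Nat.exists_prime_and_dvd hnt
  haveI := Fact.mk hs
  obtain ⟨yb, hyb⟩ := exists_prime_orderOf_dvd_card' (G := M ⧸ C) s hsd
  obtain ⟨y, rfl⟩ := QuotientGroup.mk_surjective yb
  refine ⟨x, y, s, hs, hsd.trans (Subgroup.index_dvd_card C), ?_, ?_, ?_⟩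
  · intro h
    have : y ∈ C := Subgroup.mem_centralizer_singleton_iff.2 h.symm
    have h1 : ((y : M) : M ⧸ C) = 1 := (QuotientGroup.eq_one_iff y).2 this
    rw [h1, orderOf_one] at hyb
    exact hs.one_lt.ne hyb
  · have h1 : ((y ^ s : M) : M ⧸ C) = 1 := by
      rw [QuotientGroup.mk_pow, ← hyb, pow_orderOf_eq_one]
    exact Subgroup.mem_centralizer_singleton_iff.1 ((QuotientGroup.eq_one_iff _).1 h1)
  · intro g h
    exact hcomm _ (Subgroup.mem_centralizer_singleton_iff.2 (hx g x (Commute.refl x))) _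
      (Subgroup.mem_centralizer_singleton_iff.2 (hx h x (Commute.refl x)))

end MNA

/-- Counting: if all non-trivial elements of `H` have many conjugates under `S`, then
there is a base of size four. -/
lemma counting {G : Type*} [Group G] [Finite G] (H S : Subgroup G) (c : ℕ)
    (hc : ∀ g ∈ H, g ≠ 1 → c ≤ ((fun x : G => x * g * x⁻¹) '' (S : Set G)).ncard)
    (hlt : Nat.card H ^ 4 < c ^ 3) :
    ∃ x ∈ S, ∃ y ∈ S, ∃ z ∈ S, ∀ g ∈ H, x * g * x⁻¹ ∈ H → y * g * y⁻¹ ∈ H → z * g * z⁻¹ ∈ H →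
      g = 1 := by
  classical
  haveI := Fintype.ofFinite G
  by_contra hcon
  push Not at hcon
  let SF : Finset G := Finset.univ.filter (· ∈ S)
  let HF : Finset G := Finset.univ.filter (· ∈ H)
  have hHF : HF.card = Nat.card H := by
    rw [Nat.card_eq_fintype_card, Fintype.card_subtype]
  have hSF : SF.card = Nat.card S := by
    rw [Nat.card_eq_fintype_card, Fintype.card_subtype]
  let bad : G → Finset G := fun g => SF.filter (fun x => x * g * x⁻¹ ∈ H)
  -- every triple is in the union
  have hcov : SF ×ˢ SF ×ˢ SF ⊆ (HF.filter (· ≠ 1)).biUnion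
      (fun g => bad g ×ˢ bad g ×ˢ bad g) := by
    rintro ⟨x, y, z⟩ h
    simp only [SF, Finset.mem_product, Finset.mem_filter, Finset.mem_univ, true_and] at h
    obtain ⟨g, hg, h1, h2, h3, h4⟩ := hcon x h.1 y h.2.1 z h.2.2
    simp only [Finset.mem_biUnion, HF, bad, SF, Finset.mem_product, Finset.mem_filter,
      Finset.mem_univ, true_and]
    exact ⟨g, ⟨hg, h4⟩, ⟨h.1, h1⟩, ⟨h.2.1, h2⟩, ⟨h.2.2, h3⟩⟩
  -- size of bad
  have hbad : ∀ g ∈ H, g ≠ 1 → (bad g).card * c ≤ SF.card * HF.card := by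
    intro g hg hg1
    let CS : Finset G := SF.filter (fun x => x * g * x⁻¹ = g)
    have h1 : (bad g).card ≤ CS.card * ((bad g).image (fun x => x * g * x⁻¹)).card := by
      apply Finset.card_le_mul_card_image
      intro u hu
      obtain ⟨x0, hx0, rfl⟩ := Finset.mem_image.1 hu
      apply Finset.card_le_card_of_injOn (fun x => x0⁻¹ * x)
      · intro x hx
        simp only [Finset.coe_filter, bad, SF, CS, Finset.mem_filter, Finset.mem_univ, true_and,
          Set.mem_setOf_eq] at hx hx0 ⊢
        refine ⟨S.mul_mem (S.inv_mem hx0.1) hx.1.1, ?_⟩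
        have : x0⁻¹ * x * g * (x0⁻¹ * x)⁻¹ = x0⁻¹ * (x * g * x⁻¹) * x0 := by group
        rw [this, hx.2]; group
      · intro x _ y _ h
        exact mul_left_cancel h
    have h2 : ((bad g).image (fun x => x * g * x⁻¹)).card ≤ HF.card := by
      apply Finset.card_le_card
      intro u hu
      obtain ⟨x0, hx0, rfl⟩ := Finset.mem_image.1 hu
      simp only [bad, HF, Finset.mem_filter, Finset.mem_univ, true_and] at hx0 ⊢
      exact hx0.2
    have h3 : CS.card * (SF.image (fun x => x * g * x⁻¹)).card ≤ SF.card := by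
      rw [mul_comm]
      rw [Finset.card_eq_sum_card_image (fun x => x * g * x⁻¹) SF]
      rw [← smul_eq_mul]
      apply Finset.card_nsmul_le_sum
      intro u hu
      obtain ⟨x0, hx0, rfl⟩ := Finset.mem_image.1 hu
      apply Finset.card_le_card_of_injOn (fun x => x0 * x)
      · intro x hx
        simp only [Finset.coe_filter, SF, CS, Finset.mem_filter, Finset.mem_univ, true_and,
          Set.mem_setOf_eq] at hx hx0 ⊢
        refine ⟨S.mul_mem hx0 hx.1, ?_⟩
        have : x0 * x * g * (x0 * x)⁻¹ = x0 * (x * g * x⁻¹) * x0⁻¹ := by group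
        rw [this, hx.2]
      · intro x _ y _ h
        exact mul_left_cancel h
    have h4 : c ≤ (SF.image (fun x => x * g * x⁻¹)).card := by
      refine (hc g hg hg1).trans ?_
      rw [← Set.ncard_coe_finset]
      apply le_of_eq
      congr 1
      simp [SF, Finset.coe_image]
    calc (bad g).card * c ≤ (CS.card * HF.card) * (SF.image (fun x => x * g * x⁻¹)).card :=
          Nat.mul_le_mul (h1.trans (Nat.mul_le_mul_left _ h2)) h4
      _ = (CS.card * (SF.image (fun x => x * g * x⁻¹)).card) * HF.card := by ring
      _ ≤ _ := Nat.mul_le_mul_right _ h3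
  have hSpos : 0 < SF.card := by rw [hSF]; exact Nat.card_pos
  have hcard := (Finset.card_le_card hcov).trans Finset.card_biUnion_le
  rw [Finset.card_product, Finset.card_product] at hcard
  have h5 : SF.card * (SF.card * SF.card) * c ^ 3 ≤
      ∑ g ∈ HF.filter (· ≠ 1), (SF.card * HF.card) ^ 3 := by
    refine (Nat.mul_le_mul_right _ hcard).trans ?_
    rw [Finset.sum_mul]
    apply Finset.sum_le_sum
    intro g hg
    simp only [HF, Finset.mem_filter, Finset.mem_univ, true_and] at hg
    rw [Finset.card_product, Finset.card_product]
    have := Nat.pow_le_pow_left (hbad g hg.1 hg.2) 3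
    calc _ = ((bad g).card * c) ^ 3 := by ring
      _ ≤ _ := this
  rw [Finset.sum_const, smul_eq_mul] at h5
  have h6 : (HF.filter (· ≠ 1)).card ≤ HF.card := Finset.card_filter_le _ _
  have h7 : SF.card ^ 3 * c ^ 3 ≤ SF.card ^ 3 * HF.card ^ 4 := by
    calc SF.card ^ 3 * c ^ 3 = SF.card * (SF.card * SF.card) * c ^ 3 := by ring
      _ ≤ _ := h5
      _ ≤ HF.card * (SF.card * HF.card) ^ 3 := Nat.mul_le_mul_right _ h6
      _ = _ := by ring
  have h8 := Nat.le_of_mul_le_mul_left h7 (by positivity)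
  rw [hHF] at h8
  omega



/-! ### Permutation groups of odd order -/

noncomputable def vb (a : ℕ) : ℝ := (13/5 : ℝ)^(a+1) / (4 * (a+1))

noncomputable def ub (a : ℕ) : ℝ :=
  if a ≤ 2 then 1 else if a ≤ 4 then 3 else if a = 5 then 5 else if a = 6 then 9 else vb a

lemma vb_pos (a : ℕ) : 0 < vb a := by unfold vb; positivity

lemma ub_pos (a : ℕ) : 0 < ub a := by
  unfold ub
  split_ifs <;> first | exact vb_pos a | norm_num

lemma ub_big (a : ℕ) (h : 7 ≤ a) : ub a = vb a := by
  unfold ub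
  rw [if_neg (by omega), if_neg (by omega), if_neg (by omega), if_neg (by omega)]

lemma gb_le (e : ℕ) (he : 3 ≤ e) : ((2*e+1 : ℕ) : ℝ) * ub e ^ 2 ≤ vb (2*e+1) := by
  by_cases h : 7 ≤ e
  · rw [ub_big e h]
    unfold vb
    have h1 : ((13/5:ℝ)^(e+1) / (4 * ((e:ℝ)+1)))^2 = (13/5:ℝ)^(2*e+1+1) / (16 * ((e:ℝ)+1)^2) := by
      rw [div_pow]
      congr 1
      · rw [← pow_mul]; congr 1; ring
      · ring
    rw [h1]
    push_cast
    rw [mul_div_assoc', div_le_div_iff₀ (by positivity) (by positivity)]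
    have : (0:ℝ) < (13/5:ℝ)^(2*e+1+1) := by positivity
    have h2 : (2*(e:ℝ)+1) * (4*(2*(e:ℝ)+1+1)) ≤ 16 * ((e:ℝ)+1)^2 := by nlinarith [(Nat.cast_nonneg e : (0:ℝ) ≤ e)]
    nlinarith
  · interval_cases e <;> norm_num [ub, vb]

lemma vb_mul (b c : ℕ) (hb : 7 ≤ b) : vb b * ub c ≤ vb (b + c) := by
  have hb' : (7:ℝ) ≤ b := by exact_mod_cast hb
  have key : ub c * (8 + c) ≤ 8 * (13/5:ℝ)^c := by
    by_cases h : 7 ≤ c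
    · rw [ub_big c h]
      unfold vb
      rw [div_mul_eq_mul_div, div_le_iff₀ (by positivity), pow_succ]
      have : (0:ℝ) < (13/5:ℝ)^c := by positivity
      have hc : (7:ℝ) ≤ c := by exact_mod_cast h
      nlinarith
    · interval_cases c <;> norm_num [ub]
  unfold vb
  rw [div_mul_eq_mul_div, div_le_div_iff₀ (by positivity) (by positivity)]
  have e1 : (13/5:ℝ)^(b+c+1) = (13/5:ℝ)^(b+1) * (13/5:ℝ)^c := by rw [← pow_add]; congr 1; ring
  rw [e1]
  push_cast
  have hp : (0:ℝ) < (13/5:ℝ)^(b+1) := by positivity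
  have hu := ub_pos c
  have h2 : ub c * (b + c + 1) ≤ (13/5:ℝ)^c * (b+1) := by
    have hc0 : (0:ℝ) ≤ c := Nat.cast_nonneg c
    have h3 : ub c * (b + c + 1) * 8 ≤ (ub c * (8 + c)) * (b+1) := by nlinarith [mul_nonneg hu.le (mul_nonneg hc0 (by linarith : (0:ℝ) ≤ b - 7))]
    nlinarith
  nlinarith [mul_le_mul_of_nonneg_left h2 hp.le]

lemma ub_rec (e c : ℕ) : ((2*e+1 : ℕ) : ℝ) * ub e ^ 2 * ub c ≤ ub (2*e+1+c) := by
  by_cases he : 3 ≤ e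
  · rw [ub_big (2*e+1+c) (by omega)]
    exact (mul_le_mul_of_nonneg_right (gb_le e he) (ub_pos c).le).trans (vb_mul _ _ (by omega))
  · have hue : ub e = 1 := by unfold ub; rw [if_pos (by omega)]
    rw [hue]
    by_cases hc : 7 ≤ c
    · rw [ub_big c hc, ub_big _ (by omega)]
      unfold vb
      have e1 : (13/5:ℝ)^(2*e+1+c+1) = (13/5:ℝ)^(2*e+1) * (13/5:ℝ)^(c+1) := by
        rw [← pow_add]; congr 1
      rw [e1, mul_div_assoc', div_le_div_iff₀ (by positivity) (by positivity)]
      have hp : (0:ℝ) < (13/5:ℝ)^(c+1) := by positivity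
      have hc' : (7:ℝ) ≤ c := by exact_mod_cast hc
      have h2 : (2*(e:ℝ)+1) * (2*e+1+c+1) ≤ (13/5:ℝ)^(2*e+1) * (c+1) := by
        have : e ≤ 2 := by omega
        interval_cases e <;> norm_num <;> try nlinarith
      push_cast
      nlinarith [mul_le_mul_of_nonneg_left h2 hp.le]
    · have he2 : e ≤ 2 := by omega
      have hc2 : c ≤ 6 := by omega
      interval_cases e <;> interval_cases c <;> norm_num [ub, vb]

lemma ub_sq_small (a : ℕ) (ha : a ≤ 7) : ub a ^ 2 ≤ (33/10 : ℝ)^a := by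
  interval_cases a <;> norm_num [ub, vb]

lemma ub_sq (a : ℕ) : ub a ^ 2 ≤ (169/25 : ℝ)^a := by
  have h0 : (169/25 : ℝ)^a = ((13/5)^a)^2 := by rw [← pow_mul, mul_comm, pow_mul]; norm_num
  rw [h0]
  apply pow_le_pow_left₀ (ub_pos a).le
  by_cases h : 7 ≤ a
  · rw [ub_big a h]
    unfold vb
    rw [div_le_iff₀ (by positivity), pow_succ]
    have : (0:ℝ) < (13/5:ℝ)^a := by positivity
    have hc : (7:ℝ) ≤ a := by exact_mod_cast h
    nlinarith
  · interval_cases a <;> norm_num [ub]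

lemma perm_bound_arith (k o kx k1 k2 k3 kf u w : ℝ) {v : ℝ} (hu : 0 ≤ u) (hw : 0 ≤ w) (hv : 0 ≤ v)
    (ho : 0 ≤ o) (hk3 : 0 ≤ k3)
    (f1 : k ≤ o * kx) (f4 : k3 ≤ kf) (b1 : kx ≤ u * k1) (b2 : k1 ≤ u * k2) (b3 : k2 ≤ w * k3)
    (hrec : o * u ^ 2 * w ≤ v) : k ≤ v * kf := by
  calc k ≤ o * kx := f1
    _ ≤ o * (u * k1) := mul_le_mul_of_nonneg_left b1 ho
    _ ≤ o * (u * (u * k2)) := by gcongr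
    _ ≤ o * (u * (u * (w * k3))) := by gcongr
    _ = o * u ^ 2 * w * k3 := by ring
    _ ≤ v * k3 := mul_le_mul_of_nonneg_right hrec hk3
    _ ≤ _ := mul_le_mul_of_nonneg_left f4 hv

lemma perm_bound {G X : Type*} [Group G] [Finite G] [Finite X] [MulAction G X] :
    ∀ (a : ℕ) (K : Subgroup G), Odd (Nat.card K) → ∀ S : Finset X, S.card = a →
      (∀ k ∈ K, ∀ x ∈ S, k • x ∈ S) →
      (Nat.card K : ℝ) ≤ ub a * Nat.card (K ⊓ fixingSubgroup G (S : Set X) : Subgroup G) := by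
  classical
  intro a
  induction a using Nat.strong_induction_on with
  | _ a ih =>
  intro K hK S hSa hS
  rcases S.eq_empty_or_nonempty with rfl | ⟨x, hx⟩
  · have h0 : a = 0 := by simpa using hSa.symm
    subst h0
    have : fixingSubgroup G ((∅ : Finset X) : Set X) = ⊤ := by
      ext g; simp [mem_fixingSubgroup_iff]
    rw [this, inf_top_eq]
    simp [ub]
  haveI := Fintype.ofFinite G
  -- orbit
  let O : Finset X := S.filter (fun y => ∃ k ∈ K, k • x = y)
  let Kx : Subgroup G := K ⊓ MulAction.stabilizer G x
  have hxO : x ∈ O := by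
    simp only [O, Finset.mem_filter]; exact ⟨hx, 1, K.one_mem, one_smul _ _⟩
  have hcardF : ∀ L : Subgroup G, (Finset.univ.filter (· ∈ L)).card = Nat.card L := by
    intro L; rw [Nat.card_eq_fintype_card, Fintype.card_subtype]
  have horb : Nat.card K ≤ O.card * Nat.card Kx := by
    have h1 : (Finset.univ.filter (· ∈ K)).card ≤
        Nat.card Kx * ((Finset.univ.filter (· ∈ K)).image (fun k => k • x)).card := by
      apply Finset.card_le_mul_card_image
      intro u hu
      obtain ⟨k0, hk0, rfl⟩ := Finset.mem_image.1 hu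
      rw [← hcardF]
      simp only [Finset.mem_filter, Finset.mem_univ, true_and] at hk0
      apply Finset.card_le_card_of_injOn (fun k => k0⁻¹ * k)
      · intro k hk
        simp only [Finset.coe_filter, Finset.mem_filter, Finset.mem_univ, true_and,
          Set.mem_ofPred_eq] at hk ⊢
        refine ⟨K.mul_mem (K.inv_mem hk0) hk.1, ?_⟩
        show (k0⁻¹ * k) • x = x
        rw [mul_smul, hk.2, inv_smul_smul]
      · intro k _ l _ h
        exact mul_left_cancel h
    rw [hcardF] at h1
    have h2 : (Finset.univ.filter (· ∈ K)).image (fun k => k • x) ⊆ O := by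
      intro u hu
      obtain ⟨k0, hk0, rfl⟩ := Finset.mem_image.1 hu
      simp only [Finset.mem_filter, Finset.mem_univ, true_and] at hk0
      simp only [O, Finset.mem_filter]
      exact ⟨hS k0 hk0 x hx, k0, hk0, rfl⟩
    calc Nat.card K ≤ _ := h1
      _ ≤ Nat.card Kx * O.card := Nat.mul_le_mul_left _ (Finset.card_le_card h2)
      _ = _ := mul_comm _ _
  -- classes of pairs
  haveI : Finite (Quotient (MulAction.orbitRel K (X × X))) := Quotient.finite _
  obtain ⟨nn, ⟨eqv⟩⟩ := Finite.exists_equiv_fin (Quotient (MulAction.orbitRel K (X × X)))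
  let c : X → X → ℕ := fun y z => (eqv (Quotient.mk (MulAction.orbitRel K (X × X)) (y, z))).val
  have hc : ∀ y z y' z', c y z = c y' z' ↔ ∃ k ∈ K, k • y' = y ∧ k • z' = z := by
    intro y z y' z'
    simp only [c]
    rw [Fin.val_inj, eqv.injective.eq_iff, Quotient.eq]
    constructor
    · rintro ⟨k, hk⟩
      refine ⟨k, k.2, ?_, ?_⟩
      · exact congrArg Prod.fst hk
      · exact congrArg Prod.snd hk
    · rintro ⟨k, hk, h1, h2⟩
      exact ⟨⟨k, hk⟩, Prod.ext h1 h2⟩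
  have hinv : ∀ k ∈ K, ∀ y z, c (k • y) (k • z) = c y z := by
    intro k hk y z
    exact (hc _ _ _ _).2 ⟨k, hk, rfl, rfl⟩
  have hanti : ∀ y z, c y z = c z y → y = z := by
    intro y z h
    obtain ⟨k, hk, h1, h2⟩ := (hc _ _ _ _).1 h
    have hodd : Odd (orderOf k) := by
      have : orderOf k ∣ Nat.card K := by
        have := orderOf_dvd_natCard (⟨k, hk⟩ : K)
        rwa [← Subgroup.orderOf_coe] at this
      exact Odd.of_dvd_nat hK this
    obtain ⟨r, hr⟩ := hodd
    have h3 : (k^2) • y = y := by rw [pow_two, mul_smul, h2, h1]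
    have h4 : ∀ t : ℕ, ((k^2)^t) • y = y := by
      intro t
      induction t with
      | zero => simp
      | succ t iht => rw [pow_succ, mul_smul, h3, iht]
    have h5 : (k^2)^(r+1) = k := by
      rw [← pow_mul, show 2 * (r+1) = (2*r+1) + 1 by ring, ← hr, pow_succ, pow_orderOf_eq_one, one_mul]
    have h6 := h4 (r+1)
    rw [h5, h2] at h6
    exact h6.symm
  let Out : X → Finset X := fun y => O.filter (fun z => c y z < c z y)
  let In : X → Finset X := fun y => O.filter (fun z => c z y < c y z)
  have hOinv : ∀ k ∈ K, ∀ y ∈ O, k • y ∈ O := by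
    intro k hk y hy
    simp only [O, Finset.mem_filter] at hy ⊢
    obtain ⟨h1, l, hl, rfl⟩ := hy
    exact ⟨hS k hk _ h1, k * l, K.mul_mem hk hl, mul_smul _ _ _⟩
  have hOutle : ∀ k ∈ K, ∀ y, (Out y).card ≤ (Out (k • y)).card := by
    intro k hk y
    apply Finset.card_le_card_of_injOn (fun z => k • z)
    · intro z hz
      simp only [Out, Finset.coe_filter, Set.mem_ofPred_eq] at hz ⊢
      exact ⟨hOinv k hk z hz.1, by rw [hinv k hk, hinv k hk]; exact hz.2⟩
    · intro z _ w _ h; exact smul_left_cancel k h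
  have hInle : ∀ k ∈ K, ∀ y, (In y).card ≤ (In (k • y)).card := by
    intro k hk y
    apply Finset.card_le_card_of_injOn (fun z => k • z)
    · intro z hz
      simp only [In, Finset.coe_filter, Set.mem_ofPred_eq] at hz ⊢
      exact ⟨hOinv k hk z hz.1, by rw [hinv k hk, hinv k hk]; exact hz.2⟩
    · intro z _ w _ h; exact smul_left_cancel k h
  have hOuteq : ∀ y ∈ O, (Out y).card = (Out x).card := by
    intro y hy
    simp only [O, Finset.mem_filter] at hy
    obtain ⟨_, k, hk, rfl⟩ := hy
    apply le_antisymm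
    · have := hOutle k⁻¹ (K.inv_mem hk) (k • x)
      rwa [inv_smul_smul] at this
    · exact hOutle k hk x
  have hIneq : ∀ y ∈ O, (In y).card = (In x).card := by
    intro y hy
    simp only [O, Finset.mem_filter] at hy
    obtain ⟨_, k, hk, rfl⟩ := hy
    apply le_antisymm
    · have := hInle k⁻¹ (K.inv_mem hk) (k • x)
      rwa [inv_smul_smul] at this
    · exact hInle k hk x
  have hOpos : 0 < O.card := Finset.card_pos.2 ⟨x, hxO⟩
  have hbal : (Out x).card = (In x).card := by
    have h1 := Finset.sum_card_bipartiteAbove_eq_sum_card_bipartiteBelow (s := O) (t := O)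
      (fun y z => c y z < c z y)
    have h2 : ∑ y ∈ O, (Out y).card = ∑ y ∈ O, (In y).card := h1
    rw [Finset.sum_congr rfl hOuteq, Finset.sum_congr rfl hIneq, Finset.sum_const,
      Finset.sum_const, smul_eq_mul, smul_eq_mul] at h2
    exact Nat.eq_of_mul_eq_mul_left hOpos h2
  have hOcard : O.card = 2 * (Out x).card + 1 := by
    have h1 : O = insert x (Out x ∪ In x) := by
      ext y
      simp only [Out, In, Finset.mem_insert, Finset.mem_union, Finset.mem_filter]
      constructor
      · intro hy
        by_cases hyx : y = x
        · exact Or.inl hyx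
        · right
          rcases lt_trichotomy (c x y) (c y x) with h | h | h
          · exact Or.inl ⟨hy, h⟩
          · exact absurd (hanti _ _ h).symm hyx
          · exact Or.inr ⟨hy, h⟩
      · rintro (rfl | h | h)
        · exact hxO
        · exact h.1
        · exact h.1
    have h2 : x ∉ Out x ∪ In x := by simp [Out, In]
    have h3 : Disjoint (Out x) (In x) := by
      rw [Finset.disjoint_left]
      intro y hy hy'
      simp only [Out, In, Finset.mem_filter] at hy hy'
      omega
    rw [h1, Finset.card_insert_of_notMem h2, Finset.card_union_of_disjoint h3, ← hbal]
    ring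
  have hOS : O ⊆ S := Finset.filter_subset _ _
  have hOle : O.card ≤ a := hSa ▸ Finset.card_le_card hOS
  have hSO : (S \ O).card = a - O.card := by
    rw [Finset.card_sdiff_of_subset hOS, hSa]
  -- subgroup oddness
  have hoddle : ∀ L : Subgroup G, L ≤ K → Odd (Nat.card L) := fun L hL =>
    Odd.of_dvd_nat hK (Subgroup.card_dvd_of_le hL)
  let K1 := Kx ⊓ fixingSubgroup G (Out x : Set X)
  let K2 := K1 ⊓ fixingSubgroup G (In x : Set X)
  let K3 := K2 ⊓ fixingSubgroup G ((S \ O : Finset X) : Set X)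
  have hKxK : Kx ≤ K := inf_le_left
  have hK1x : K1 ≤ Kx := inf_le_left
  have hK21 : K2 ≤ K1 := inf_le_left
  have hstab : ∀ k ∈ Kx, k • x = x := fun k hk => hk.2
  have b1 := ih (Out x).card (by omega) Kx (hoddle _ hKxK) (Out x) rfl (by
    intro k hk z hz
    simp only [Out, Finset.mem_filter] at hz ⊢
    refine ⟨hOinv k (hKxK hk) z hz.1, ?_⟩
    have h1 := hinv k (hKxK hk) x z
    have h2 := hinv k (hKxK hk) z x
    rw [hstab k hk] at h1 h2
    rw [h1, h2]; exact hz.2)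
  have b2 := ih (In x).card (by omega) K1 (hoddle _ (hK1x.trans hKxK)) (In x) rfl (by
    intro k hk z hz
    have hk := hK1x hk
    simp only [In, Finset.mem_filter] at hz ⊢
    refine ⟨hOinv k (hKxK hk) z hz.1, ?_⟩
    have h1 := hinv k (hKxK hk) x z
    have h2 := hinv k (hKxK hk) z x
    rw [hstab k hk] at h1 h2
    rw [h1, h2]; exact hz.2)
  have b3 := ih (S \ O).card (by omega) K2 (hoddle _ (hK21.trans (hK1x.trans hKxK))) (S \ O) rfl (by
    intro k hk z hz
    have hk : k ∈ K := hKxK (hK1x (hK21 hk))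
    simp only [Finset.mem_sdiff] at hz ⊢
    refine ⟨hS k hk z hz.1, fun h => hz.2 ?_⟩
    have := hOinv k⁻¹ (K.inv_mem hk) _ h
    rwa [inv_smul_smul] at this)
  have b4 : Nat.card K3 ≤ Nat.card (K ⊓ fixingSubgroup G (S : Set X) : Subgroup G) := by
    apply Nat.le_of_dvd Nat.card_pos
    apply Subgroup.card_dvd_of_le
    intro k hk
    have hk4 := (mem_fixingSubgroup_iff G).1 (Subgroup.mem_inf.1 hk).2
    have hk3 := (mem_fixingSubgroup_iff G).1 (Subgroup.mem_inf.1 (Subgroup.mem_inf.1 hk).1).2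
    have hkK1 := (Subgroup.mem_inf.1 (Subgroup.mem_inf.1 hk).1).1
    have hk2 := (mem_fixingSubgroup_iff G).1 (Subgroup.mem_inf.1 hkK1).2
    have hk1 := (Subgroup.mem_inf.1 hkK1).1
    refine Subgroup.mem_inf.2 ⟨hKxK hk1, (mem_fixingSubgroup_iff G).2 ?_⟩
    intro y hy
    by_cases hyO : y ∈ O
    · rcases lt_trichotomy (c x y) (c y x) with h | h | h
      · exact hk2 y (by simp [Out, hyO, h])
      · rw [← hanti _ _ h]; exact hstab k hk1
      · exact hk3 y (by simp [In, hyO, h])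
    · exact hk4 y (by simpa [hyO] using hy)
  have hrec := ub_rec (Out x).card (a - O.card)
  rw [← hOcard, Nat.add_sub_cancel' hOle] at hrec
  rw [← hbal] at b2
  rw [hSO] at b3
  exact perm_bound_arith _ _ _ _ _ _ _ _ _ (ub_pos _).le (ub_pos _).le (ub_pos _).le (Nat.cast_nonneg _)
    (Nat.cast_nonneg _) (by exact_mod_cast horb) (by exact_mod_cast b4) b1 b2 b3 hrec



/-! ### Isometry groups -/

section IsoBasics
variable {F V : Type*} [Field F] [AddCommGroup V] [Module F V]

def Iso (B : LinearMap.BilinForm F V) : Subgroup (V ≃ₗ[F] V) where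
  carrier := {g | ∀ u v, B (g u) (g v) = B u v}
  one_mem' := fun u v => rfl
  mul_mem' := by
    intro a b ha hb u v
    have h1 : B (a (b u)) (a (b v)) = B (b u) (b v) := ha _ _
    exact h1.trans (hb u v)
  inv_mem' := by
    intro a ha u v
    have h1 := ha (a⁻¹ u) (a⁻¹ v)
    have h2 : ∀ w, a (a⁻¹ w) = w := fun w => a.apply_symm_apply w
    rw [h2, h2] at h1
    exact h1.symm

lemma mem_Iso {B : LinearMap.BilinForm F V} {g : V ≃ₗ[F] V} :
    g ∈ Iso B ↔ ∀ u v, B (g u) (g v) = B u v := Iff.rfl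

/-- the support -/
def Esp (g : V ≃ₗ[F] V) : Submodule F V := LinearMap.range ((g : V →ₗ[F] V) - LinearMap.id)

/-- the fixed space -/
def Fsp (g : V ≃ₗ[F] V) : Submodule F V := LinearMap.ker ((g : V →ₗ[F] V) - LinearMap.id)

lemma mem_Esp {g : V ≃ₗ[F] V} {v : V} : v ∈ Esp g ↔ ∃ w, g w - w = v := by
  simp [Esp, LinearMap.mem_range]

lemma mem_Fsp {g : V ≃ₗ[F] V} {v : V} : v ∈ Fsp g ↔ g v = v := by
  simp [Fsp, LinearMap.mem_ker, sub_eq_zero]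

lemma sub_mem_Esp (g : V ≃ₗ[F] V) (w : V) : g w - w ∈ Esp g := mem_Esp.2 ⟨w, rfl⟩

lemma eq_one_of_Esp_bot {g : V ≃ₗ[F] V} (h : Esp g = ⊥) : g = 1 := by
  ext v
  have := sub_mem_Esp g v
  rw [h, Submodule.mem_bot, sub_eq_zero] at this
  exact this

lemma Esp_ne_bot {g : V ≃ₗ[F] V} (h : g ≠ 1) : Esp g ≠ ⊥ := fun h2 => h (eq_one_of_Esp_bot h2)

lemma orthogonal_Esp {B : LinearMap.BilinForm F V} (hB : B.Nondegenerate)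
    {g : V ≃ₗ[F] V} (hg : g ∈ Iso B) : B.orthogonal (Esp g) = Fsp g := by
  ext u
  rw [LinearMap.BilinForm.mem_orthogonal_iff, mem_Fsp]
  constructor
  · intro h
    have h1 : ∀ w, B w (g u - u) = 0 := by
      intro w
      obtain ⟨w', rfl⟩ := g.surjective w
      have h2 := h _ (sub_mem_Esp g w')
      rw [map_sub, LinearMap.sub_apply, sub_eq_zero] at h2
      rw [map_sub, hg, h2, sub_self]
    have := hB.2 _ h1
    rwa [sub_eq_zero] at this
  · intro h n hn
    obtain ⟨w, rfl⟩ := mem_Esp.1 hn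
    rw [map_sub, LinearMap.sub_apply]
    nth_rewrite 1 [← h]
    rw [hg, sub_self]

lemma pow_apply_of_fixed {g : V ≃ₗ[F] V} {v w : V} (h1 : g w = w + v) (h2 : g v = v) (i : ℕ) :
    (g ^ i) w = w + (i : F) • v := by
  induction i with
  | zero => simp
  | succ i ih =>
    rw [pow_succ']
    show g ((g^i) w) = _
    rw [ih, map_add, map_smul, h1, h2]
    push_cast
    rw [add_smul, one_smul]
    abel

lemma disjoint_Esp_Fsp {g : V ≃ₗ[F] V} {N : ℕ} (hgN : g ^ N = 1) (hN : (N : F) ≠ 0) :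
    Disjoint (Esp g) (Fsp g) := by
  rw [Submodule.disjoint_def]
  intro v hv hv2
  obtain ⟨w, hw⟩ := mem_Esp.1 hv
  rw [mem_Fsp] at hv2
  have h1 : g w = w + v := by rw [← hw]; abel
  have h2 := pow_apply_of_fixed h1 hv2 N
  rw [hgN] at h2
  have h3 : w = w + (N : F) • v := h2
  have h4 : (N : F) • v = 0 := by
    have := h3.symm
    rwa [add_eq_left] at this
  exact (smul_eq_zero.1 h4).resolve_left hN

lemma finrank_Esp_add [FiniteDimensional F V] (g : V ≃ₗ[F] V) :
    Module.finrank F (Esp g) + Module.finrank F (Fsp g) = Module.finrank F V :=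
  LinearMap.finrank_range_add_finrank_ker _

lemma isCompl_Esp_Fsp [FiniteDimensional F V] {g : V ≃ₗ[F] V} {N : ℕ} (hgN : g ^ N = 1)
    (hN : (N : F) ≠ 0) : IsCompl (Esp g) (Fsp g) := by
  have hd := disjoint_Esp_Fsp hgN hN
  refine ⟨hd, ?_⟩
  rw [codisjoint_iff]
  apply Submodule.eq_top_of_finrank_eq
  have h1 := Submodule.finrank_sup_add_finrank_inf_eq (Esp g) (Fsp g)
  rw [hd.eq_bot, finrank_bot, finrank_Esp_add] at h1
  omega

lemma conj_Esp (g y : V ≃ₗ[F] V) : Esp (y * g * y⁻¹) = (Esp g).map (y : V →ₗ[F] V) := by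
  ext v
  rw [mem_Esp, Submodule.mem_map]
  constructor
  · rintro ⟨w, hw⟩
    refine ⟨g (y⁻¹ w) - y⁻¹ w, sub_mem_Esp _ _, ?_⟩
    rw [map_sub, ← hw]
    show y (g (y⁻¹ w)) - y (y.symm w) = y (g (y⁻¹ w)) - w
    rw [y.apply_symm_apply]
  · rintro ⟨u, hu, rfl⟩
    obtain ⟨w, rfl⟩ := mem_Esp.1 hu
    refine ⟨y w, ?_⟩
    show y (g (y.symm (y w))) - y w = y (g w - w)
    rw [y.symm_apply_apply, map_sub]

lemma finrank_conj_Esp (g y : V ≃ₗ[F] V) :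
    Module.finrank F (Esp (y * g * y⁻¹)) = Module.finrank F (Esp g) := by
  rw [conj_Esp]
  exact LinearEquiv.finrank_map_eq y (Esp g)

/-! gluing -/

noncomputable def glue {X Y : Submodule F V} (h : IsCompl X Y) : (X ≃ₗ[F] X) →* (V ≃ₗ[F] V) where
  toFun a := (Submodule.prodEquivOfIsCompl X Y h).symm ≪≫ₗ
    (LinearEquiv.prodCongr a (LinearEquiv.refl F Y)) ≪≫ₗ (Submodule.prodEquivOfIsCompl X Y h)
  map_one' := by
    ext v
    obtain ⟨p, rfl⟩ := (Submodule.prodEquivOfIsCompl X Y h).surjective v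
    simp
  map_mul' := by
    intro a b
    ext v
    obtain ⟨p, rfl⟩ := (Submodule.prodEquivOfIsCompl X Y h).surjective v
    simp

lemma glue_apply {X Y : Submodule F V} (h : IsCompl X Y) (a : X ≃ₗ[F] X) (x : X) (y : Y) :
    glue h a (x + y : V) = a x + y := by
  have : (x + y : V) = Submodule.prodEquivOfIsCompl X Y h (x, y) := by simp
  rw [this]
  simp [glue]

lemma glue_left {X Y : Submodule F V} (h : IsCompl X Y) (a : X ≃ₗ[F] X) (x : X) :
    glue h a (x : V) = a x := by
  have := glue_apply h a x 0
  simpa using this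

lemma glue_right {X Y : Submodule F V} (h : IsCompl X Y) (a : X ≃ₗ[F] X) (y : Y) :
    glue h a (y : V) = y := by
  have := glue_apply h a 0 y
  simpa using this

lemma exists_decomp {X Y : Submodule F V} (h : IsCompl X Y) (v : V) :
    ∃ (x : X) (y : Y), v = x + y := by
  obtain ⟨p, rfl⟩ := (Submodule.prodEquivOfIsCompl X Y h).surjective v
  exact ⟨p.1, p.2, by simp⟩

lemma glue_injective {X Y : Submodule F V} (h : IsCompl X Y) : Function.Injective (glue h) := by
  intro a b hab
  ext x
  rw [← glue_left h, ← glue_left h, hab]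

lemma glue_Esp_le {X Y : Submodule F V} (h : IsCompl X Y) (a : X ≃ₗ[F] X) :
    Esp (glue h a) ≤ X := by
  intro v hv
  obtain ⟨w, rfl⟩ := mem_Esp.1 hv
  obtain ⟨x, y, rfl⟩ := exists_decomp h w
  rw [glue_apply, add_sub_add_right_eq_sub]
  exact X.sub_mem (a x).2 x.2

lemma glue_Esp {X Y : Submodule F V} (h : IsCompl X Y) (a : X ≃ₗ[F] X) :
    Esp (glue h a) = (Esp a).map X.subtype := by
  ext v
  rw [mem_Esp, Submodule.mem_map]
  constructor
  · rintro ⟨w, rfl⟩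
    obtain ⟨x, y, rfl⟩ := exists_decomp h w
    refine ⟨a x - x, sub_mem_Esp _ _, ?_⟩
    rw [glue_apply, add_sub_add_right_eq_sub]
    simp
  · rintro ⟨u, hu, rfl⟩
    obtain ⟨x, rfl⟩ := mem_Esp.1 hu
    exact ⟨x, by rw [glue_left]; simp⟩

lemma glue_mem_Iso {B : LinearMap.BilinForm F V} (hs : B.IsSymm) {X : Submodule F V}
    (h : IsCompl X (B.orthogonal X)) {a : X ≃ₗ[F] X} (ha : a ∈ Iso (B.restrict X)) :
    glue h a ∈ Iso B := by
  intro u v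
  obtain ⟨x, y, rfl⟩ := exists_decomp h u
  obtain ⟨x', y', rfl⟩ := exists_decomp h v
  rw [glue_apply, glue_apply]
  have h1 : ∀ (x : X) (y : B.orthogonal X), B x y = 0 := fun x y =>
    (LinearMap.BilinForm.mem_orthogonal_iff.1 y.2) x x.2
  have h2 : ∀ (x : X) (y : B.orthogonal X), B y x = 0 := fun x y => by
    rw [← hs.eq]; exact h1 x y
  have h3 : B (a x) (a x') = B x x' := ha x x'
  simp only [map_add, LinearMap.add_apply, h1, h2, h3]

/-! restricting -/

def stabS (X : Submodule F V) : Subgroup (V ≃ₗ[F] V) where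
  carrier := {g | ∀ v, g v ∈ X ↔ v ∈ X}
  one_mem' := fun v => Iff.rfl
  mul_mem' := by
    intro a b ha hb v
    exact (ha (b v)).trans (hb v)
  inv_mem' := by
    intro a ha v
    have := ha (a.symm v)
    rw [a.apply_symm_apply] at this
    exact this.symm

lemma mem_stabS {X : Submodule F V} {g : V ≃ₗ[F] V} : g ∈ stabS X ↔ ∀ v, g v ∈ X ↔ v ∈ X := Iff.rfl

lemma mem_stabS_of_le [FiniteDimensional F V] {X : Submodule F V} {g : V ≃ₗ[F] V}
    (h : ∀ v ∈ X, g v ∈ X) : g ∈ stabS X := by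
  have h1 : X.map (g : V →ₗ[F] V) ≤ X := by
    rintro _ ⟨v, hv, rfl⟩
    exact h v hv
  have h2 : X.map (g : V →ₗ[F] V) = X :=
    Submodule.eq_of_le_of_finrank_eq h1 (LinearEquiv.finrank_map_eq g X)
  intro v
  refine ⟨fun hv => ?_, h v⟩
  rw [← h2] at hv
  obtain ⟨w, hw, hwv⟩ := hv
  have : w = v := g.injective hwv
  rwa [← this]

def resHom (X : Submodule F V) : stabS X →* (X ≃ₗ[F] X) where
  toFun g :=
    { toFun := fun x => ⟨(g : V ≃ₗ[F] V) x, (g.2 x).2 x.2⟩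
      map_add' := fun x y => by ext; simp
      map_smul' := fun c x => by ext; simp
      invFun := fun x => ⟨(g : V ≃ₗ[F] V).symm x, (g.2 _).1 (by simp)⟩
      left_inv := fun x => by ext; simp
      right_inv := fun x => by ext; simp }
  map_one' := by ext; rfl
  map_mul' := fun a b => by ext; rfl

lemma resHom_apply (X : Submodule F V) (g : stabS X) (x : X) :
    ((resHom X g x : X) : V) = (g : V ≃ₗ[F] V) x := rfl

lemma resHom_mem_Iso {B : LinearMap.BilinForm F V} {X : Submodule F V} (g : stabS X)
    (hg : (g : V ≃ₗ[F] V) ∈ Iso B) : resHom X g ∈ Iso (B.restrict X) := fun u v => hg u v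

lemma stab_orthogonal {B : LinearMap.BilinForm F V} {g : V ≃ₗ[F] V} (hg : g ∈ Iso B)
    {X : Submodule F V} (h : g ∈ stabS X) : g ∈ stabS (B.orthogonal X) := by
  intro v
  rw [LinearMap.BilinForm.mem_orthogonal_iff, LinearMap.BilinForm.mem_orthogonal_iff]
  constructor
  · intro h1 n hn
    have := h1 (g n) ((h n).2 hn)
    rw [hg] at this
    exact this
  · intro h1 n hn
    have h2 := h1 (g.symm n) ((h _).1 (by rwa [g.apply_symm_apply]))
    rw [← hg, g.apply_symm_apply] at h2
    exact h2

lemma semisimple_of_pow {g : V ≃ₗ[F] V} {N : ℕ} (hgN : g ^ N = 1) (hN : (N : F) ≠ 0)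
    [FiniteDimensional F V] : Module.End.IsSemisimple (g : Module.End F V) := by
  have hsep : (Polynomial.X ^ N - 1 : Polynomial F).Separable :=
    Polynomial.X_pow_sub_one_separable_iff.2 hN
  apply Module.End.isSemisimple_of_squarefree_aeval_eq_zero hsep.squarefree
  have h1 : ((g : Module.End F V)) ^ N = 1 := by
    ext v
    have h2 : ∀ i : ℕ, ((g : Module.End F V) ^ i) v = (g ^ i) v := by
      intro i
      induction i with
      | zero => rfl
      | succ i ih =>
        rw [pow_succ', pow_succ']
        show g (((g : Module.End F V) ^ i) v) = g ((g^i) v)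
        rw [ih]
    rw [h2, hgN]
    rfl
  simp [h1]

/-- subspaces nondegeneracy -/
lemma isCompl_of_disjoint [FiniteDimensional F V] {B : LinearMap.BilinForm F V}
    (hB : B.Nondegenerate) (hs : B.IsSymm) {X : Submodule F V}
    (h : Disjoint X (B.orthogonal X)) : IsCompl X (B.orthogonal X) := by
  refine ⟨h, ?_⟩
  rw [codisjoint_iff]
  apply Submodule.eq_top_of_finrank_eq
  have h1 := Submodule.finrank_sup_add_finrank_inf_eq X (B.orthogonal X)
  rw [h.eq_bot, finrank_bot] at h1
  have h2 := LinearMap.BilinForm.finrank_orthogonal hB X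
  have h3 := Submodule.finrank_le X
  omega

lemma restrict_nondeg {B : LinearMap.BilinForm F V} (hs : B.IsSymm) {X : Submodule F V}
    (h : Disjoint X (B.orthogonal X)) : (B.restrict X).Nondegenerate := by
  rw [Submodule.disjoint_def] at h
  constructor
  · intro x hx
    ext
    refine h x x.2 ?_
    rw [LinearMap.BilinForm.mem_orthogonal_iff]
    intro n hn
    rw [← hs.eq]
    exact hx ⟨n, hn⟩
  · intro x hx
    ext
    refine h x x.2 ?_
    rw [LinearMap.BilinForm.mem_orthogonal_iff]
    intro n hn
    exact hx ⟨n, hn⟩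

lemma restrict_symm {B : LinearMap.BilinForm F V} (hs : B.IsSymm) (X : Submodule F V) :
    (B.restrict X).IsSymm := ⟨fun x y => hs.eq x y⟩

lemma exists_anisotropic {B : LinearMap.BilinForm F V} (hB : B.Nondegenerate) (hs : B.IsSymm)
    (h2 : (2 : F) ≠ 0) (hV : ∃ v : V, v ≠ 0) : ∃ v, B v v ≠ 0 := by
  by_contra h
  push Not at h
  obtain ⟨v, hv⟩ := hV
  apply hv
  apply hB.1
  intro w
  have h1 := h (v + w)
  simp only [map_add, LinearMap.add_apply, h v, h w] at h1
  have h3 : B w v = B v w := hs.eq w v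
  rw [h3] at h1
  have h4 : 2 * B v w = 0 := by linear_combination h1
  exact (mul_eq_zero.1 h4).resolve_left h2

/-- an element of prime order can be cut down to small support -/
lemma small_piece [FiniteDimensional F V] {B : LinearMap.BilinForm F V} (hB : B.Nondegenerate)
    (hs : B.IsSymm) (h2 : (2 : F) ≠ 0) {g : V ≃ₗ[F] V} (hg : g ∈ Iso B) {s : ℕ} (hsp : s.Prime)
    (hgs : orderOf g = s) (hsF : (s : F) ≠ 0) :
    ∃ g0 ∈ Iso B, orderOf g0 = s ∧ Module.finrank F (Esp g0) ≤ s - 1 := by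
  classical
  have hg1 : g ^ s = 1 := by rw [← hgs]; exact pow_orderOf_eq_one g
  have hgne : g ≠ 1 := by
    rintro rfl
    rw [orderOf_one] at hgs
    exact hsp.one_lt.ne hgs
  have hd := disjoint_Esp_Fsp hg1 hsF
  have hdE : Disjoint (Esp g) (B.orthogonal (Esp g)) := by rw [orthogonal_Esp hB hg]; exact hd
  obtain ⟨v, hv⟩ := exists_anisotropic (restrict_nondeg hs hdE) (restrict_symm hs _) h2 (by
    obtain ⟨w, hw, hw0⟩ := Submodule.exists_mem_ne_zero_of_ne_bot (Esp_ne_bot hgne)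
    exact ⟨⟨w, hw⟩, fun h => hw0 (congrArg Subtype.val h)⟩)
  have hvv : B (v : V) v ≠ 0 := hv
  let f : ℕ → V := fun i => (g ^ i) (v : V)
  have hfs : ∀ i, g (f i) = f (i + 1) := by
    intro i
    simp only [f]
    rw [pow_succ']
    rfl
  have hsum : ∑ i ∈ Finset.range s, f i = 0 := by
    obtain ⟨w, hw⟩ := mem_Esp.1 v.2
    have h3 : ∀ i, f i = (g ^ (i+1)) w - (g ^ i) w := by
      intro i
      simp only [f]
      rw [← hw, map_sub, pow_succ]
      rfl
    rw [Finset.sum_congr rfl (fun i _ => h3 i), Finset.sum_range_sub (fun i => (g^i) w), hg1]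
    simp
  let E' : Submodule F V := Submodule.span F (f '' (Set.Iio (s-1)))
  have hmem1 : ∀ i, i < s → f i ∈ E' := by
    intro i hi
    by_cases h : i < s - 1
    · exact Submodule.subset_span ⟨i, h, rfl⟩
    · have hi' : i = s - 1 := by omega
      have h4 : s = (s - 1) + 1 := by have := hsp.pos; omega
      rw [h4, Finset.sum_range_succ, ← hi'] at hsum
      rw [eq_neg_of_add_eq_zero_right hsum]
      apply Submodule.neg_mem
      apply Submodule.sum_mem
      intro j hj
      rw [Finset.mem_range] at hj
      exact Submodule.subset_span ⟨j, by rw [hi'] at hj; exact hj, rfl⟩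
  have hmem : ∀ i, f i ∈ E' := by
    intro i
    have : f i = f (i % s) := by
      simp only [f]
      rw [← pow_mod_orderOf, hgs]
    rw [this]
    exact hmem1 _ (Nat.mod_lt _ hsp.pos)
  have hgE' : g ∈ stabS E' := by
    apply mem_stabS_of_le
    intro x hx
    have : E' ≤ E'.comap (g : V →ₗ[F] V) := by
      apply Submodule.span_le.2
      rintro _ ⟨i, _, rfl⟩
      show g (f i) ∈ E'
      rw [hfs]
      exact hmem _
    exact this hx
  have hE'le : E' ≤ Esp g := by
    apply Submodule.span_le.2
    rintro _ ⟨i, _, rfl⟩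
    obtain ⟨w, hw⟩ := mem_Esp.1 v.2
    refine mem_Esp.2 ⟨(g^i) w, ?_⟩
    simp only [f]
    rw [← hw, map_sub]
    congr 1
    show (g * g^i) w = (g^i * g) w
    rw [← pow_succ, ← pow_succ']
  have hvE' : (v : V) ∈ E' := by
    have := hmem 0
    simpa [f] using this
  have hE'rank : Module.finrank F E' ≤ s - 1 := by
    have h5 : (f '' (Set.Iio (s-1))) = ((Finset.range (s-1)).image f : Finset V) := by
      ext; simp
    show Module.finrank F (Submodule.span F (f '' (Set.Iio (s-1)))) ≤ s - 1
    rw [h5]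
    refine (finrank_span_finset_le_card _).trans ?_
    refine Finset.card_image_le.trans ?_
    simp
  let R : Submodule F V := E' ⊓ B.orthogonal E'
  have hgR : ∀ x ∈ R, g x ∈ R := fun x hx =>
    ⟨(hgE' x).2 hx.1, (stab_orthogonal hg hgE' x).2 hx.2⟩
  have hss := semisimple_of_pow hg1 hsF
  rw [Module.End.isSemisimple_iff] at hss
  obtain ⟨R', hR'inv, hR'⟩ := hss R (by
    rw [Module.End.mem_invtSubmodule]; exact hgR)
  let X : Submodule F V := R' ⊓ E'
  have hgX : g ∈ stabS X := by
    apply mem_stabS_of_le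
    rintro x ⟨hx1, hx2⟩
    rw [Module.End.mem_invtSubmodule] at hR'inv
    exact ⟨hR'inv hx1, (hgE' x).2 hx2⟩
  have hE'X : E' ≤ R ⊔ X := by
    intro x hx
    have : x ∈ R ⊔ R' := by rw [hR'.sup_eq_top]; trivial
    obtain ⟨r, hr, r', hr', rfl⟩ := Submodule.mem_sup.1 this
    refine Submodule.mem_sup.2 ⟨r, hr, r', ⟨hr', ?_⟩, rfl⟩
    have := E'.sub_mem hx hr.1
    simpa using this
  have hXd : Disjoint X (B.orthogonal X) := by
    rw [Submodule.disjoint_def]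
    intro x hx hx2
    have h6 : x ∈ B.orthogonal E' := by
      rw [LinearMap.BilinForm.mem_orthogonal_iff]
      intro n hn
      obtain ⟨r, hr, y, hy, rfl⟩ := Submodule.mem_sup.1 (hE'X hn)
      rw [map_add, LinearMap.add_apply]
      have e1 : B y x = 0 := hx2 y hy
      have e2 : B x r = 0 := hr.2 x hx.2
      have e3 : B r x = 0 := by rw [← hs.eq]; exact e2
      rw [e1, e3, add_zero]
    have h7 : x ∈ R ⊓ R' := ⟨⟨hx.2, h6⟩, hx.1⟩
    rwa [hR'.inf_eq_bot, Submodule.mem_bot] at h7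
  have hXne : X ≠ ⊥ := by
    intro h
    rw [h, sup_bot_eq] at hE'X
    exact hvv ((hE'X hvE').2 v hvE')
  have hc := isCompl_of_disjoint hB hs hXd
  let a : X ≃ₗ[F] X := resHom X ⟨g, hgX⟩
  have haI : a ∈ Iso (B.restrict X) := resHom_mem_Iso _ hg
  have ha1 : a ^ s = 1 := by
    simp only [a]
    rw [← map_pow]
    have : (⟨g, hgX⟩ : stabS X) ^ s = 1 := by ext1; exact hg1
    rw [this, map_one]
  have hane : a ≠ 1 := by
    intro h
    obtain ⟨x, hx, hx0⟩ := Submodule.exists_mem_ne_zero_of_ne_bot hXne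
    have h8 : g x = x := by
      have := congrArg (fun b : X ≃ₗ[F] X => ((b ⟨x, hx⟩ : X) : V)) h
      exact this
    apply hx0
    exact Submodule.disjoint_def.1 hd x (hE'le hx.2) (mem_Fsp.2 h8)
  refine ⟨glue hc a, glue_mem_Iso hs hc haI, ?_, ?_⟩
  · rw [orderOf_injective (glue hc) (glue_injective hc)]
    have := Fact.mk hsp
    exact orderOf_eq_prime ha1 hane
  · exact (Submodule.finrank_mono ((glue_Esp_le hc a).trans inf_le_right)).trans hE'rank

end IsoBasics



/-! ### Weights -/

section Weights
variable {K V : Type*} [Field K] [IsAlgClosed K] [AddCommGroup V] [Module K V]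
  [FiniteDimensional K V]

lemma periodic_one_of_coprime {α : Type*} {f : ℤ → α} {a b : ℤ} (h : IsCoprime a b)
    (ha : Function.Periodic f a) (hb : Function.Periodic f b) : Function.Periodic f 1 := by
  obtain ⟨u, v, huv⟩ := h
  rw [← huv]
  exact (ha.int_mul u).add_period (hb.int_mul v)

lemma weight_core {B : LinearMap.BilinForm K V} (hB : B.Nondegenerate)
    {x y : V ≃ₗ[K] V} (hx : x ∈ Iso B) (hy : y ∈ Iso B) {N s : ℕ} (hN : (N : K) ≠ 0) (hNo : Odd N)
    (hxN : x ^ N = 1) (hs : s.Prime) (hs2 : Odd s) (hnc : ¬ Commute x y) (hys : Commute (y ^ s) x)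
    (hcc : ∀ i j : ℤ, Commute (y ^ (-i) * x * y ^ i) (y ^ (-j) * x * y ^ j))
    (C : Submodule K V) (hCx : ∀ v ∈ C, x v = v) (hCy : ∀ v ∈ C, y v = v) :
    Module.finrank K C + 2 * s ≤ Module.finrank K V := by
  classical
  set X : ℤ → (V ≃ₗ[K] V) := fun i => y ^ (-i) * x * y ^ i with hX
  have hXI : ∀ i, X i ∈ Iso B := fun i =>
    (Iso B).mul_mem ((Iso B).mul_mem ((Iso B).zpow_mem hy _) hx) ((Iso B).zpow_mem hy _)
  have hXN : ∀ i, X i ^ N = 1 := by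
    intro i
    have h1 : X i = y ^ (-i) * x * (y ^ (-i))⁻¹ := by simp [hX]
    rw [h1, conj_pow, hxN]
    simp
  have hXs : ∀ i, X (i + s) = X i := by
    intro i
    have h1 : X (i + s) = y ^ (-i) * (y^s)⁻¹ * x * (y ^ s * y ^ i) := by
      simp only [hX]
      rw [neg_add, _root_.zpow_add, _root_.zpow_neg y (s : ℤ), _root_.zpow_natCast, add_comm i, _root_.zpow_add, _root_.zpow_natCast]
    rw [h1]
    have h2 : (y^s)⁻¹ * x * y ^ s = x := by
      rw [mul_assoc, ← hys.eq, inv_mul_cancel_left]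
    calc _ = y ^ (-i) * ((y^s)⁻¹ * x * y ^ s) * y ^ i := by simp only [mul_assoc]
      _ = _ := by rw [h2]
  have hXy : ∀ i v, X i (y v) = y (X (i+1) v) := by
    intro i v
    have h1 : X i * y = y * X (i+1) := by
      have h2 : y * y ^ (-(i+1)) = y ^ (-i) := by
        rw [← _root_.zpow_one_add]; congr 1; ring
      simp only [hX]
      rw [← mul_assoc, ← mul_assoc, h2, mul_assoc, ← _root_.zpow_add_one]
    exact congrArg (fun g : V ≃ₗ[K] V => g v) h1
  have hX0 : X 0 = x := by simp [hX]
  have hX1 : y * X 1 = x * y := by simp [hX, mul_assoc]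
  let T : ℤ → Module.End K V := fun i => (X i : V →ₗ[K] V)
  have hTc : ∀ i j, Commute (T i) (T j) := by
    intro i j
    ext v
    exact congrArg (fun g : V ≃ₗ[K] V => g v) (hcc i j).eq
  have hTN : ∀ i, T i ^ N = 1 := by
    intro i
    have : ∀ k : ℕ, T i ^ k = ((X i ^ k : V ≃ₗ[K] V) : V →ₗ[K] V) := by
      intro k
      induction k with
      | zero => rfl
      | succ k ih =>
        rw [pow_succ, ih, pow_succ]; rfl
    rw [this, hXN]; rfl
  have hss : ∀ i, (T i).IsFinitelySemisimple := by
    intro i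
    apply Module.End.IsSemisimple.isFinitelySemisimple
    refine Module.End.isSemisimple_of_squarefree_aeval_eq_zero
      (p := Polynomial.X ^ N - 1) ?_ ?_
    · exact (Polynomial.X_pow_sub_one_separable_iff.2 hN).squarefree
    · simp [hTN]
  let W : (ℤ → K) → Submodule K V := fun χ => ⨅ i, (T i).maxGenEigenspace (χ i)
  have hWmem : ∀ χ v, v ∈ W χ ↔ ∀ i, X i v = χ i • v := by
    intro χ v
    simp only [W, Submodule.mem_iInf, (hss _).maxGenEigenspace_eq_eigenspace,
      Module.End.mem_eigenspace_iff]
    rfl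
  have hWtop : ⨆ χ, W χ = ⊤ :=
    Module.End.iSup_iInf_maxGenEigenspace_eq_top_of_iSup_maxGenEigenspace_eq_top_of_commute T
      (fun i j _ => hTc i j) (fun i => Module.End.iSup_maxGenEigenspace_eq_top _)
  have hWind : iSupIndep W :=
    Module.End.independent_iInf_maxGenEigenspace_of_forall_mapsTo T
      (fun i j φ => Module.End.mapsTo_maxGenEigenspace_of_comm (hTc j i) φ)
  -- a nonconstant weight
  obtain ⟨χ, hχ, hχ01⟩ : ∃ χ, W χ ≠ ⊥ ∧ χ 0 ≠ χ 1 := by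
    by_contra hcon
    push Not at hcon
    apply hnc
    have h1 : ∀ v, X 0 v = X 1 v := by
      have : (⊤ : Submodule K V) ≤ LinearMap.ker (T 0 - T 1) := by
        rw [← hWtop]
        refine iSup_le fun χ v hv => ?_
        rw [LinearMap.mem_ker, LinearMap.sub_apply, sub_eq_zero]
        by_cases hb : W χ = ⊥
        · rw [hb, Submodule.mem_bot] at hv
          simp [hv]
        · show X 0 v = X 1 v
          rw [(hWmem χ v).1 hv 0, (hWmem χ v).1 hv 1, hcon χ hb]
      intro v
      have := this (Submodule.mem_top (x := v))
      rw [LinearMap.mem_ker, LinearMap.sub_apply, sub_eq_zero] at this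
      exact this
    have h2 : X 0 = X 1 := LinearEquiv.ext h1
    show x * y = y * x
    rw [← hX1, ← h2, hX0]
  have hnp : ¬ Function.Periodic χ 1 := fun h => hχ01 (by have := h 0; simpa using this.symm)
  have hper : Function.Periodic χ s := by
    obtain ⟨v, hv, hv0⟩ := Submodule.exists_mem_ne_zero_of_ne_bot hχ
    intro i
    have h1 := (hWmem χ v).1 hv (i+s)
    rw [hXs, (hWmem χ v).1 hv i] at h1
    exact (smul_left_injective K hv0 h1).symm
  have hroot : ∀ i, χ i ^ N = 1 := by
    obtain ⟨v, hv, hv0⟩ := Submodule.exists_mem_ne_zero_of_ne_bot hχ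
    intro i
    have h1 : ∀ k : ℕ, (X i ^ k) v = (χ i ^ k) • v := by
      intro k
      induction k with
      | zero => simp
      | succ k ih =>
        rw [pow_succ']
        show X i ((X i ^ k) v) = _
        rw [ih, map_smul, (hWmem χ v).1 hv i, smul_smul, pow_succ]
    have h2 := h1 N
    rw [hXN] at h2
    have h3 : (1 : K) • v = (χ i ^ N) • v := by rw [one_smul]; exact h2
    exact (smul_left_injective K hv0 h3).symm
  have hinv : ∀ ψ : ℤ → K, W ψ ≠ ⊥ → W (fun i => (ψ i)⁻¹) ≠ ⊥ := by
    intro ψ hψ hbot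
    obtain ⟨v, hv, hv0⟩ := Submodule.exists_mem_ne_zero_of_ne_bot hψ
    apply hv0
    apply hB.1
    intro w
    have : (⊤ : Submodule K V) ≤ LinearMap.ker (B v) := by
      rw [← hWtop]
      refine iSup_le fun μ w hw => ?_
      rw [LinearMap.mem_ker]
      by_contra hne
      have h1 : ∀ i, μ i = (ψ i)⁻¹ := by
        intro i
        have h2 := hXI i v w
        rw [(hWmem _ _).1 hv i, (hWmem _ _).1 hw i] at h2
        simp only [map_smul, LinearMap.smul_apply, smul_eq_mul] at h2
        have h3 : (ψ i * μ i - 1) * B v w = 0 := by linear_combination h2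
        have h4 := (mul_eq_zero.1 h3).resolve_right hne
        rw [sub_eq_zero] at h4
        exact eq_inv_of_mul_eq_one_right h4
      have h5 : μ = fun i => (ψ i)⁻¹ := funext h1
      rw [h5, hbot, Submodule.mem_bot] at hw
      apply hne
      rw [hw, map_zero]
    exact this (Submodule.mem_top (x := w))
  have hshift1 : ∀ ψ : ℤ → K, W ψ ≠ ⊥ → W (fun i => ψ (i+1)) ≠ ⊥ := by
    intro ψ hψ
    obtain ⟨v, hv, hv0⟩ := Submodule.exists_mem_ne_zero_of_ne_bot hψ
    rw [Submodule.ne_bot_iff]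
    refine ⟨y v, (hWmem _ _).2 fun i => ?_, ?_⟩
    · rw [hXy, (hWmem _ _).1 hv, map_smul]
    · simpa using hv0
  have hshift : ∀ j : ℕ, W (fun i => χ (i+j)) ≠ ⊥ := by
    intro j
    induction j with
    | zero => simpa using hχ
    | succ j ih =>
      have := hshift1 _ ih
      convert this using 4
      push_cast; ring
  let Λ : Fin s ⊕ Fin s → (ℤ → K) := Sum.elim (fun j i => χ (i + (j:ℕ))) (fun j i => (χ (i+(j:ℕ)))⁻¹)
  have hΛne : ∀ a, W (Λ a) ≠ ⊥ := by
    rintro (j | j)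
    · exact hshift j
    · exact hinv _ (hshift j)
  have hsdvd : ∀ d : ℤ, ¬ (s:ℤ) ∣ d → IsCoprime d (s:ℤ) := by
    intro d hd
    exact ((Nat.prime_iff_prime_int.1 hs).coprime_iff_not_dvd.2 hd).symm
  have hA : ∀ d : ℤ, Function.Periodic χ d → (s : ℤ) ∣ d := by
    intro d hd
    by_contra hcon
    exact hnp (periodic_one_of_coprime (hsdvd d hcon) hd hper)
  have hsmall : ∀ j k : Fin s, (s : ℤ) ∣ ((j:ℕ) : ℤ) - (k:ℕ) → j = k := by
    intro j k h
    have h1 := Int.eq_zero_of_abs_lt_dvd h (by rw [abs_lt]; omega)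
    apply Fin.ext; omega
  have hB1 : ∀ j k : Fin s, (∀ i : ℤ, χ (i + (j:ℕ)) = χ (i + (k:ℕ))) → j = k := by
    intro j k h
    apply hsmall
    apply hA
    intro i
    have := h (i - (k:ℕ))
    rw [sub_add_cancel] at this
    rw [← this]; congr 1; ring
  have hB2 : ∀ j k : Fin s, ¬ (∀ i : ℤ, χ (i + (j:ℕ)) = (χ (i + (k:ℕ)))⁻¹) := by
    intro j k h
    have h1 : ∀ i, χ (i + (((j:ℕ):ℤ) - (k:ℕ))) = (χ i)⁻¹ := by
      intro i
      have := h (i - (k:ℕ))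
      rw [sub_add_cancel] at this
      rw [← this]; congr 1; ring
    have h2 : Function.Periodic χ (2 * (((j:ℕ):ℤ) - (k:ℕ))) := by
      intro i
      rw [two_mul, ← add_assoc, h1, h1, inv_inv]
    have h3 := hA _ h2
    have h4 : (s:ℤ) ∣ (((j:ℕ):ℤ) - (k:ℕ)) := by
      refine IsCoprime.dvd_of_dvd_mul_left ?_ h3
      obtain ⟨t, ht⟩ := hs2
      exact ⟨1, -t, by rw [ht]; push_cast; ring⟩
    have h5 : ∀ i, χ i = (χ i)⁻¹ := by
      intro i
      rw [← h1 i]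
      obtain ⟨t, ht⟩ := h4
      rw [ht, mul_comm]
      exact ((hper.int_mul t) i).symm
    have h6 : ∀ i, χ i = 1 := by
      intro i
      have h0 : χ i ≠ 0 := by
        intro h0
        have := hroot i
        rw [h0, zero_pow (by rintro rfl; simp at hN)] at this
        exact zero_ne_one this
      have h7 : χ i ^ 2 = 1 := by
        rw [sq]; nth_rewrite 2 [h5 i]; exact mul_inv_cancel₀ h0
      obtain ⟨t, ht⟩ := hNo
      have := hroot i
      rwa [ht, pow_succ, pow_mul, h7, one_pow, one_mul] at this
    exact hχ01 (by rw [h6, h6])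
  have hΛinj : Function.Injective Λ := by
    rintro (j | j) (k | k) h
    · rw [hB1 j k (fun i => congrFun h i)]
    · exact absurd (fun i => congrFun h i) (hB2 j k)
    · exact absurd (fun i => (congrFun h i).symm) (hB2 k j)
    · rw [hB1 j k (fun i => inv_injective (congrFun h i))]
  have hΛ1 : ∀ a, Λ a ≠ fun _ => 1 := by
    have key : ∀ j : Fin s, ¬ ∀ i : ℤ, χ (i + (j:ℕ)) = 1 := by
      intro j h
      apply hχ01
      have h1 := h (0 - (j:ℕ))
      have h2 := h (1 - (j:ℕ))
      rw [sub_add_cancel] at h1 h2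
      rw [h1, h2]
    rintro (j | j) h
    · exact key j (fun i => congrFun h i)
    · exact key j (fun i => inv_eq_one.1 (congrFun h i))
  choose v hv hv0 using fun a => Submodule.exists_mem_ne_zero_of_ne_bot (hΛne a)
  have hli : LinearIndependent K v :=
    iSupIndep.linearIndependent (fun a => W (Λ a)) (hWind.comp hΛinj) hv hv0
  have hfr := finrank_span_eq_card hli
  have hdisj : Disjoint C (Submodule.span K (Set.range v)) := by
    refine (hWind (fun _ => 1)).mono ?_ ?_
    · intro c hc
      rw [hWmem]
      intro i
      rw [one_smul]
      have hyi : ∀ i : ℤ, (y ^ i) c = c := by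
        have hy1 : y ∈ MulAction.stabilizer (V ≃ₗ[K] V) c := hCy c hc
        exact fun i => (MulAction.stabilizer (V ≃ₗ[K] V) c).zpow_mem hy1 i
      show (y ^ (-i)) (x ((y^i) c)) = c
      rw [hyi, hCx c hc, hyi]
    · rw [Submodule.span_le]
      rintro _ ⟨a, rfl⟩
      exact (le_iSup₂ (f := fun j (_ : j ≠ fun _ => 1) => W j) (Λ a) (hΛ1 a)) (hv a)
  have h1 := Submodule.finrank_add_finrank_le_of_disjoint hdisj
  rw [hfr] at h1
  simp only [Fintype.card_sum, Fintype.card_fin] at h1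
  omega
end Weights

section Transfer
open TensorProduct
variable {F V : Type*} [Field F] [AddCommGroup V] [Module F V] [FiniteDimensional F V]

lemma baseChange_nondeg {K : Type*} [Field K] [Algebra F K] {B : LinearMap.BilinForm F V}
    (hB : B.Nondegenerate) (hs : B.IsSymm) : (B.baseChange K).Nondegenerate := by
  classical
  have hsK : (B.baseChange K).IsSymm := ⟨fun x y => (LinearMap.BilinForm.IsSymm.baseChange K ⟨hs.eq⟩).eq x y⟩
  have key : ∀ x, (∀ y, B.baseChange K x y = 0) → x = 0 := by
    intro x hx
    let b := Module.finBasis F V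
    let b' := B.dualBasis hB b
    let bK := b'.baseChange K
    rw [← bK.sum_repr x]
    apply Finset.sum_eq_zero
    intro i _
    have h1 := hx (1 ⊗ₜ b i)
    rw [← bK.sum_repr x, map_sum, LinearMap.sum_apply, Finset.sum_eq_single i] at h1
    · rw [map_smul, LinearMap.smul_apply, Module.Basis.baseChange_apply,
        LinearMap.BilinForm.baseChange_tmul, LinearMap.BilinForm.apply_dualBasis_left] at h1
      simp at h1
      rw [h1, zero_smul]
    · intro j _ hj
      rw [map_smul, LinearMap.smul_apply, Module.Basis.baseChange_apply,
        LinearMap.BilinForm.baseChange_tmul, LinearMap.BilinForm.apply_dualBasis_left]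
      simp [Ne.symm hj]
    · simp
  exact ⟨key, fun y hy => key y (fun x => by rw [hsK.eq]; exact hy x)⟩

lemma bilin_baseChange_iso {K : Type*} [Field K] [Algebra F K] {B : LinearMap.BilinForm F V}
    {g : V ≃ₗ[F] V} (hg : g ∈ Iso B) : LinearEquiv.baseChange F K V V g ∈ Iso (B.baseChange K) := by
  intro u v
  induction u using TensorProduct.induction_on with
  | zero => simp
  | add a b ha hb => rw [map_add, map_add, map_add, LinearMap.add_apply, LinearMap.add_apply, ha, hb]
  | tmul a m =>
    induction v using TensorProduct.induction_on with
    | zero => simp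
    | add a b ha hb => rw [map_add, map_add, map_add, ha, hb]
    | tmul a' m' =>
      have h1 : ∀ (a : K) m, LinearEquiv.baseChange F K V V g (a ⊗ₜ m) = a ⊗ₜ (g m) := fun _ _ => rfl
      rw [h1, h1, LinearMap.BilinForm.baseChange_tmul, LinearMap.BilinForm.baseChange_tmul, hg]

noncomputable def bcHom (F V : Type*) [Field F] [AddCommGroup V] [Module F V] (K : Type*) [Field K] [Algebra F K] :
    (V ≃ₗ[F] V) →* ((K ⊗[F] V) ≃ₗ[K] (K ⊗[F] V)) where
  toFun g := LinearEquiv.baseChange F K V V g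
  map_one' := by
    ext v
    induction v using TensorProduct.induction_on with
    | zero => simp
    | add a b ha hb => rw [map_add, map_add, ha, hb]
    | tmul a m => rfl
  map_mul' := by
    intro g h
    ext v
    induction v using TensorProduct.induction_on with
    | zero => simp
    | add a b ha hb => rw [map_add, map_add, ha, hb]
    | tmul a m => rfl

lemma bcHom_tmul (K : Type*) [Field K] [Algebra F K] (g : V ≃ₗ[F] V) (a : K) (v : V) :
    bcHom F V K g (a ⊗ₜ v) = a ⊗ₜ (g v) := rfl

lemma bcHom_injective (K : Type*) [Field K] [Algebra F K] : Function.Injective (bcHom F V K) := by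
  intro g h hgh
  ext v
  have h1 : (1 : K) ⊗ₜ[F] (g v) = 1 ⊗ₜ (h v) := by
    rw [← bcHom_tmul, ← bcHom_tmul, hgh]
  have h2 : Function.Injective (fun v : V => (1:K) ⊗ₜ[F] v) := by
    have := Module.FaithfullyFlat.tensorProduct_mk_injective (A := F) (B := K) V
    exact this
  exact h2 h1

lemma weight_F {B : LinearMap.BilinForm F V} (hB : B.Nondegenerate) (hsym : B.IsSymm)
    {x y : V ≃ₗ[F] V} (hx : x ∈ Iso B) (hy : y ∈ Iso B) {N s : ℕ} (hN : (N : F) ≠ 0) (hNo : Odd N)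
    (hxN : x ^ N = 1) (hs : s.Prime) (hs2 : Odd s) (hnc : ¬ Commute x y) (hys : Commute (y ^ s) x)
    (hcc : ∀ i j : ℤ, Commute (y ^ (-i) * x * y ^ i) (y ^ (-j) * x * y ^ j))
    (C : Submodule F V) (hCx : ∀ v ∈ C, x v = v) (hCy : ∀ v ∈ C, y v = v) :
    Module.finrank F C + 2 * s ≤ Module.finrank F V := by
  let K := AlgebraicClosure F
  let β := bcHom F V K
  have hfix : ∀ g : V ≃ₗ[F] V, (∀ v ∈ C, g v = v) → ∀ v ∈ LinearMap.range (LinearMap.baseChange K C.subtype),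
      β g v = v := by
    rintro g hg _ ⟨t, rfl⟩
    induction t using TensorProduct.induction_on with
    | zero => simp
    | add a b ha hb => rw [map_add, map_add, ha, hb]
    | tmul a m =>
      rw [LinearMap.baseChange_tmul, bcHom_tmul]
      rw [Submodule.subtype_apply, hg m m.2]
  have h := weight_core (K := K) (V := K ⊗[F] V) (B := B.baseChange K) (baseChange_nondeg hB hsym)
    (x := β x) (y := β y) (bilin_baseChange_iso hx) (bilin_baseChange_iso hy) (N := N) (s := s)
    (by
      have h1 : ((N : F) : F) ≠ 0 := hN
      intro h2
      apply h1
      apply (algebraMap F K).injective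
      rw [map_natCast, h2, map_zero]) hNo
    (by rw [← map_pow, hxN, map_one]) hs hs2
    (fun h => hnc (by
      apply bcHom_injective K
      rw [map_mul, map_mul]; exact h))
    (by rw [← map_pow]; exact hys.map β)
    (by
      intro i j
      rw [← map_zpow, ← map_zpow, ← map_zpow, ← map_zpow, ← map_mul, ← map_mul, ← map_mul, ← map_mul]
      exact (hcc i j).map β)
    (LinearMap.range (LinearMap.baseChange K C.subtype)) (hfix x hCx) (hfix y hCy)
  rw [LinearMap.finrank_range_of_inj, Module.finrank_baseChange, Module.finrank_baseChange] at h
  · exact h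
  · exact Module.Flat.lTensor_preserves_injective_linearMap C.subtype C.injective_subtype

/-- L1 -/
lemma commute_of_small {B : LinearMap.BilinForm F V} (hB : B.Nondegenerate) (hsym : B.IsSymm)
    (C : Submodule F V) : ∀ (N : ℕ) (M : Subgroup (V ≃ₗ[F] V)), Nat.card M = N → M ≤ Iso B →
    Odd N → (N : F) ≠ 0 → (∀ g ∈ M, ∀ v ∈ C, g v = v) →
    (∀ s : ℕ, s.Prime → s ∣ N → Module.finrank F V < Module.finrank F C + 2 * s) →
    ∀ a ∈ M, ∀ b ∈ M, Commute a b := by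
  intro N
  induction N using Nat.strong_induction_on with
  | _ N ih =>
  intro M hcard hMI hodd hN0 hfix hsm
  by_contra hcon
  push Not at hcon
  obtain ⟨a, ha, b, hb, hab⟩ := hcon
  haveI : Finite M := Nat.finite_of_card_ne_zero (by rw [hcard]; rintro rfl; simp at hN0)
  obtain ⟨x, y, s, hsp, hsd, hxy, hys, hconj⟩ := mna (M := M)
    ⟨⟨a, ha⟩, ⟨b, hb⟩, fun h => hab (by simpa using h.map M.subtype)⟩
    (by
      intro K hK a ha b hb
      have hle : K.map M.subtype ≤ M := by
        rintro _ ⟨k, _, rfl⟩; exact k.2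
      have hcK : Nat.card (K.map M.subtype) = Nat.card K :=
        Nat.card_congr (K.equivMapOfInjective M.subtype M.subtype_injective).symm.toEquiv
      have hdvd : Nat.card K ∣ N := by rw [← hcard]; exact K.card_subgroup_dvd_card
      have hlt : Nat.card K < N := by
        rw [← hcard]
        refine lt_of_le_of_ne (Subgroup.card_le_card_group K) fun h => hK ?_
        exact Subgroup.eq_top_of_card_eq K h
      have := ih (Nat.card K) hlt (K.map M.subtype) hcK (hle.trans hMI)
        (hodd.of_dvd_nat hdvd)
        (by
          intro h0
          obtain ⟨t, ht⟩ := hdvd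
          apply hN0
          rw [ht]; push_cast; rw [h0, zero_mul])
        (fun g hg => hfix g (hle hg)) (fun s hs hsd => hsm s hs (hsd.trans hdvd))
        a (Subgroup.mem_map_of_mem M.subtype ha) b (Subgroup.mem_map_of_mem M.subtype hb)
      exact Subtype.ext this)
  rw [hcard] at hsd
  have h1 := weight_F hB hsym (hMI x.2) (hMI y.2) hN0 hodd
    (by
      have : x ^ N = 1 := by rw [← hcard]; exact pow_card_eq_one'
      exact_mod_cast congrArg Subtype.val this) hsp (hodd.of_dvd_nat hsd)
    (fun h => hxy (Subtype.ext h)) (by exact_mod_cast hys.map M.subtype)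
    (by
      intro i j
      have := (hconj (y ^ (-i)) (y ^ (-j))).map M.subtype
      simpa using this)
    C (hfix x x.2) (hfix y y.2)
  have := hsm s hsp hsd
  omega
end Transfer



/-! ### Abelian fixed point free groups -/

section FieldCount
open Polynomial

lemma field_count {F A G : Type*} [Field F] [Fintype F] [Field A] [Finite A] [Algebra F A]
    [Group G] [Finite G] (hq : Odd (Fintype.card F)) (f : G →* A) (hf : Function.Injective f)
    (hodd : Odd (Nat.card G)) (hgen : Algebra.adjoin F (Set.range f) = ⊤)
    (hconj : ∀ g, ∀ p : F[X], aeval (f g) p = 0 → aeval (f g⁻¹) p = 0) :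
    2 * Nat.card G ≤ Fintype.card F ^ (Module.finrank F A / 2) + 1 := by
  haveI : IsCyclic G := isCyclic_of_injective_ringHom f hf
  obtain ⟨g, hg⟩ := IsCyclic.exists_generator (α := G)
  have hIntg : ∀ z : A, IsIntegral F z := fun z => Algebra.IsIntegral.isIntegral z
  have hmp : minpoly F (f g) = minpoly F (f g⁻¹) :=
    minpoly.eq_of_irreducible_of_monic (minpoly.irreducible (hIntg _))
      (hconj g _ (minpoly.aeval _ _)) (minpoly.monic (hIntg _))
  obtain ⟨σ, hσ⟩ := isConjRoot_iff_exists_algEquiv.1 (show IsConjRoot F (f g⁻¹) (f g) from hmp.symm)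
  obtain ⟨i, hi⟩ := (FiniteField.bijective_frobeniusAlgEquivOfAlgebraic_pow F A).2 σ
  have hi' : FiniteField.frobeniusAlgEquivOfAlgebraic F A ^ (i:ℕ) = σ := hi
  have hσp : ∀ z, σ z = z ^ (Fintype.card F ^ (i:ℕ)) := by
    intro z
    rw [← hi', AlgEquiv.coe_pow, FiniteField.coe_frobeniusAlgEquivOfAlgebraic_iterate]
  have hg1 : g ^ (Fintype.card F ^ (i:ℕ) + 1) = 1 := by
    apply hf
    rw [pow_succ, map_mul, map_pow, ← hσp, hσ, ← map_mul, inv_mul_cancel]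
  have hinv : ∀ h : G, σ (f h) = f h⁻¹ := by
    intro h
    obtain ⟨k, rfl⟩ := Subgroup.mem_zpowers_iff.1 (hg h)
    have h1 : g ^ (Fintype.card F ^ (i:ℕ)) = g⁻¹ := by
      rw [pow_succ] at hg1
      exact eq_inv_of_mul_eq_one_left hg1
    rw [hσp, ← map_pow]
    congr 1
    rw [← _root_.zpow_natCast, ← _root_.zpow_mul, mul_comm, _root_.zpow_mul, _root_.zpow_natCast, h1, _root_.inv_zpow]
  have hσ2 : σ ^ 2 = 1 := by
    have h1 : ((σ ^ 2 : Gal(A/F)) : A →ₐ[F] A) = AlgHom.id F A := by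
      apply AlgHom.ext_of_adjoin_eq_top hgen
      rintro _ ⟨h, rfl⟩
      show (σ ^ 2) (f h) = f h
      rw [sq]
      show σ (σ (f h)) = f h
      rw [hinv, hinv, inv_inv]
    ext z
    exact congrArg (fun a : A →ₐ[F] A => a z) h1
  have hdvd : Module.finrank F A ∣ 2 * (i:ℕ) := by
    refine (FiniteField.orderOf_frobeniusAlgEquivOfAlgebraic F A).symm.dvd.trans ?_
    apply orderOf_dvd_of_pow_eq_one
    rw [mul_comm, pow_mul, hi', hσ2]
  have hcd : Nat.card G ∣ Fintype.card F ^ (i:ℕ) + 1 := by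
    rw [← orderOf_eq_card_of_forall_mem_zpowers hg]
    exact orderOf_dvd_of_pow_eq_one hg1
  have heven : Even (Fintype.card F ^ (i:ℕ) + 1) := (hq.pow).add_one
  obtain ⟨t, ht⟩ := heven
  have hct : Nat.card G ∣ t := by
    refine (Nat.Coprime.dvd_of_dvd_mul_left (k := Nat.card G) (m := 2) ?_ (by rw [two_mul, ← ht]; exact hcd))
    exact hodd.coprime_two_right
  have htpos : 0 < t := by omega
  have hle := Nat.le_of_dvd htpos hct
  have hid : (i:ℕ) ≤ Module.finrank F A / 2 := by
    obtain ⟨u, hu⟩ := hdvd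
    have hlt := i.2
    have : u < 2 := by
      by_contra hcon
      have : Module.finrank F A * 2 ≤ Module.finrank F A * u := Nat.mul_le_mul_left _ (by omega)
      omega
    interval_cases u <;> omega
  have := Nat.pow_le_pow_right (n := Fintype.card F) Fintype.card_pos hid
  omega
end FieldCount

section LTsec
variable {F E : Type*} [Field F] [Fintype F] [AddCommGroup E] [Module F E] [FiniteDimensional F E]

lemma LT_count (hq : Odd (Fintype.card F)) (G : Subgroup (E ≃ₗ[F] E)) (hodd : Odd (Nat.card G))
    (hfree : ∀ g ∈ G, g ≠ 1 → ∀ v, g v = v → v = 0) (W : Submodule F E) (hW : W ≠ ⊥)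
    (hinv : ∀ g ∈ G, ∀ w ∈ W, g w ∈ W) :
    2 * Nat.card G ≤ Fintype.card F ^ (Module.finrank F W) + 1 := by
  classical
  haveI : Finite E := Module.finite_of_finite F
  let S : SubMulAction G E :=
    { carrier := {w | w ∈ W ∧ w ≠ 0}
      smul_mem' := by
        rintro ⟨g, hg⟩ w ⟨hw, hw0⟩
        refine ⟨hinv g hg w hw, ?_⟩
        show g w ≠ 0
        simpa using hw0 }
  have hstab : ∀ b : S, MulAction.stabilizer G b = ⊥ := by
    rintro ⟨w, hw, hw0⟩
    rw [eq_bot_iff]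
    rintro ⟨g, hg⟩ hgs
    rw [Subgroup.mem_bot]
    by_contra hne
    apply hw0
    apply hfree g hg (fun h => hne (Subtype.ext h))
    exact congrArg Subtype.val (MulAction.mem_stabilizer_iff.1 hgs)
  have h1 := Nat.card_congr (MulAction.selfEquivOrbitsQuotientProd (G := G) hstab)
  rw [Nat.card_prod] at h1
  have h2 : Nat.card S + 1 = Fintype.card F ^ Module.finrank F W := by
    have h3 : Nat.card W = Fintype.card F ^ Module.finrank F W := by
      rw [Module.natCard_eq_pow_finrank (K := F), Nat.card_eq_fintype_card]
    rw [← h3]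
    have h4 : (W : Set E).ncard = ((S : Set E)).ncard + 1 := by
      have : (W : Set E) = insert 0 (S : Set E) := by
        ext w
        simp only [SetLike.mem_coe, Set.mem_insert_iff]
        constructor
        · intro hw
          by_cases h0 : w = 0
          · exact Or.inl h0
          · exact Or.inr ⟨hw, h0⟩
        · rintro (rfl | h)
          · exact W.zero_mem
          · exact h.1
      rw [this, Set.ncard_insert_of_notMem]
      intro h
      exact h.2 rfl
    exact h4.symm
  have h5 : Odd (Fintype.card F ^ Module.finrank F W) := hq.pow
  set c := Nat.card (Quotient (MulAction.orbitRel G S)) with hc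
  have h6 : Even (Nat.card S) := by
    rw [← h2] at h5
    rcases Nat.even_or_odd (Nat.card S) with h | h
    · exact h
    · exact absurd h5 (by simpa using h.add_one)
  have h7 : Even c := by
    rw [h1] at h6
    rcases Nat.even_mul.1 h6 with h | h
    · exact h
    · exact absurd hodd (by simpa using h)
  have h8 : 0 < Nat.card S := by
    have : 1 < Fintype.card F ^ Module.finrank F W :=
      Nat.one_lt_pow (by
        intro h0
        exact hW (Submodule.finrank_eq_zero.1 h0)) Fintype.one_lt_card
    omega
  have h9 : 2 ≤ c := by
    rcases h7 with ⟨t, ht⟩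
    rcases Nat.eq_zero_or_pos t with h | h
    · rw [ht, h] at h1; simp at h1; omega
    · omega
  have : 2 * Nat.card G ≤ Nat.card S := by rw [h1]; exact Nat.mul_le_mul_right _ h9
  omega

open Polynomial in
lemma aeval_adjoint {B : LinearMap.BilinForm F E} {g : E ≃ₗ[F] E} (hg : g ∈ Iso B) (p : F[X]) (u v : E) :
    B (aeval (R := F) ((g : E →ₗ[F] E) : Module.End F E) p u) v
      = B u (aeval (R := F) (((g⁻¹ : E ≃ₗ[F] E) : E →ₗ[F] E) : Module.End F E) p v) := by
  have h1 : ∀ u v, B (g u) v = B u (g⁻¹ v) := by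
    intro u v
    have := hg u (g⁻¹ v)
    rw [← this]; congr 1
    exact (g.apply_symm_apply v).symm
  induction p using Polynomial.induction_on generalizing u v with
  | C a => simp [Algebra.algebraMap_eq_smul_one]
  | add p q hp hq => simp [hp, hq]
  | monomial n a ih =>
    have e1 : ∀ T : Module.End F E, aeval (R := F) T (C a * X ^ (n+1)) u = aeval (R := F) T (C a * X ^ n) (T u) := by
      intro T
      rw [pow_succ, ← mul_assoc, map_mul _ _ X, aeval_X, Module.End.mul_apply]
    have e2 : ∀ T : Module.End F E, aeval (R := F) T (C a * X ^ (n+1)) v = T (aeval (R := F) T (C a * X ^ n) v) := by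
      intro T
      rw [pow_succ, ← mul_assoc, mul_comm, map_mul _ X, aeval_X, Module.End.mul_apply]
    rw [e1, e2]
    have e3 := h1 u (aeval (R := F) (((g⁻¹ : E ≃ₗ[F] E) : E →ₗ[F] E) : Module.End F E) (C a * X ^ n) v)
    exact (ih (g u) v).trans e3

lemma LT_irred (hq : Odd (Fintype.card F)) {B : LinearMap.BilinForm F E} (hB : B.Nondegenerate)
    (G : Subgroup (E ≃ₗ[F] E)) (hG : G ≤ Iso B) (hodd : Odd (Nat.card G)) [Nontrivial E]
    (hcomm : ∀ a ∈ G, ∀ b ∈ G, Commute a b)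
    (hirr : ∀ W : Submodule F E, (∀ g ∈ G, ∀ w ∈ W, g w ∈ W) → W ≠ ⊥ → W = ⊤) :
    2 * Nat.card G ≤ Fintype.card F ^ (Module.finrank F E / 2) + 1 := by
  classical
  haveI : Finite E := Module.finite_of_finite F
  haveI : Finite G := Nat.finite_of_card_ne_zero hodd.pos.ne'
  let φ : (E ≃ₗ[F] E) →* Module.End F E := LinearEquiv.automorphismGroup.toLinearMapMonoidHom
  let s : Set (Module.End F E) := φ '' (G : Set (E ≃ₗ[F] E))
  have hsc : ∀ a ∈ s, ∀ b ∈ s, a * b = b * a := by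
    rintro _ ⟨a, ha, rfl⟩ _ ⟨b, hb, rfl⟩
    rw [← map_mul, ← map_mul, (hcomm a ha b hb).eq]
  let A := Algebra.adjoin F s
  letI : CommRing A := Algebra.adjoinCommRingOfComm F hsc
  haveI : Nontrivial A := inferInstance
  haveI : NoZeroDivisors A := by
    refine ⟨fun {a b} hab => ?_⟩
    by_contra hcon
    push Not at hcon
    obtain ⟨ha, hb⟩ := hcon
    apply ha
    have hb' : (b : Module.End F E) ≠ 0 := fun h => hb (Subtype.ext h)
    have hk := hirr (LinearMap.ker (a : Module.End F E)) (by
      intro g hg w hw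
      rw [LinearMap.mem_ker] at hw ⊢
      have hgA : φ g ∈ A := Algebra.subset_adjoin ⟨g, hg, rfl⟩
      have h1 : a * ⟨φ g, hgA⟩ = ⟨φ g, hgA⟩ * a := mul_comm _ _
      have h2 := congrArg (fun z : A => (z : Module.End F E) w) h1
      have h3 : (a : Module.End F E) (g w) = g ((a : Module.End F E) w) := h2
      rw [h3, hw, map_zero])
      (by
        intro hbot
        apply hb'
        ext w
        have h4 : (a : Module.End F E) ((b : Module.End F E) w) = 0 :=
          congrArg (fun z : A => (z : Module.End F E) w) hab
        have h5 : (b : Module.End F E) w ∈ LinearMap.ker (a : Module.End F E) := h4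
        rw [hbot, Submodule.mem_bot] at h5
        exact h5)
    apply Subtype.ext
    exact LinearMap.ker_eq_top.1 hk
  haveI : IsDomain A := NoZeroDivisors.to_isDomain A
  haveI : Finite (Module.End F E) := Finite.of_injective (fun f : Module.End F E => (f : E → E)) DFunLike.coe_injective
  haveI : Finite A := inferInstance
  letI : Field A := (Finite.isField_of_domain A).toField
  let f : G →* A :=
    { toFun := fun g => ⟨φ g, Algebra.subset_adjoin ⟨g, g.2, rfl⟩⟩
      map_one' := rfl
      map_mul' := fun a b => rfl }
  have h := field_count (F := F) (A := A) hq f (by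
      intro a b hab
      apply Subtype.ext
      apply LinearEquiv.ext
      intro v
      exact congrArg (fun z : A => (z : Module.End F E) v) hab) hodd
    (by
      have h1 : Set.range f = (Subtype.val : A → Module.End F E) ⁻¹' s := by
        ext z
        constructor
        · rintro ⟨g, rfl⟩; exact ⟨g, g.2, rfl⟩
        · rintro ⟨g, hg, hgz⟩; exact ⟨⟨g, hg⟩, Subtype.ext hgz⟩
      rw [h1]
      exact Algebra.adjoin_adjoin_coe_preimage)
    (by
      intro g p hp
      have hval : ∀ g : G, ((Polynomial.aeval (f g) p : A) : Module.End F E) = Polynomial.aeval (φ g) p := by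
        intro g
        exact (Polynomial.aeval_algHom_apply A.val (f g) p).symm
      have h1 : Polynomial.aeval (φ g) p = 0 := by rw [← hval, hp]; rfl
      apply Subtype.ext
      rw [hval]
      apply LinearMap.ext
      intro v
      apply hB.2
      intro u
      have := aeval_adjoint (hG g.2) p u v
      refine this.symm.trans ?_
      have h2 : Polynomial.aeval ((g : E ≃ₗ[F] E) : Module.End F E) p = 0 := h1
      rw [h2]; simp)
  refine h.trans ?_
  gcongr
  · exact Fintype.card_pos
  · obtain ⟨v, hv⟩ := exists_ne (0 : E)
    let ev : A →ₗ[F] E := (LinearMap.applyₗ v).comp A.val.toLinearMap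
    apply LinearMap.finrank_le_finrank_of_injective (f := ev)
    rw [← LinearMap.ker_eq_bot, LinearMap.ker_eq_bot']
    intro a ha
    by_contra hne
    have h1 : (a⁻¹ * a : A) = 1 := inv_mul_cancel₀ hne
    have h2 : (a : Module.End F E) v = 0 := ha
    have h3 : ((a⁻¹ : A) : Module.End F E) ((a : Module.End F E) v) = v :=
      congrArg (fun z : A => (z : Module.End F E) v) h1
    rw [h2, map_zero] at h3
    exact hv h3.symm

lemma LT_bound (hq : Odd (Fintype.card F)) {B : LinearMap.BilinForm F E} (hB : B.Nondegenerate) (hs : B.IsSymm)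
    (G : Subgroup (E ≃ₗ[F] E)) (hG : G ≤ Iso B) (hodd : Odd (Nat.card G)) [Nontrivial E]
    (hcomm : ∀ a ∈ G, ∀ b ∈ G, Commute a b)
    (hfree : ∀ g ∈ G, g ≠ 1 → ∀ v, g v = v → v = 0) :
    2 * Nat.card G ≤ Fintype.card F ^ (Module.finrank F E / 2) + 1 := by
  by_contra hcon
  have hsm : ∀ W : Submodule F E, (∀ g ∈ G, ∀ w ∈ W, g w ∈ W) → W ≠ ⊥ →
      ¬ 2 * Module.finrank F W ≤ Module.finrank F E := by
    intro W h1 h2 h3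
    apply hcon
    refine (LT_count hq G hodd hfree W h2 h1).trans ?_
    gcongr
    · exact Fintype.card_pos
    · omega
  have hperp : ∀ W : Submodule F E, (∀ g ∈ G, ∀ w ∈ W, g w ∈ W) →
      (∀ g ∈ G, ∀ w ∈ B.orthogonal W, g w ∈ B.orthogonal W) := by
    intro W hW g hg w hw
    rw [LinearMap.BilinForm.mem_orthogonal_iff] at hw ⊢
    intro n hn
    have h1 := hw (g⁻¹ n) (hW _ (G.inv_mem hg) n hn)
    have h2 := hG hg (g⁻¹ n) w
    have h3 : g (g⁻¹ n) = n := g.apply_symm_apply n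
    rw [h3, h1] at h2
    exact h2
  have hdim : ∀ W : Submodule F E, Module.finrank F (B.orthogonal W) + Module.finrank F W = Module.finrank F E := by
    intro W
    have h1 := LinearMap.BilinForm.finrank_orthogonal hB W
    have := Submodule.finrank_le W
    omega
  refine hcon (LT_irred hq hB G hG hodd hcomm ?_)
  intro W hW hW0
  by_contra hWtop
  have hI : W ⊓ B.orthogonal W = ⊥ := by
    by_contra hne
    refine hsm _ ?_ hne ?_
    · intro g hg w hw
      exact ⟨hW g hg w hw.1, hperp W hW g hg w hw.2⟩
    · have h1 := Submodule.finrank_mono (inf_le_left : W ⊓ B.orthogonal W ≤ W)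
      have h2 := Submodule.finrank_mono (inf_le_right : W ⊓ B.orthogonal W ≤ B.orthogonal W)
      have := hdim W
      omega
  have h1 := hsm W hW hW0
  have h2 := hsm (B.orthogonal W) (hperp W hW) (by
    intro h
    have h3 := hdim W
    rw [h, finrank_bot, zero_add] at h3
    exact hWtop (Submodule.eq_top_of_finrank_eq h3))
  have := hdim W
  omega
end LTsec



/-! ### Size theorem: preliminaries -/

section SizePrelim
variable {F V : Type*} [Field F] [AddCommGroup V] [Module F V]

def PiOK (F : Type*) [Field F] (π : Set ℕ) : Prop := ∀ r ∈ π, r.Prime ∧ r ≠ 2 ∧ (r : F) ≠ 0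

def IsPiGp {G : Type*} [Group G] (π : Set ℕ) (K : Subgroup G) : Prop :=
  ∀ r : ℕ, r.Prime → r ∣ Nat.card K → r ∈ π

lemma PiOK.odd {π : Set ℕ} (hπ : PiOK F π) {N : ℕ} (h : ∀ r : ℕ, r.Prime → r ∣ N → r ∈ π) :
    Odd N := by
  rw [← Nat.not_even_iff_odd]
  intro h2
  exact (hπ 2 (h 2 Nat.prime_two h2.two_dvd)).2.1 rfl

lemma PiOK.ne_zero {π : Set ℕ} (hπ : PiOK F π) {N : ℕ} (h : ∀ r : ℕ, r.Prime → r ∣ N → r ∈ π) :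
    (N : F) ≠ 0 := by
  have hodd := PiOK.odd hπ h
  intro h0
  have hN : N ≠ 0 := by rintro rfl; simp at hodd
  have h1 := (ringChar.spec F N).1 h0
  rcases CharP.char_is_prime_or_zero F (ringChar F) with hp | hp
  · exact (hπ _ (h _ hp h1)).2.2 (ringChar.Nat.cast_ringChar)
  · rw [hp] at h1
    exact hN (Nat.eq_zero_of_zero_dvd h1)

lemma IsPiGp.mono {G : Type*} [Group G] {π : Set ℕ} {K L : Subgroup G} (h : IsPiGp π K)
    (hL : Nat.card L ∣ Nat.card K) : IsPiGp π L := fun r hr hrd => h r hr (hrd.trans hL)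

lemma finite_equiv (F V : Type*) [Field F] [Finite F] [AddCommGroup V] [Module F V]
    [FiniteDimensional F V] : Finite (V ≃ₗ[F] V) := by
  haveI : Finite V := Module.finite_of_finite F
  exact Finite.of_injective (fun f : V ≃ₗ[F] V => (f : V → V)) DFunLike.coe_injective

/-- restriction of a subgroup to an invariant subspace -/
def rest (W : Submodule F V) (K : Subgroup (V ≃ₗ[F] V)) : Subgroup (W ≃ₗ[F] W) :=
  (K.subgroupOf (stabS W)).map (resHom W)

lemma mem_rest {W : Submodule F V} {K : Subgroup (V ≃ₗ[F] V)} {a : W ≃ₗ[F] W} :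
    a ∈ rest W K ↔ ∃ g ∈ K, ∃ hg : g ∈ stabS W, resHom W ⟨g, hg⟩ = a := by
  constructor
  · rintro ⟨⟨g, hg⟩, hgK, rfl⟩
    exact ⟨g, hgK, hg, rfl⟩
  · rintro ⟨g, hgK, hg, rfl⟩
    exact ⟨⟨g, hg⟩, hgK, rfl⟩

lemma card_rest_dvd (W : Submodule F V) (K : Subgroup (V ≃ₗ[F] V)) :
    Nat.card (rest W K) ∣ Nat.card K := by
  refine (Subgroup.card_map_dvd _ _).trans ?_
  have h1 : Nat.card ((K.subgroupOf (stabS W)).map (stabS W).subtype) =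
      Nat.card (K.subgroupOf (stabS W)) :=
    Subgroup.card_map_of_injective (Subgroup.subtype_injective _)
  rw [← h1, Subgroup.subgroupOf_map_subtype]
  exact Subgroup.card_dvd_of_le inf_le_left

lemma rest_le_Iso {B : LinearMap.BilinForm F V} {W : Submodule F V} {K : Subgroup (V ≃ₗ[F] V)}
    (hK : K ≤ Iso B) : rest W K ≤ Iso (B.restrict W) := by
  intro a ha
  obtain ⟨g, hgK, hg, rfl⟩ := mem_rest.1 ha
  exact resHom_mem_Iso ⟨g, hg⟩ (hK hgK)

/-- Orthogonal decomposition. -/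
lemma orth_sup [FiniteDimensional F V] {B : LinearMap.BilinForm F V} (hs : B.IsSymm) {k : ℕ}
    (S : Finset (Submodule F V)) :
    (∀ X ∈ S, Disjoint X (B.orthogonal X)) → (∀ X ∈ S, Module.finrank F X = k) →
    (∀ X ∈ S, ∀ Y ∈ S, X ≠ Y → Y ≤ B.orthogonal X) →
    Disjoint (S.sup id) (B.orthogonal (S.sup id)) ∧ Module.finrank F (S.sup id : Submodule F V) = S.card * k := by
  classical
  induction S using Finset.induction_on with
  | empty =>
    intro _ _ _
    simp
  | insert X S hX ih =>
    intro h1 h2 h3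
    obtain ⟨i1, i2⟩ := ih (fun Y hY => h1 Y (Finset.mem_insert_of_mem hY))
      (fun Y hY => h2 Y (Finset.mem_insert_of_mem hY))
      (fun Y hY Z hZ => h3 Y (Finset.mem_insert_of_mem hY) Z (Finset.mem_insert_of_mem hZ))
    have hX1 := h1 X (Finset.mem_insert_self _ _)
    have hU : S.sup id ≤ B.orthogonal X := Finset.sup_le (fun Y hY =>
      h3 X (Finset.mem_insert_self _ _) Y (Finset.mem_insert_of_mem hY)
        (fun e => hX (e ▸ hY)))
    rw [Finset.sup_insert, id]
    have hdis : Disjoint X (S.sup id) := hX1.mono_right hU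
    constructor
    · rw [Submodule.disjoint_def]
      intro v hv hv2
      obtain ⟨x, hx, u, hu, rfl⟩ := Submodule.mem_sup.1 hv
      rw [LinearMap.BilinForm.mem_orthogonal_iff] at hv2
      have hx0 : x = 0 := by
        refine (Submodule.disjoint_def.1 hX1) x hx ?_
        rw [LinearMap.BilinForm.mem_orthogonal_iff]
        intro y hy
        have e1 := hv2 y (Submodule.mem_sup_left hy)
        have e2 : B y u = 0 := (LinearMap.BilinForm.mem_orthogonal_iff.1 (hU hu)) y hy
        change B y (x + u) = 0 at e1
        rw [map_add, e2, add_zero] at e1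
        exact e1
      have hu0 : u = 0 := by
        refine (Submodule.disjoint_def.1 i1) u hu ?_
        rw [LinearMap.BilinForm.mem_orthogonal_iff]
        intro y hy
        have e1 := hv2 y (Submodule.mem_sup_right hy)
        change B y (x + u) = 0 at e1
        rw [hx0, zero_add] at e1
        exact e1
      rw [hx0, hu0, add_zero]
    · have h4 := Submodule.finrank_sup_add_finrank_inf_eq X (S.sup id)
      rw [hdis.eq_bot, finrank_bot, i2, h2 X (Finset.mem_insert_self _ _), add_zero] at h4
      rw [h4, Finset.card_insert_of_notMem hX]
      ring

/-- The restriction of a Hall subgroup to an invariant nondegenerate subspace is Hall. -/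
lemma rest_hall [FiniteDimensional F V] [Finite F] {B : LinearMap.BilinForm F V} (hs : B.IsSymm)
    {π : Set ℕ} {H : Subgroup (V ≃ₗ[F] V)} (hH : IsHallSubgroupIn π (Iso B) H) {W : Submodule F V}
    (hW : IsCompl W (B.orthogonal W)) (hHW : H ≤ stabS W) :
    IsHallSubgroupIn π (Iso (B.restrict W)) (rest W H) := by
  obtain ⟨hle, hpi, hidx⟩ := hH
  refine ⟨rest_le_Iso hle, fun r hr hrd => hpi r hr (hrd.trans (card_rest_dvd W H)), ?_⟩
  intro r hr hrd
  apply hidx r hr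
  set K : Subgroup (V ≃ₗ[F] V) := Iso B ⊓ stabS W with hK
  have hHK : H ≤ K := le_inf hle hHW
  rw [← Subgroup.relIndex_mul_relIndex H K (Iso B) hHK inf_le_left]
  apply Dvd.dvd.mul_right
  refine hrd.trans ?_
  let φ : K →* Iso (B.restrict W) :=
    { toFun := fun g => ⟨resHom W ⟨g.1, g.2.2⟩, resHom_mem_Iso ⟨g.1, g.2.2⟩ g.2.1⟩
      map_one' := rfl
      map_mul' := fun a b => rfl }
  have hφ : Function.Surjective φ := by
    rintro ⟨a, ha⟩
    have h1 : glue hW a ∈ stabS W := mem_stabS_of_le (fun v hv => by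
      have := glue_left hW a ⟨v, hv⟩
      rw [this]
      exact (a ⟨v, hv⟩).2)
    refine ⟨⟨glue hW a, glue_mem_Iso hs hW ha, h1⟩, ?_⟩
    apply Subtype.ext
    ext x
    exact glue_left hW a x
  have h2 := Subgroup.index_map_dvd (H.subgroupOf K) hφ
  have h3 : (H.subgroupOf K).map φ = (rest W H).subgroupOf (Iso (B.restrict W)) := by
    ext a
    rw [Subgroup.mem_subgroupOf, mem_rest, Subgroup.mem_map]
    constructor
    · rintro ⟨g, hg, rfl⟩
      exact ⟨g.1, hg, g.2.2, rfl⟩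
    · rintro ⟨g, hg, hgs, h4⟩
      refine ⟨⟨g, hHK hg⟩, hg, ?_⟩
      exact Subtype.ext h4
  rw [h3] at h2
  exact h2

variable [FiniteDimensional F V] {B : LinearMap.BilinForm F V} {π : Set ℕ} {k : ℕ}

/-- minimal support -/
lemma minsupp (hs : B.IsSymm)
    (hk : ∀ g ∈ Iso B, (orderOf g).Prime → orderOf g ∈ π → k ≤ Module.finrank F (Esp g))
    {X : Submodule F V} (hX : IsCompl X (B.orthogonal X)) (hXk : Module.finrank F X = k)
    {a : X ≃ₗ[F] X} (ha : a ∈ Iso (B.restrict X)) (hp : (orderOf a).Prime) (hpi : orderOf a ∈ π) :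
    Esp a = ⊤ := by
  have ho : orderOf (glue hX a) = orderOf a :=
    orderOf_injective (glue hX) (glue_injective hX) a
  have h1 := hk (glue hX a) (glue_mem_Iso hs hX ha) (ho ▸ hp) (ho ▸ hpi)
  rw [glue_Esp] at h1
  have h2 : Module.finrank F ((Esp a).map X.subtype) = Module.finrank F (Esp a) :=
    Submodule.finrank_map_subtype_eq _ _
  apply Submodule.eq_top_of_finrank_eq
  apply le_antisymm (Submodule.finrank_le _)
  omega

lemma min_commute (hB : B.Nondegenerate) (hs : B.IsSymm) (hπ : PiOK F π)
    (hks : ∀ s ∈ π, s ∣ Nat.card (Iso B) → k < s)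
    {H : Subgroup (V ≃ₗ[F] V)} (hHle : H ≤ Iso B) (hHp : IsPiGp π H)
    {g g' : V ≃ₗ[F] V} (hg : g ∈ H) (hg' : g' ∈ H) (h1 : Module.finrank F (Esp g) = k)
    (h2 : Module.finrank F (Esp g') = k) : Commute g g' := by
  set C : Submodule F V := Fsp g ⊓ Fsp g' with hC
  set M : Subgroup (V ≃ₗ[F] V) := H ⊓ fixingSubgroup (V ≃ₗ[F] V) (C : Set V) with hM
  have hMp : IsPiGp π M := hHp.mono (Subgroup.card_dvd_of_le inf_le_left)
  have d1 := finrank_Esp_add g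
  have d2 := finrank_Esp_add g'
  have d3 := Submodule.finrank_sup_add_finrank_inf_eq (Fsp g) (Fsp g')
  have d4 := Submodule.finrank_le (Fsp g ⊔ Fsp g')
  refine commute_of_small hB hs C (Nat.card M) M rfl (inf_le_left.trans hHle) (hπ.odd hMp)
    (hπ.ne_zero hMp) ?_ ?_ g ?_ g' ?_
  · rintro x ⟨_, hx⟩ v hv
    exact (mem_fixingSubgroup_iff _).1 hx v hv
  · intro s hsp hsd
    rw [← hC] at d3
    have := hks s (hMp s hsp hsd) (hsd.trans (Subgroup.card_dvd_of_le (inf_le_left.trans hHle)))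
    omega
  · exact ⟨hg, (mem_fixingSubgroup_iff _).2 (fun v hv => mem_Fsp.1 hv.1)⟩
  · exact ⟨hg', (mem_fixingSubgroup_iff _).2 (fun v hv => mem_Fsp.1 hv.2)⟩

lemma commute_Esp {g g' : V ≃ₗ[F] V} (h : Commute g g') : g ∈ stabS (Esp g') := by
  apply mem_stabS_of_le
  intro v hv
  obtain ⟨w, rfl⟩ := mem_Esp.1 hv
  have e : g (g' w) = g' (g w) := congrArg (fun f : V ≃ₗ[F] V => f w) h.eq
  rw [map_sub, e]
  exact sub_mem_Esp g' (g w)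

lemma block_compl (hB : B.Nondegenerate) (hπ : PiOK F π)
    {g : V ≃ₗ[F] V} (hg : g ∈ Iso B) (hgp : orderOf g ∈ π) :
    IsCompl (Esp g) (B.orthogonal (Esp g)) := by
  rw [orthogonal_Esp hB hg]
  exact isCompl_Esp_Fsp (pow_orderOf_eq_one g) (hπ _ hgp).2.2

lemma block_dichotomy (hB : B.Nondegenerate) (hs : B.IsSymm) (hπ : PiOK F π)
    (hk : ∀ g ∈ Iso B, (orderOf g).Prime → orderOf g ∈ π → k ≤ Module.finrank F (Esp g))
    {g g' : V ≃ₗ[F] V} (hg : g ∈ Iso B) (hg' : g' ∈ Iso B) (hgp : orderOf g ∈ π)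
    (hgp' : orderOf g' ∈ π) (hc : Commute g g') (h1 : Module.finrank F (Esp g) = k)
    (h2 : Module.finrank F (Esp g') = k) :
    Esp g = Esp g' ∨ Esp g' ≤ B.orthogonal (Esp g) := by
  have hst := commute_Esp hc
  have hX := block_compl hB hπ hg' hgp'
  set a := resHom (Esp g') ⟨g, hst⟩ with ha
  have haI : a ∈ Iso (B.restrict (Esp g')) := resHom_mem_Iso ⟨g, hst⟩ hg
  by_cases ha1 : a = 1
  · right
    rw [orthogonal_Esp hB hg]
    intro v hv
    rw [mem_Fsp]
    have := congrArg (fun f : (Esp g') ≃ₗ[F] (Esp g') => ((f ⟨v, hv⟩ : Esp g') : V)) ha1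
    exact this
  · left
    have hpow : a ^ orderOf g = 1 := by
      rw [ha, ← map_pow]
      have : (⟨g, hst⟩ : stabS (Esp g')) ^ orderOf g = 1 := by
        apply Subtype.ext
        exact pow_orderOf_eq_one g
      rw [this, map_one]
    haveI := Fact.mk (hπ _ hgp).1
    have hoa : orderOf a = orderOf g := orderOf_eq_prime hpow ha1
    have htop := minsupp hs hk hX h2 haI (hoa ▸ (hπ _ hgp).1) (hoa ▸ hgp)
    symm
    apply Submodule.eq_of_le_of_finrank_eq _ (by rw [h1, h2])
    intro v hv
    have : (⟨v, hv⟩ : Esp g') ∈ Esp a := by rw [htop]; trivial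
    obtain ⟨w, hw⟩ := mem_Esp.1 this
    rw [mem_Esp]
    exact ⟨w, congrArg Subtype.val hw⟩

end SizePrelim



/-! ### Size theorem -/

section SizeThm

lemma stab_smul {F V : Type*} [Field F] [AddCommGroup V] [Module F V] [FiniteDimensional F V]
    {g : V ≃ₗ[F] V} {X : Submodule F V} : g ∈ stabS X ↔ g • X = X := by
  constructor
  · intro h
    refine Submodule.eq_of_le_of_finrank_eq ?_ (LinearEquiv.finrank_map_eq g X)
    rintro _ ⟨v, hv, rfl⟩
    exact (h v).2 hv
  · intro h
    apply mem_stabS_of_le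
    intro v hv
    rw [← h]
    exact ⟨v, hv, rfl⟩

lemma card_le_prod {F V : Type*} [Field F] [Finite F] [AddCommGroup V] [Module F V]
    [FiniteDimensional F V] (S : Finset (Submodule F V)) (N H : Subgroup (V ≃ₗ[F] V)) (hNH : N ≤ H)
    (hN : ∀ X ∈ S, N ≤ stabS X) (W : Submodule F V) (hW : H ≤ stabS W) (hsup : S.sup id ⊔ W = ⊤) :
    Nat.card N ≤ (∏ X ∈ S, Nat.card (rest X N)) * Nat.card (rest W H) := by
  classical
  haveI : ∀ X : Submodule F V, Finite (X ≃ₗ[F] X) := fun X => finite_equiv F X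
  let f : N → (∀ X : S, rest X.1 N) × rest W H := fun g =>
    (fun X => ⟨resHom X.1 ⟨g.1, hN X.1 X.2 g.2⟩, mem_rest.2 ⟨g.1, g.2, hN X.1 X.2 g.2, rfl⟩⟩,
      ⟨resHom W ⟨g.1, hW (hNH g.2)⟩, mem_rest.2 ⟨g.1, hNH g.2, hW (hNH g.2), rfl⟩⟩)
  have hf : Function.Injective f := by
    rintro ⟨g, hg⟩ ⟨g', hg'⟩ h
    apply Subtype.ext
    have h1 : (⊤ : Submodule F V) ≤ LinearMap.eqLocus (g : V →ₗ[F] V) (g' : V →ₗ[F] V) := by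
      rw [← hsup]
      refine sup_le (Finset.sup_le ?_) ?_
      · intro X hX v hv
        have := congrFun (congrArg Prod.fst h) ⟨X, hX⟩
        have := congrArg Subtype.val this
        have := congrArg (fun e : X ≃ₗ[F] X => ((e ⟨v, hv⟩ : X) : V)) this
        exact this
      · intro v hv
        have := congrArg Subtype.val (congrArg Prod.snd h)
        have := congrArg (fun e : W ≃ₗ[F] W => ((e ⟨v, hv⟩ : W) : V)) this
        exact this
    ext v
    exact h1 (Submodule.mem_top : v ∈ ⊤)
  have h2 := Nat.card_le_card_of_injective f hf
  rw [Nat.card_prod, Nat.card_pi] at h2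
  refine h2.trans (le_of_eq ?_)
  congr 1
  exact Finset.prod_coe_sort S (fun X => Nat.card (rest X N))

lemma block_bound {F V : Type*} [Field F] [Fintype F] [AddCommGroup V] [Module F V]
    [FiniteDimensional F V] {B : LinearMap.BilinForm F V} {π : Set ℕ} {k : ℕ}
    (hq : Odd (Fintype.card F)) (hs : B.IsSymm) (hπ : PiOK F π)
    (hk : ∀ g ∈ Iso B, (orderOf g).Prime → orderOf g ∈ π → k ≤ Module.finrank F (Esp g))
    {X : Submodule F V} (hX : IsCompl X (B.orthogonal X)) (hXk : Module.finrank F X = k)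
    {L : Subgroup (X ≃ₗ[F] X)} (hL : L ≤ Iso (B.restrict X)) (hLp : IsPiGp π L)
    (hks : ∀ s ∈ π, s ∣ Nat.card L → k < s) (hne : ∃ a ∈ L, a ≠ 1) :
    1 ≤ k / 2 ∧ 3 ≤ Nat.card L ∧ Odd (Nat.card L) ∧
      2 * Nat.card L ≤ Fintype.card F ^ (k / 2) + 1 := by
  haveI : Finite (X ≃ₗ[F] X) := finite_equiv F X
  have hodd := hπ.odd hLp
  have hB' := restrict_nondeg hs hX.disjoint
  have hs' := restrict_symm hs X
  obtain ⟨a, haL, ha1⟩ := hne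
  haveI : Nontrivial X := by
    by_contra hcon
    rw [not_nontrivial_iff_subsingleton] at hcon
    exact ha1 (by ext x; exact congrArg _ (Subsingleton.elim _ _))
  have hcomm : ∀ a ∈ L, ∀ b ∈ L, Commute a b := by
    refine commute_of_small hB' hs' ⊥ (Nat.card L) L rfl hL hodd (hπ.ne_zero hLp) ?_ ?_
    · intro g _ v hv
      rw [Submodule.mem_bot] at hv
      rw [hv, map_zero]
    · intro s hsp hsd
      have := hks s (hLp s hsp hsd) hsd
      omega
  have hfree : ∀ g ∈ L, g ≠ 1 → ∀ v, g v = v → v = 0 := by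
    intro g hg hg1 v hv
    have hn1 : orderOf g ≠ 1 := by rwa [Ne, orderOf_eq_one_iff]
    obtain ⟨r, hr, hrd⟩ := Nat.exists_prime_and_dvd hn1
    have hn0 : orderOf g ≠ 0 := (orderOf_pos g).ne'
    have hrc : r ∣ Nat.card L := hrd.trans (Subgroup.orderOf_dvd_natCard L hg)
    have hrπ := hLp r hr hrc
    have hb := orderOf_pow_orderOf_div hn0 hrd
    have htop := minsupp hs hk hX hXk (a := g ^ (orderOf g / r)) (hL (L.pow_mem hg _))
      (by rw [hb]; exact hr) (by rw [hb]; exact hrπ)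
    have hdis := disjoint_Esp_Fsp (g := g ^ (orderOf g / r)) (N := r)
      (by have h0 := pow_orderOf_eq_one (g ^ (orderOf g / r)); rw [hb] at h0; exact h0) (hπ r hrπ).2.2
    rw [htop] at hdis
    refine (Submodule.disjoint_def.1 hdis) v trivial ?_
    rw [mem_Fsp]
    generalize orderOf g / r = m
    induction m with
    | zero => rfl
    | succ m ih =>
      rw [pow_succ']
      show g ((g ^ m) v) = v
      rw [ih, hv]
  have hb := LT_bound hq hB' hs' L hL hodd hcomm hfree
  rw [hXk] at hb
  have h3 : 3 ≤ Nat.card L := by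
    have h1 : 1 < Nat.card L := by
      haveI : Nontrivial L := ⟨⟨⟨a, haL⟩, 1, fun e => ha1 (congrArg Subtype.val e)⟩⟩
      exact Finite.one_lt_card
    obtain ⟨m, hm⟩ := hodd
    omega
  refine ⟨?_, h3, hodd, hb⟩
  by_contra hcon
  have : k / 2 = 0 := by omega
  rw [this, pow_zero] at hb
  omega

universe u v

theorem size_thm {F : Type u} [Field F] [Fintype F] (hq : Odd (Fintype.card F)) {π : Set ℕ}
    (hπ : PiOK F π) (A Y : ℝ) (M0 : ℕ) (hA0 : 0 ≤ A) (hA : ∀ a ≤ M0, ub a ^ 2 ≤ A ^ a)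
    (hY1 : 1 ≤ Y)
    (hT : ∀ j T : ℕ, 1 ≤ j → 3 ≤ T → Odd T → 2 * T ≤ Fintype.card F ^ j + 1 →
      A * (T : ℝ) ^ 2 ≤ Y ^ j) :
    ∀ (d : ℕ) (V : Type v) [AddCommGroup V] [Module F V] [FiniteDimensional F V]
      (B : LinearMap.BilinForm F V), B.Nondegenerate → B.IsSymm → Module.finrank F V = d →
      d / 2 ≤ M0 → ∀ H : Subgroup (V ≃ₗ[F] V), IsHallSubgroupIn π (Iso B) H →
      (Nat.card H : ℝ) ^ 2 ≤ Y ^ (d / 2) := by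
  classical
  intro d
  induction d using Nat.strong_induction_on with
  | _ d ih =>
  intro V _ _ _ B hB hs hd hdM H hH
  haveI : Finite V := Module.finite_of_finite F
  haveI : Finite (V ≃ₗ[F] V) := finite_equiv F V
  have h2F : (2 : F) ≠ 0 := by
    apply Ring.two_ne_zero
    intro h
    rw [FiniteField.even_card_iff_char_two] at h
    obtain ⟨m, hm⟩ := hq
    omega
  have hHall := hH
  obtain ⟨hHle, hHp, hidx⟩ := hH
  by_cases hex : ∃ k, ∃ g ∈ Iso B, (orderOf g).Prime ∧ orderOf g ∈ π ∧ Module.finrank F (Esp g) = k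
  swap
  · have h1 : Nat.card H = 1 := by
      by_contra hne
      obtain ⟨r, hr, hrd⟩ := Nat.exists_prime_and_dvd hne
      haveI := Fact.mk hr
      obtain ⟨g, hg⟩ := exists_prime_orderOf_dvd_card' (G := H) r hrd
      rw [← Subgroup.orderOf_coe] at hg
      exact hex ⟨_, g.1, hHle g.2, hg ▸ hr, hg ▸ hHp r hr hrd, rfl⟩
    rw [h1]
    simpa using one_le_pow₀ hY1
  obtain ⟨g0, hg0I, hg0p, hg0π, hg0k⟩ := Nat.find_spec hex
  have hmin : ∀ g ∈ Iso B, (orderOf g).Prime → orderOf g ∈ π →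
      Nat.find hex ≤ Module.finrank F (Esp g) :=
    fun g h1 h2 h3 => Nat.find_min' hex ⟨g, h1, h2, h3, rfl⟩
  generalize Nat.find hex = k at hg0k hmin
  clear hex
  have hks : ∀ s ∈ π, s ∣ Nat.card (Iso B) → k < s := by
    intro s hsπ hsd
    haveI := Fact.mk (hπ s hsπ).1
    obtain ⟨g, hg⟩ := exists_prime_orderOf_dvd_card' (G := Iso B) s hsd
    rw [← Subgroup.orderOf_coe] at hg
    obtain ⟨g1, hg1, ho, hf⟩ := small_piece hB hs h2F g.2 (hπ s hsπ).1 hg (hπ s hsπ).2.2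
    have h1 := hmin g1 hg1 (ho ▸ (hπ s hsπ).1) (ho ▸ hsπ)
    have h2 := (hπ s hsπ).1.two_le
    omega
  -- an element of minimal support in `H`
  have hM : ∃ g ∈ H, orderOf g ∈ π ∧ Module.finrank F (Esp g) = k := by
    haveI := Fact.mk hg0p
    obtain ⟨y, hy⟩ := hall_conj (H.subgroupOf (Iso B)) (orderOf g0) (hidx _ hg0π)
      (Subgroup.zpowers (⟨g0, hg0I⟩ : Iso B)) (IsPGroup.of_card (n := 1) (by
        rw [Nat.card_zpowers, pow_one, ← Subgroup.orderOf_coe]))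
    have h1 := hy _ (Subgroup.mem_zpowers _)
    rw [Subgroup.mem_subgroupOf] at h1
    have h2 : ((y⁻¹ * ⟨g0, hg0I⟩ * y : Iso B) : V ≃ₗ[F] V) = (y : V ≃ₗ[F] V)⁻¹ * g0 * ((y : V ≃ₗ[F] V)⁻¹)⁻¹ := by
      rw [inv_inv]; rfl
    rw [h2] at h1
    refine ⟨_, h1, ?_, ?_⟩
    · have : orderOf ((y : V ≃ₗ[F] V)⁻¹ * g0 * ((y : V ≃ₗ[F] V)⁻¹)⁻¹) = orderOf g0 :=
        orderOf_injective (MulAut.conj (y : V ≃ₗ[F] V)⁻¹).toMonoidHom (MulAut.conj _).injective g0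
      rw [this]; exact hg0π
    · rw [finrank_conj_Esp]; exact hg0k
  have hcomm : ∀ g ∈ H, ∀ g' ∈ H, Module.finrank F (Esp g) = k → Module.finrank F (Esp g') = k →
      Commute g g' := fun g hg g' hg' h1 h2 => min_commute hB hs hπ hks hHle hHp hg hg' h1 h2
  -- blocks
  set S : Finset (Submodule F V) := (Set.toFinite {X : Submodule F V | ∃ g ∈ H, orderOf g ∈ π ∧
    Module.finrank F (Esp g) = k ∧ Esp g = X}).toFinset with hS
  have memS : ∀ X, X ∈ S ↔ ∃ g ∈ H, orderOf g ∈ π ∧ Module.finrank F (Esp g) = k ∧ Esp g = X := by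
    intro X
    rw [hS, Set.Finite.mem_toFinset, Set.mem_ofPred_eq]
  have hScompl : ∀ X ∈ S, IsCompl X (B.orthogonal X) := by
    intro X hX
    obtain ⟨g, hg, hgπ, _, rfl⟩ := (memS X).1 hX
    exact block_compl hB hπ (hHle hg) hgπ
  have hSk : ∀ X ∈ S, Module.finrank F X = k := by
    intro X hX
    obtain ⟨g, hg, hgπ, hgk, rfl⟩ := (memS X).1 hX
    exact hgk
  have hSorth : ∀ X ∈ S, ∀ Y ∈ S, X ≠ Y → Y ≤ B.orthogonal X := by
    intro X hX Y hY hne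
    obtain ⟨g, hg, hgπ, hgk, rfl⟩ := (memS X).1 hX
    obtain ⟨g', hg', hgπ', hgk', rfl⟩ := (memS Y).1 hY
    rcases block_dichotomy hB hs hπ hmin (hHle hg) (hHle hg') hgπ hgπ'
      (hcomm g hg g' hg' hgk hgk') hgk hgk' with h | h
    · exact absurd h hne
    · exact h
  have hSH : ∀ h ∈ H, ∀ X ∈ S, h • X ∈ S := by
    intro h hh X hX
    obtain ⟨g, hg, hgπ, hgk, rfl⟩ := (memS X).1 hX
    rw [memS]
    refine ⟨h * g * h⁻¹, H.mul_mem (H.mul_mem hh hg) (H.inv_mem hh), ?_, ?_, ?_⟩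
    · have : orderOf (h * g * h⁻¹) = orderOf g :=
        orderOf_injective (MulAut.conj h).toMonoidHom (MulAut.conj _).injective g
      rw [this]; exact hgπ
    · rw [finrank_conj_Esp]; exact hgk
    · exact conj_Esp g h
  have hScard : 1 ≤ S.card := by
    obtain ⟨g, hg, h1, h2⟩ := hM
    exact Finset.card_pos.2 ⟨Esp g, (memS _).2 ⟨g, hg, h1, h2, rfl⟩⟩
  set N : Subgroup (V ≃ₗ[F] V) := H ⊓ fixingSubgroup (V ≃ₗ[F] V) (S : Set (Submodule F V)) with hNdef
  have hperm := perm_bound S.card H (hπ.odd hHp) S rfl hSH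
  rw [← hNdef] at hperm
  have hNH : N ≤ H := inf_le_left
  have hNS : ∀ X ∈ S, N ≤ stabS X := by
    intro X hX g hg
    rw [stab_smul]
    exact (mem_fixingSubgroup_iff _).1 hg.2 X hX
  have hNp : IsPiGp π N := IsPiGp.mono hHp (Subgroup.card_dvd_of_le hNH)
  obtain ⟨hUd, hUk⟩ := orth_sup (k := k) hs S (fun X hX => (hScompl X hX).disjoint) hSk hSorth
  set U : Submodule F V := S.sup id with hU
  have hUc := isCompl_of_disjoint hB hs hUd
  have hrefl : B.IsRefl := hs.isRefl
  have hUU : B.orthogonal (B.orthogonal U) = U :=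
    LinearMap.BilinForm.orthogonal_orthogonal hB hrefl U
  have hWc : IsCompl (B.orthogonal U) (B.orthogonal (B.orthogonal U)) := by
    rw [hUU]; exact hUc.symm
  have hHU : H ≤ stabS U := by
    intro h hh
    apply mem_stabS_of_le
    have h1 : U ≤ U.comap (h : V →ₗ[F] V) := by
      refine Finset.sup_le ?_
      intro X hX v hv
      have h2 : h • X ≤ U := Finset.le_sup (f := id) (hSH h hh X hX)
      exact h2 ⟨v, hv, rfl⟩
    exact fun v hv => h1 hv
  have hHW : H ≤ stabS (B.orthogonal U) := fun h hh => stab_orthogonal (hHle hh) (hHU hh)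
  have hblock : ∀ X ∈ S, 1 ≤ k / 2 ∧ 3 ≤ Nat.card (rest X N) ∧ Odd (Nat.card (rest X N)) ∧
      2 * Nat.card (rest X N) ≤ Fintype.card F ^ (k / 2) + 1 := by
    intro X hX
    refine block_bound hq hs hπ hmin (hScompl X hX) (hSk X hX) (rest_le_Iso (hNH.trans hHle))
      (fun r hr hrd => hNp r hr (hrd.trans (card_rest_dvd X N))) ?_ ?_
    · intro s hsπ hsd
      exact hks s hsπ ((hsd.trans (card_rest_dvd X N)).trans
        (Subgroup.card_dvd_of_le (hNH.trans hHle)))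
    · obtain ⟨g, hg, hgπ, hgk, rfl⟩ := (memS X).1 hX
      have hgN : g ∈ N := by
        refine ⟨hg, (mem_fixingSubgroup_iff _).2 ?_⟩
        intro Y hY
        obtain ⟨g', hg', hgπ', hgk', rfl⟩ := (memS Y).1 hY
        exact stab_smul.1 (commute_Esp (hcomm g hg g' hg' hgk hgk'))
      refine ⟨resHom (Esp g) ⟨g, hNS _ hX hgN⟩, mem_rest.2 ⟨g, hgN, hNS _ hX hgN, rfl⟩, ?_⟩
      intro h1
      have hdis := disjoint_Esp_Fsp (pow_orderOf_eq_one g) (hπ _ hgπ).2.2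
      have hle : Esp g ≤ Fsp g := by
        intro v hv
        rw [mem_Fsp]
        exact congrArg (fun e : (Esp g) ≃ₗ[F] (Esp g) => ((e ⟨v, hv⟩ : Esp g) : V)) h1
      have : Esp g = ⊥ := by
        have := hdis.eq_bot
        rwa [inf_eq_left.2 hle] at this
      have h3 := eq_one_of_Esp_bot this
      rw [h3, orderOf_one] at hgπ
      exact Nat.not_prime_one (hπ 1 hgπ).1
  have hk1 : 1 ≤ k / 2 := by
    obtain ⟨X, hX⟩ := Finset.card_pos.1 hScard
    exact (hblock X hX).1
  have hprod := card_le_prod S N H hNH hNS (B.orthogonal U) hHW (by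
    rw [← hU]; exact hUc.sup_eq_top)
  have hWrank : Module.finrank F (B.orthogonal U) = d - S.card * k := by
    rw [LinearMap.BilinForm.finrank_orthogonal hB, hd, hUk]
  have hUle : S.card * k ≤ d := by
    rw [← hUk, ← hd]; exact Submodule.finrank_le _
  have hak : S.card * (k / 2) * 2 ≤ S.card * k := by
    rw [mul_assoc]
    exact Nat.mul_le_mul_left _ (Nat.div_mul_le_self k 2)
  have hak2 : S.card ≤ S.card * (k / 2) := Nat.le_mul_of_pos_right _ hk1
  have hIH := ih (d - S.card * k) (by omega) (B.orthogonal U) (B.restrict (B.orthogonal U))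
    (restrict_nondeg hs hWc.disjoint) (restrict_symm hs _) hWrank (by omega)
    (rest (B.orthogonal U) H) (rest_hall hs hHall hWc hHW)
  have hub := hA S.card (by omega)
  have hP : A ^ S.card * ∏ X ∈ S, ((Nat.card (rest X N) : ℝ)) ^ 2 ≤ Y ^ (S.card * (k / 2)) := by
    rw [← Finset.prod_const, ← Finset.prod_mul_distrib, mul_comm S.card, pow_mul, ← Finset.prod_const]
    refine Finset.prod_le_prod (fun X _ => mul_nonneg hA0 (sq_nonneg _)) ?_
    intro X hX
    obtain ⟨e1, e2, e3, e4⟩ := hblock X hX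
    exact hT _ _ e1 e2 e3 e4
  have hprod' : (Nat.card N : ℝ) ≤ (∏ X ∈ S, (Nat.card (rest X N) : ℝ)) *
      (Nat.card (rest (B.orthogonal U) H) : ℝ) := by exact_mod_cast hprod
  have hub0 := (ub_pos S.card).le
  have hY0 : (0 : ℝ) ≤ Y := by linarith
  calc (Nat.card H : ℝ) ^ 2 ≤ (ub S.card * ((∏ X ∈ S, (Nat.card (rest X N) : ℝ)) *
      (Nat.card (rest (B.orthogonal U) H) : ℝ))) ^ 2 := by
        apply pow_le_pow_left₀ (by positivity)
        exact hperm.trans (mul_le_mul_of_nonneg_left hprod' hub0)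
    _ = ub S.card ^ 2 * (∏ X ∈ S, (Nat.card (rest X N) : ℝ) ^ 2) *
      (Nat.card (rest (B.orthogonal U) H) : ℝ) ^ 2 := by
        rw [Finset.prod_pow]; ring
    _ ≤ A ^ S.card * (∏ X ∈ S, (Nat.card (rest X N) : ℝ) ^ 2) *
      (Nat.card (rest (B.orthogonal U) H) : ℝ) ^ 2 := by
        gcongr
    _ ≤ Y ^ (S.card * (k / 2)) * Y ^ ((d - S.card * k) / 2) := by
        gcongr
    _ = Y ^ (S.card * (k / 2) + (d - S.card * k) / 2) := by rw [pow_add]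
    _ ≤ Y ^ (d / 2) := pow_le_pow_right₀ hY1 (by omega)

end SizeThm



/-! ### Conjugacy classes are large -/

section ClassBound
variable {F V : Type*} [Field F] [AddCommGroup V] [Module F V]

noncomputable def SOgp (B : LinearMap.BilinForm F V) : Subgroup (V ≃ₗ[F] V) := Iso B ⊓ LinearEquiv.det.ker

/-- reflection in a nonisotropic vector -/
lemma exists_refl [FiniteDimensional F V] {B : LinearMap.BilinForm F V} (hs : B.IsSymm) {v : V}
    (hv : B v v ≠ 0) : ∃ r ∈ Iso B, (LinearEquiv.det r : F) = -1 ∧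
      ∀ z, r z = z - (2 / B v v * B v z) • v := by
  have h : ((2 / B v v) • B v : Module.Dual F V) v = 2 := by
    simp [hv]
  have hap : ∀ z, Module.reflection h z = z - (2 / B v v * B v z) • v := by
    intro z
    rw [Module.reflection_apply]
    simp
  refine ⟨Module.reflection h, ?_, ?_, hap⟩
  · intro a b
    rw [hap, hap]
    simp only [map_sub, map_smul, LinearMap.sub_apply, LinearMap.smul_apply, smul_eq_mul]
    rw [hs.eq a v]
    field_simp
    ring
  · have e : ((Module.reflection h : V ≃ₗ[F] V) : V →ₗ[F] V) =
        LinearMap.transvection (-((2 / B v v) • B v : Module.Dual F V)) v := by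
      ext z
      rw [LinearMap.transvection.apply]
      show Module.reflection h z = _
      rw [hap]
      simp [sub_eq_add_neg]
    rw [LinearEquiv.coe_det, e, LinearMap.transvection.det, LinearMap.neg_apply, h]
    ring

lemma disj_span {B : LinearMap.BilinForm F V} {v : V} (hv : B v v ≠ 0) :
    Disjoint (F ∙ v) (B.orthogonal (F ∙ v)) := by
  rw [Submodule.disjoint_def]
  intro z hz hz2
  obtain ⟨c, rfl⟩ := Submodule.mem_span_singleton.1 hz
  have := LinearMap.BilinForm.mem_orthogonal_iff.1 hz2 v (Submodule.mem_span_singleton_self v)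
  change B v (c • v) = 0 at this
  rw [map_smul, smul_eq_mul, mul_eq_zero] at this
  rcases this with h | h
  · rw [h, zero_smul]
  · exact absurd h hv

lemma disj_sup_span {B : LinearMap.BilinForm F V} (hs : B.IsSymm) {X : Submodule F V}
    (hX : Disjoint X (B.orthogonal X)) {v : V} (hv : B v v ≠ 0) (hvX : v ∈ B.orthogonal X) :
    Disjoint (X ⊔ (F ∙ v)) (B.orthogonal (X ⊔ (F ∙ v))) := by
  rw [Submodule.disjoint_def]
  intro z hz hz2
  obtain ⟨x, hx, u, hu, rfl⟩ := Submodule.mem_sup.1 hz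
  obtain ⟨c, rfl⟩ := Submodule.mem_span_singleton.1 hu
  rw [LinearMap.BilinForm.mem_orthogonal_iff] at hz2 hvX
  have hx0 : x = 0 := by
    refine (Submodule.disjoint_def.1 hX) x hx ?_
    rw [LinearMap.BilinForm.mem_orthogonal_iff]
    intro y hy
    have e1 := hz2 y (Submodule.mem_sup_left hy)
    have e2 : B y v = 0 := hvX y hy
    change B y (x + c • v) = 0 at e1
    rw [map_add, map_smul, e2, smul_zero, add_zero] at e1
    exact e1
  have e1 := hz2 v (Submodule.mem_sup_right (Submodule.mem_span_singleton_self v))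
  change B v (x + c • v) = 0 at e1
  rw [hx0, zero_add, map_smul, smul_eq_mul, mul_eq_zero] at e1
  rcases e1 with h | h
  · rw [h, hx0, zero_smul, zero_add]
  · exact absurd h hv

variable [FiniteDimensional F V] {B : LinearMap.BilinForm F V}

lemma exists_aniso_orth (hB : B.Nondegenerate) (hs : B.IsSymm) (h2 : (2 : F) ≠ 0)
    {X : Submodule F V} (hX : Disjoint X (B.orthogonal X))
    (hlt : Module.finrank F X < Module.finrank F V) :
    ∃ v ∈ B.orthogonal X, B v v ≠ 0 := by
  have hUU : B.orthogonal (B.orthogonal X) = X :=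
    LinearMap.BilinForm.orthogonal_orthogonal hB hs.isRefl X
  have hr := LinearMap.BilinForm.finrank_orthogonal hB X
  have hpos : 0 < Module.finrank F (B.orthogonal X) := by omega
  haveI := Module.finrank_pos_iff.1 hpos
  obtain ⟨v, hv⟩ := exists_anisotropic (B := B.restrict (B.orthogonal X))
    (restrict_nondeg hs (by rw [hUU]; exact hX.symm)) (restrict_symm hs _) h2 (exists_ne 0)
  exact ⟨v, v.2, hv⟩

lemma finrank_sup_span_le (X : Submodule F V) (v : V) :
    Module.finrank F (X ⊔ (F ∙ v) : Submodule F V) ≤ Module.finrank F X + 1 := by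
  have h1 := Submodule.finrank_sup_add_finrank_inf_eq X (F ∙ v)
  have h2 := finrank_span_le_card (R := F) ({v} : Set V)
  simp at h2
  omega

lemma finrank_span1_le (v : V) : Module.finrank F (F ∙ v) ≤ 1 := by
  have h2 := finrank_span_le_card (R := F) ({v} : Set V)
  simpa using h2

/-- Witt for two vectors of the same norm orthogonal to `u`, with determinant one. -/
lemma exists_SO (hB : B.Nondegenerate) (hs : B.IsSymm) (h2 : (2 : F) ≠ 0)
    (hn : 3 ≤ Module.finrank F V) {u a w : V} (hu : B u u ≠ 0) (hua : B u a = 0) (huw : B u w = 0)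
    (ha : B a a ≠ 0) (haw : B w w = B a a) : ∃ x ∈ SOgp B, x u = u ∧ x a = w := by
  have hau : B a u = 0 := by rw [hs.eq, hua]
  have hwu : B w u = 0 := by rw [hs.eq, huw]
  have hwa : B w a = B a w := hs.eq w a
  by_cases h : B (a - w) (a - w) = 0
  · -- use `a + w`
    have h4 : B (a + w) (a + w) ≠ 0 := by
      intro h5
      apply ha
      have h6 : (2 * 2) * B a a = 0 := by
        simp only [map_add, map_sub, LinearMap.add_apply, LinearMap.sub_apply] at h h5
        linear_combination h + h5 - 2 * haw
      simpa [h2] using h6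
    obtain ⟨r1, hr1, hd1, e1⟩ := exists_refl hs h4
    obtain ⟨r2, hr2, hd2, e2⟩ := exists_refl hs (v := w) (by rw [haw]; exact ha)
    refine ⟨r2 * r1, ⟨(Iso B).mul_mem hr2 hr1, ?_⟩, ?_, ?_⟩
    · show r2 * r1 ∈ LinearEquiv.det.ker
      rw [MonoidHom.mem_ker, map_mul]
      ext
      rw [Units.val_mul, hd1, hd2]
      simp
    · show r2 (r1 u) = u
      have h8 : B (a + w) u = 0 := by rw [map_add, LinearMap.add_apply, hau, hwu, add_zero]
      have : r1 u = u := by rw [e1, h8]; simp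
      rw [this, e2, hwu]; simp
    · show r2 (r1 a) = w
      have h7 : B (a + w) (a + w) = 2 * B (a + w) a := by
        simp only [map_add, LinearMap.add_apply]
        rw [hwa, haw]; ring
      have : r1 a = -w := by
        rw [e1]
        have : 2 / B (a + w) (a + w) * B (a + w) a = 1 := by
          rw [div_mul_eq_mul_div, ← h7, div_self h4]
        rw [this, one_smul]; abel
      rw [this, e2, map_neg]
      have : 2 / B w w * -B w w = -2 := by
        have : B w w ≠ 0 := by rw [haw]; exact ha
        field_simp
      rw [this]
      module
  · have hX1 := disj_sup_span hs (disj_span hu) ha (by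
      rw [LinearMap.BilinForm.mem_orthogonal_iff]
      intro y hy
      obtain ⟨c, rfl⟩ := Submodule.mem_span_singleton.1 hy
      show B (c • u) a = 0
      rw [map_smul, LinearMap.smul_apply, hua, smul_zero])
    have hf1 := finrank_sup_span_le (F := F) (F ∙ u) a
    have hf2 := finrank_span1_le (F := F) u
    obtain ⟨v, hvX, hv⟩ := exists_aniso_orth hB hs h2 hX1 (by omega)
    rw [LinearMap.BilinForm.mem_orthogonal_iff] at hvX
    have hvu : B v u = 0 := by
      rw [hs.eq]; exact hvX u (Submodule.mem_sup_left (Submodule.mem_span_singleton_self u))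
    have hva : B v a = 0 := by
      rw [hs.eq]; exact hvX a (Submodule.mem_sup_right (Submodule.mem_span_singleton_self a))
    obtain ⟨r1, hr1, hd1, e1⟩ := exists_refl hs hv
    obtain ⟨r2, hr2, hd2, e2⟩ := exists_refl hs h
    refine ⟨r2 * r1, ⟨(Iso B).mul_mem hr2 hr1, ?_⟩, ?_, ?_⟩
    · show r2 * r1 ∈ LinearEquiv.det.ker
      rw [MonoidHom.mem_ker, map_mul]
      ext
      rw [Units.val_mul, hd1, hd2]
      simp
    · show r2 (r1 u) = u
      have : r1 u = u := by rw [e1, hvu]; simp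
      have h8 : B (a - w) u = 0 := by rw [map_sub, LinearMap.sub_apply, hau, hwu, sub_zero]
      rw [this, e2, h8]; simp
    · show r2 (r1 a) = w
      have : r1 a = a := by rw [e1, hva]; simp
      rw [this, e2]
      have h7 : B (a - w) (a - w) = 2 * B (a - w) a := by
        simp only [map_sub, LinearMap.sub_apply]
        rw [hwa, haw]; ring
      have : 2 / B (a - w) (a - w) * B (a - w) a = 1 := by
        rw [div_mul_eq_mul_div, ← h7, div_self h]
      rw [this, one_smul]; abel

lemma exists_isotropic [Fintype F] (hB : B.Nondegenerate) (hs : B.IsSymm) (h2 : (2 : F) ≠ 0)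
    (hq : Odd (Fintype.card F)) (hn : 4 ≤ Module.finrank F V) {u : V} (hu : B u u ≠ 0) :
    ∃ e, e ≠ 0 ∧ B u e = 0 ∧ B e e = 0 := by
  have X0 := disj_span hu
  have f0 := finrank_span1_le (F := F) u
  obtain ⟨v1, hv1, n1⟩ := exists_aniso_orth hB hs h2 X0 (by omega)
  have X1 := disj_sup_span hs X0 n1 hv1
  have f1 := finrank_sup_span_le (F := F) (F ∙ u) v1
  obtain ⟨v2, hv2, n2⟩ := exists_aniso_orth hB hs h2 X1 (by omega)
  have X2 := disj_sup_span hs X1 n2 hv2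
  have f2 := finrank_sup_span_le (F := F) ((F ∙ u) ⊔ (F ∙ v1)) v2
  obtain ⟨v3, hv3, n3⟩ := exists_aniso_orth hB hs h2 X2 (by omega)
  rw [LinearMap.BilinForm.mem_orthogonal_iff] at hv1 hv2 hv3
  have u1 : B u v1 = 0 := hv1 u (Submodule.mem_span_singleton_self u)
  have u2 : B u v2 = 0 := hv2 u (Submodule.mem_sup_left (Submodule.mem_span_singleton_self u))
  have u3 : B u v3 = 0 := hv3 u (Submodule.mem_sup_left (Submodule.mem_sup_left (Submodule.mem_span_singleton_self u)))
  have v12 : B v1 v2 = 0 := hv2 v1 (Submodule.mem_sup_right (Submodule.mem_span_singleton_self v1))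
  have v13 : B v1 v3 = 0 := hv3 v1 (Submodule.mem_sup_left (Submodule.mem_sup_right (Submodule.mem_span_singleton_self v1)))
  have v23 : B v2 v3 = 0 := hv3 v2 (Submodule.mem_sup_right (Submodule.mem_span_singleton_self v2))
  have v21 : B v2 v1 = 0 := by rw [hs.eq, v12]
  have v31 : B v3 v1 = 0 := by rw [hs.eq, v13]
  have v32 : B v3 v2 = 0 := by rw [hs.eq, v23]
  obtain ⟨x, y, hxy⟩ := FiniteField.exists_root_sum_quadratic
    (f := Polynomial.C (B v1 v1) * Polynomial.X ^ 2 + Polynomial.C 0 * Polynomial.X + Polynomial.C 0)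
    (g := Polynomial.C (B v2 v2) * Polynomial.X ^ 2 + Polynomial.C 0 * Polynomial.X + Polynomial.C (B v3 v3))
    (Polynomial.degree_quadratic n1) (Polynomial.degree_quadratic n2) (Nat.odd_iff.1 hq)
  simp only [Polynomial.eval_add, Polynomial.eval_mul, Polynomial.eval_C, Polynomial.eval_pow,
    Polynomial.eval_X] at hxy
  refine ⟨x • v1 + y • v2 + v3, ?_, ?_, ?_⟩
  · intro h0
    apply n3
    have : B v3 (x • v1 + y • v2 + v3) = 0 := by rw [h0, map_zero]
    simpa [v31, v32] using this
  · simp [u1, u2, u3]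
  · simp only [map_add, map_smul, LinearMap.add_apply, LinearMap.smul_apply, smul_eq_mul, v12, v13,
      v21, v23, v31, v32]
    linear_combination hxy

lemma count_norm [Fintype F] (hB : B.Nondegenerate) (hs : B.IsSymm) (h2 : (2 : F) ≠ 0)
    (hq : Odd (Fintype.card F)) (hn : 4 ≤ Module.finrank F V) {u : V} (hu : B u u ≠ 0) (c : F) :
    (Fintype.card F - 1) * Fintype.card F ^ (Module.finrank F V - 3) ≤
      {w : V | B u w = 0 ∧ B w w = c}.ncard := by
  haveI : Finite V := Module.finite_of_finite F
  obtain ⟨e, he0, hue, hee⟩ := exists_isotropic hB hs h2 hq hn hu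
  set E : Submodule F V := B.orthogonal (F ∙ u) with hE
  set E' : Submodule F V := E ⊓ LinearMap.ker (B e) with hE'
  have memE : ∀ w, w ∈ E ↔ B u w = 0 := by
    intro w
    rw [hE, LinearMap.BilinForm.mem_orthogonal_iff]
    constructor
    · exact fun h => h u (Submodule.mem_span_singleton_self u)
    · intro h y hy
      obtain ⟨c, rfl⟩ := Submodule.mem_span_singleton.1 hy
      show B (c • u) w = 0
      rw [map_smul, LinearMap.smul_apply, h, smul_zero]
  have hu0 : u ≠ 0 := by rintro rfl; simp at hu
  have fE : Module.finrank F E = Module.finrank F V - 1 := by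
    rw [hE, LinearMap.BilinForm.finrank_orthogonal hB, finrank_span_singleton hu0]
  have hlt : E' < E := by
    refine lt_of_le_of_ne inf_le_left ?_
    intro heq
    apply he0
    apply hB.1
    intro w
    set w' := w - (B u w / B u u) • u with hw'
    have h1 : w' ∈ E' := by
      rw [heq, memE, hw', map_sub, map_smul, smul_eq_mul, div_mul_cancel₀ _ hu, sub_self]
    have h3 : B e w' = 0 := h1.2
    rw [hw', map_sub, map_smul, hs.eq e u, hue, smul_zero, sub_zero] at h3
    exact h3
  have fE' : Module.finrank F E' ≤ Module.finrank F V - 2 := by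
    have := Submodule.finrank_lt_finrank_of_lt hlt
    omega
  set q := Fintype.card F with hqd
  have hq0 : 0 < q := Fintype.card_pos
  have cE : (E : Set V).ncard = q ^ (Module.finrank F V - 1) := by
    have := Module.natCard_eq_pow_finrank (K := F) (V := E)
    rw [fE, Nat.card_eq_fintype_card (α := F)] at this
    exact this
  have cE' : (E' : Set V).ncard ≤ q ^ (Module.finrank F V - 2) := by
    have := Module.natCard_eq_pow_finrank (K := F) (V := E')
    rw [Nat.card_eq_fintype_card (α := F)] at this
    refine (le_of_eq this).trans (Nat.pow_le_pow_right hq0 fE')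
  have hdiff : ((E : Set V) \ E').ncard + (E' : Set V).ncard = (E : Set V).ncard :=
    Set.ncard_diff_add_ncard_of_subset hlt.le
  set W : Set V := {w : V | B u w = 0 ∧ B w w = c} with hW
  let t : V → F := fun w => (c - B w w) / (2 * B e w)
  have hmaps : ∀ w ∈ ((E : Set V) \ E'), (w + t w • e, t w) ∈ W ×ˢ (Set.univ : Set F) := by
    rintro w ⟨hw1, hw2⟩
    have hew : B e w ≠ 0 := fun h => hw2 ⟨hw1, h⟩
    have hw1' : B u w = 0 := (memE w).1 hw1
    refine ⟨⟨?_, ?_⟩, trivial⟩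
    · show B u (w + t w • e) = 0
      rw [map_add, map_smul, hw1', hue, smul_zero, add_zero]
    · show B (w + t w • e) (w + t w • e) = c
      simp only [map_add, map_smul, LinearMap.add_apply, LinearMap.smul_apply, smul_eq_mul, hee]
      rw [hs.eq w e]
      simp only [t]
      field_simp
      ring
  have hinj : Set.InjOn (fun w => (w + t w • e, t w)) ((E : Set V) \ E') := by
    intro w _ w' _ h
    have h1 : w + t w • e = w' + t w' • e := congrArg Prod.fst h
    have h2 : t w = t w' := congrArg Prod.snd h
    rw [h2] at h1
    exact add_right_cancel h1
  have hle := Set.ncard_le_ncard_of_injOn _ hmaps hinj (Set.toFinite _)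
  rw [Set.ncard_prod, Set.ncard_univ, Nat.card_eq_fintype_card] at hle
  have e1 : q ^ (Module.finrank F V - 1) = q ^ (Module.finrank F V - 3) * q * q := by
    rw [← pow_succ, ← pow_succ]; congr 1; omega
  have e2 : q ^ (Module.finrank F V - 2) = q ^ (Module.finrank F V - 3) * q := by
    rw [← pow_succ]; congr 1; omega
  rw [e1] at cE
  rw [e2] at cE'
  have h5 : q ^ (Module.finrank F V - 3) * q * q ≤ W.ncard * q + q ^ (Module.finrank F V - 3) * q := by
    rw [← hqd] at hle
    omega
  have h6 : q ^ (Module.finrank F V - 3) * q ≤ W.ncard + q ^ (Module.finrank F V - 3) := by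
    apply Nat.le_of_mul_le_mul_right (c := q) _ hq0
    rw [add_mul]
    exact h5
  have h7 : (q - 1) * q ^ (Module.finrank F V - 3) + q ^ (Module.finrank F V - 3) =
      q ^ (Module.finrank F V - 3) * q := by
    obtain ⟨m, hm⟩ : ∃ m, q = m + 1 := ⟨q - 1, by omega⟩
    rw [hm]; simp; ring
  omega

lemma exists_u (hB : B.Nondegenerate) (hs : B.IsSymm) (h2 : (2 : F) ≠ 0)
    (hn : 3 ≤ Module.finrank F V) {g : V ≃ₗ[F] V} (hg : g ∈ Iso B) {N : ℕ} (hgN : g ^ N = 1)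
    (hNodd : Odd N) (hN : (N : F) ≠ 0) (hg1 : g ≠ 1) :
    ∃ u, B u u ≠ 0 ∧ B (g u - g⁻¹ u) (g u - g⁻¹ u) ≠ 0 := by
  have hgg : ∀ v, g (g⁻¹ v) = v := fun v => g.apply_symm_apply v
  have hgg' : ∀ v, g⁻¹ (g v) = v := fun v => g.symm_apply_apply v
  set κ : V →ₗ[F] V := (g : V →ₗ[F] V) - ((g⁻¹ : V ≃ₗ[F] V) : V →ₗ[F] V) with hκ
  have hκa : ∀ v, κ v = g v - g⁻¹ v := fun v => rfl
  have hskew : ∀ x y, B (κ x) y = - B x (κ y) := by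
    intro x y
    have h1 : B (g x) y = B x (g⁻¹ y) := by
      have := hg x (g⁻¹ y); rwa [hgg] at this
    have h3 : B (g⁻¹ x) y = B x (g y) := by
      have := hg (g⁻¹ x) y; rw [hgg] at this; exact this.symm
    rw [hκa, hκa, map_sub, map_sub, LinearMap.sub_apply, h1, h3]
    ring
  have hg2 : g ^ 2 ≠ 1 := by
    intro h
    obtain ⟨m, hm⟩ := hNodd
    rw [hm, pow_succ, pow_mul, h, one_pow, one_mul] at hgN
    exact hg1 hgN
  have hex : ∃ e, B (κ e) (κ e) ≠ 0 := by
    by_contra hcon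
    push Not at hcon
    have hpol : ∀ x y, B (κ x) (κ y) = 0 := by
      intro x y
      have h1 := hcon (x + y)
      simp only [map_add, LinearMap.add_apply] at h1
      rw [hcon x, hcon y, hs.eq (κ y) (κ x)] at h1
      have h3 : 2 * B (κ x) (κ y) = 0 := by linear_combination h1
      exact (mul_eq_zero.1 h3).resolve_left h2
    have hκ2 : ∀ x, κ (κ x) = 0 := by
      intro x
      apply hB.1
      intro y
      rw [hskew, hpol, neg_zero]
    apply hg2
    have hdis := disjoint_Esp_Fsp (g := g ^ 2) (N := N) (by rw [← pow_mul, mul_comm, pow_mul, hgN, one_pow]) hN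
    apply eq_one_of_Esp_bot
    rw [eq_bot_iff]
    intro v hv
    rw [Submodule.mem_bot]
    refine (Submodule.disjoint_def.1 hdis) v hv ?_
    rw [mem_Fsp]
    obtain ⟨w, rfl⟩ := mem_Esp.1 hv
    have hsq : ∀ v, (g ^ 2) v = g (g v) := fun v => by rw [pow_two]; rfl
    have h1 := hκ2 (g (g w))
    simp only [hκa, map_sub, hgg, hgg'] at h1
    rw [hsq, hsq, map_sub, map_sub]
    rw [← sub_eq_zero]
    rw [← h1]
  obtain ⟨e, he⟩ := hex
  show ∃ u, B u u ≠ 0 ∧ B (κ u) (κ u) ≠ 0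
  by_cases hee : B e e = 0
  swap
  · exact ⟨e, hee, he⟩
  have hf : ∃ f, B e f = 0 ∧ B f f ≠ 0 := by
    by_contra hcon
    push Not at hcon
    have h1 : B.orthogonal (F ∙ e) ≤ B.orthogonal (B.orthogonal (F ∙ e)) := by
      intro x hx
      rw [LinearMap.BilinForm.mem_orthogonal_iff] at hx ⊢
      intro y hy
      rw [LinearMap.BilinForm.mem_orthogonal_iff] at hy
      have ex : B e x = 0 := hx e (Submodule.mem_span_singleton_self e)
      have ey : B e y = 0 := hy e (Submodule.mem_span_singleton_self e)
      have h3 := hcon (x + y) (by rw [map_add, ex, ey, add_zero])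
      simp only [map_add, LinearMap.add_apply] at h3
      rw [hcon x ex, hcon y ey, hs.eq x y] at h3
      have h4 : 2 * B y x = 0 := by linear_combination h3
      exact (mul_eq_zero.1 h4).resolve_left h2
    rw [LinearMap.BilinForm.orthogonal_orthogonal hB hs.isRefl] at h1
    have h3 := Submodule.finrank_mono h1
    have h4 := finrank_span1_le (F := F) e
    have h5 := LinearMap.BilinForm.finrank_orthogonal hB (F ∙ e)
    omega
  obtain ⟨f, hef, hff⟩ := hf
  have hfe : B f e = 0 := by rw [hs.eq, hef]
  by_contra hcon
  push Not at hcon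
  have c0 := hcon f hff
  have c1 := hcon (f + e) (by simp [hef, hfe, hee, hff])
  have c2 := hcon (f - e) (by simp [hef, hfe, hee, hff])
  apply he
  simp only [map_add, map_sub, LinearMap.add_apply, LinearMap.sub_apply] at c1 c2
  have h3 : 2 * B (κ e) (κ e) = 0 := by linear_combination c1 + c2 - 2 * c0
  exact (mul_eq_zero.1 h3).resolve_left h2

theorem class_bound [Fintype F] (hB : B.Nondegenerate) (hs : B.IsSymm) (h2 : (2 : F) ≠ 0)
    (hq : Odd (Fintype.card F)) (hn : 4 ≤ Module.finrank F V) {g : V ≃ₗ[F] V} (hg : g ∈ Iso B)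
    {N : ℕ} (hgN : g ^ N = 1) (hNodd : Odd N) (hN : (N : F) ≠ 0) (hg1 : g ≠ 1) :
    (Fintype.card F - 1) * Fintype.card F ^ (Module.finrank F V - 3) ≤
      ((fun x : V ≃ₗ[F] V => x * g * x⁻¹) '' (SOgp B : Set (V ≃ₗ[F] V))).ncard := by
  haveI : Finite V := Module.finite_of_finite F
  haveI : Finite (V ≃ₗ[F] V) := finite_equiv F V
  obtain ⟨u, hu, hκu⟩ := exists_u hB hs h2 (by omega) hg hgN hNodd hN hg1
  refine (count_norm hB hs h2 hq hn hu (B (g u - g⁻¹ u) (g u - g⁻¹ u))).trans ?_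
  have hsub : {w : V | B u w = 0 ∧ B w w = B (g u - g⁻¹ u) (g u - g⁻¹ u)} ⊆
      (fun h : V ≃ₗ[F] V => h u - h⁻¹ u) ''
        ((fun x : V ≃ₗ[F] V => x * g * x⁻¹) '' (SOgp B : Set (V ≃ₗ[F] V))) := by
    rintro w ⟨hw1, hw2⟩
    have hua : B u (g u - g⁻¹ u) = 0 := by
      have h1 := hg u (g⁻¹ u)
      have h3 : g (g⁻¹ u) = u := g.apply_symm_apply u
      rw [h3] at h1
      rw [map_sub, ← h1, hs.eq (g u) u, sub_self]
    obtain ⟨x, hx, hxu, hxa⟩ := exists_SO hB hs h2 (by omega) hu hua hw1 hκu hw2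
    refine ⟨x * g * x⁻¹, ⟨x, hx, rfl⟩, ?_⟩
    have hxi : x⁻¹ u = u := by
      have h3 : x⁻¹ (x u) = u := x.symm_apply_apply u
      rwa [hxu] at h3
    have hinv : (x * g * x⁻¹)⁻¹ = x * g⁻¹ * x⁻¹ := by group
    show (x * g * x⁻¹) u - (x * g * x⁻¹)⁻¹ u = w
    rw [hinv]
    show x (g (x⁻¹ u)) - x (g⁻¹ (x⁻¹ u)) = w
    rw [hxi, ← map_sub, hxa]
  exact (Set.ncard_le_ncard hsub (Set.toFinite _)).trans (Set.ncard_image_le (Set.toFinite _))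

end ClassBound



/-! ### Numerics -/

section Numerics

lemma num_step (R q : ℝ) (m0 m n : ℕ) (hR : 0 < R) (hRq : R ≤ q) (hq : 1 < q) (hm0 : 2 ≤ m0)
    (h0 : (R * q ^ 2) ^ (2 * m0) < (q - 1) ^ 3 * q ^ (3 * (2 * m0 - 3))) (hm : m0 ≤ m)
    (hn : 2 * m ≤ n) : (R * q ^ 2) ^ (2 * m) < ((q - 1) * q ^ (n - 3)) ^ 3 := by
  obtain ⟨i, rfl⟩ := Nat.exists_eq_add_of_le hm
  have hq0 : 0 < q := by linarith
  have hq1 : 0 < q - 1 := by linarith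
  calc (R * q ^ 2) ^ (2 * (m0 + i)) = (R * q ^ 2) ^ (2 * m0) * (R * q ^ 2) ^ (2 * i) := by
        rw [← pow_add]; congr 1; ring
    _ ≤ (R * q ^ 2) ^ (2 * m0) * (q * q ^ 2) ^ (2 * i) := by gcongr
    _ < ((q - 1) ^ 3 * q ^ (3 * (2 * m0 - 3))) * (q * q ^ 2) ^ (2 * i) := by
        apply mul_lt_mul_of_pos_right h0 (by positivity)
    _ = (q - 1) ^ 3 * q ^ (3 * (2 * m0 - 3) + 3 * (2 * i)) := by
        rw [pow_add, pow_mul q 3 (2 * i)]; ring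
    _ ≤ (q - 1) ^ 3 * q ^ (3 * (n - 3)) := by
        gcongr
        · exact hq.le
        · omega
    _ = ((q - 1) * q ^ (n - 3)) ^ 3 := by rw [mul_pow, ← pow_mul, mul_comm 3]

lemma hT_of (A R x : ℝ) (q j T : ℕ) (hA : 0 ≤ A) (hx : x = (q : ℝ) ^ j) (hx0 : 0 ≤ x)
    (h : A * (x + 1) ^ 2 ≤ 4 * (R ^ j * x ^ 2)) (hT : 2 * T ≤ q ^ j + 1) :
    A * (T : ℝ) ^ 2 ≤ (R * (q : ℝ) ^ 2) ^ j := by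
  have h1 : 2 * (T : ℝ) ≤ x + 1 := by rw [hx]; exact_mod_cast hT
  have h2 : (2 * (T : ℝ)) ^ 2 ≤ (x + 1) ^ 2 := pow_le_pow_left₀ (by positivity) h1 2
  have h3 : (R * (q : ℝ) ^ 2) ^ j = R ^ j * x ^ 2 := by
    rw [mul_pow, hx, ← pow_mul, ← pow_mul, mul_comm 2]
  rw [h3]
  have h4 : A * (2 * (T : ℝ)) ^ 2 ≤ A * (x + 1) ^ 2 := mul_le_mul_of_nonneg_left h2 hA
  nlinarith

lemma hT_big (A R : ℝ) (q : ℕ) (hq : 5 ≤ q) (hA : 0 ≤ A) (hR : 1 ≤ R) (hAR : A * 9 ≤ 25 * R) :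
    ∀ j T : ℕ, 1 ≤ j → 3 ≤ T → Odd T → 2 * T ≤ q ^ j + 1 →
      A * (T : ℝ) ^ 2 ≤ (R * (q : ℝ) ^ 2) ^ j := by
  intro j T hj _ _ hT
  have hq' : (5 : ℝ) ≤ q := by exact_mod_cast hq
  have hx : (5 : ℝ) ≤ (q : ℝ) ^ j := by
    calc (5 : ℝ) ≤ q := hq'
      _ = (q : ℝ) ^ 1 := (pow_one _).symm
      _ ≤ (q : ℝ) ^ j := pow_le_pow_right₀ (by linarith) hj
  have hRj : R ≤ R ^ j := by
    calc R = R ^ 1 := (pow_one _).symm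
      _ ≤ R ^ j := pow_le_pow_right₀ hR hj
  refine hT_of A R _ q j T hA rfl (by linarith) ?_ hT
  generalize (q : ℝ) ^ j = x at hx
  have h1 : (x + 1) ^ 2 ≤ (6 / 5 * x) ^ 2 := pow_le_pow_left₀ (by linarith) (by linarith) 2
  have h2 : A * (x + 1) ^ 2 ≤ A * (6 / 5 * x) ^ 2 := mul_le_mul_of_nonneg_left h1 hA
  have h3 : R * x ^ 2 ≤ R ^ j * x ^ 2 := mul_le_mul_of_nonneg_right hRj (by positivity)
  nlinarith [sq_nonneg x]

lemma hT_three (A R : ℝ) (hA : 0 ≤ A) (hR : 1 ≤ R) (h2 : A * 25 ≤ R ^ 2 * 81)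
    (h3 : A * 784 ≤ 2916 * R ^ 3) :
    ∀ j T : ℕ, 1 ≤ j → 3 ≤ T → Odd T → 2 * T ≤ 3 ^ j + 1 →
      A * (T : ℝ) ^ 2 ≤ (R * ((3 : ℕ) : ℝ) ^ 2) ^ j := by
  intro j T hj hT3 _ hT
  rcases Nat.lt_or_ge j 3 with hlt | hge
  · interval_cases j
    · omega
    · refine hT_of A R _ 3 2 T hA rfl (by positivity) ?_ hT
      norm_num
      linarith
  · have hx : (27 : ℝ) ≤ ((3 : ℕ) : ℝ) ^ j := by
      calc (27 : ℝ) = ((3 : ℕ) : ℝ) ^ 3 := by norm_num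
        _ ≤ ((3 : ℕ) : ℝ) ^ j := pow_le_pow_right₀ (by norm_num) hge
    have hRj : R ^ 3 ≤ R ^ j := pow_le_pow_right₀ hR hge
    refine hT_of A R _ 3 j T hA rfl (by linarith) ?_ hT
    generalize ((3 : ℕ) : ℝ) ^ j = x at hx
    have e1 : (x + 1) ^ 2 ≤ (28 / 27 * x) ^ 2 := pow_le_pow_left₀ (by linarith) (by linarith) 2
    have e2 : A * (x + 1) ^ 2 ≤ A * (28 / 27 * x) ^ 2 := mul_le_mul_of_nonneg_left e1 hA
    have e3 : R ^ 3 * x ^ 2 ≤ R ^ j * x ^ 2 := mul_le_mul_of_nonneg_right hRj (by positivity)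
    nlinarith [sq_nonneg x]

/-- the constants -/
lemma constants (q n : ℕ) (hq3 : 3 ≤ q) (hqodd : Odd q) (hn : 7 ≤ n) :
    ∃ (A R : ℝ) (M0 : ℕ), 0 ≤ A ∧ 1 ≤ R ∧ n / 2 ≤ M0 ∧ (∀ a ≤ M0, ub a ^ 2 ≤ A ^ a) ∧
      (∀ j T : ℕ, 1 ≤ j → 3 ≤ T → Odd T → 2 * T ≤ q ^ j + 1 →
        A * (T : ℝ) ^ 2 ≤ (R * (q : ℝ) ^ 2) ^ j) ∧
      (R * (q : ℝ) ^ 2) ^ (2 * (n / 2)) < (((q : ℝ) - 1) * (q : ℝ) ^ (n - 3)) ^ 3 := by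
  by_cases hq : q = 3
  · subst hq
    by_cases hm : n / 2 ≤ 7
    · refine ⟨33 / 10, 51 / 50, 7, by norm_num, by norm_num, hm, fun a ha => ub_sq_small a ha,
        hT_three _ _ (by norm_num) (by norm_num) (by norm_num) (by norm_num), ?_⟩
      by_cases h7 : n = 7
      · subst h7; norm_num
      · exact num_step _ _ 4 _ _ (by norm_num) (by norm_num) (by norm_num) (by norm_num)
          (by norm_num) (by omega) (by omega)
    · refine ⟨169 / 25, 3 / 2, n / 2, by norm_num, by norm_num, le_rfl, fun a _ => ub_sq a,
        hT_three _ _ (by norm_num) (by norm_num) (by norm_num) (by norm_num), ?_⟩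
      exact num_step _ _ 8 _ _ (by norm_num) (by norm_num) (by norm_num) (by norm_num)
          (by norm_num) (by omega) (by omega)
  · have hq5 : 5 ≤ q := by
      obtain ⟨m, hm⟩ := hqodd
      omega
    have hq' : (5 : ℝ) ≤ q := by exact_mod_cast hq5
    have hqc : (4 : ℝ) ^ 3 ≤ ((q : ℝ) - 1) ^ 3 := pow_le_pow_left₀ (by norm_num) (by linarith) 3
    by_cases hm : n / 2 ≤ 7
    · refine ⟨33 / 10, 6 / 5, 7, by norm_num, by norm_num, hm, fun a ha => ub_sq_small a ha,
        hT_big _ _ q hq5 (by norm_num) (by norm_num) (by norm_num), ?_⟩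
      by_cases h7 : n = 7
      · subst h7
        have e1 : ((6 / 5 : ℝ) * (q : ℝ) ^ 2) ^ (2 * (7 / 2)) = (6 / 5) ^ 6 * (q : ℝ) ^ 12 := by
          norm_num; ring
        have e2 : (((q : ℝ) - 1) * (q : ℝ) ^ (7 - 3)) ^ 3 = ((q : ℝ) - 1) ^ 3 * (q : ℝ) ^ 12 := by
          norm_num; ring
        rw [e1, e2]
        apply mul_lt_mul_of_pos_right _ (by positivity)
        norm_num at hqc ⊢
        linarith
      · refine num_step _ _ 4 _ _ (by norm_num) (by linarith) (by linarith) (by norm_num)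
          ?_ (by omega) (by omega)
        have e1 : ((6 / 5 : ℝ) * (q : ℝ) ^ 2) ^ (2 * 4) = (6 / 5) ^ 8 * q * (q : ℝ) ^ 15 := by ring
        have e2 : ((q : ℝ) - 1) ^ 3 * (q : ℝ) ^ (3 * (2 * 4 - 3)) = ((q : ℝ) - 1) ^ 3 * (q : ℝ) ^ 15 := by
          norm_num
        rw [e1, e2]
        apply mul_lt_mul_of_pos_right _ (by positivity)
        have e3 : (16 : ℝ) * (q - 1) ≤ (q - 1) ^ 3 := by nlinarith
        norm_num
        linarith
    · refine ⟨169 / 25, 5 / 2, n / 2, by norm_num, by norm_num, le_rfl, fun a _ => ub_sq a,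
        hT_big _ _ q hq5 (by norm_num) (by norm_num) (by norm_num), ?_⟩
      refine num_step _ _ 8 _ _ (by norm_num) (by linarith) (by linarith) (by norm_num)
          ?_ (by omega) (by omega)
      have e1 : ((5 / 2 : ℝ) * (q : ℝ) ^ 2) ^ (2 * 8) = (5 / 2) ^ 16 * (q : ℝ) ^ 32 := by ring
      have e2 : ((q : ℝ) - 1) ^ 3 * (q : ℝ) ^ (3 * (2 * 8 - 3)) = ((q : ℝ) - 1) ^ 3 * (q : ℝ) ^ 7 * (q : ℝ) ^ 32 := by
        norm_num; ring
      rw [e1, e2]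
      apply mul_lt_mul_of_pos_right _ (by positivity)
      have e3 : (5 : ℝ) ^ 7 ≤ (q : ℝ) ^ 7 := pow_le_pow_left₀ (by norm_num) hq' 7
      calc (5 / 2 : ℝ) ^ 16 < 4 ^ 3 * 5 ^ 7 := by norm_num
        _ ≤ ((q : ℝ) - 1) ^ 3 * (q : ℝ) ^ 7 := mul_le_mul hqc e3 (by positivity) (by linarith)

end Numerics

section LinFinal

theorem lin_final {F V : Type} [Field F] [Fintype F] [AddCommGroup V] [Module F V]
    [FiniteDimensional F V] {B : LinearMap.BilinForm F V} (hB : B.Nondegenerate) (hs : B.IsSymm)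
    (hq : Odd (Fintype.card F)) (hn : 7 ≤ Module.finrank F V) {π : Set ℕ} (hπ : PiOK F π)
    (H : Subgroup (V ≃ₗ[F] V)) (hH : IsHallSubgroupIn π (Iso B) H) :
    ∃ x ∈ SOgp B, ∃ y ∈ SOgp B, ∃ z ∈ SOgp B, ∀ g ∈ H, x * g * x⁻¹ ∈ H → y * g * y⁻¹ ∈ H →
      z * g * z⁻¹ ∈ H → g = 1 := by
  haveI : Finite V := Module.finite_of_finite F
  haveI : Finite (V ≃ₗ[F] V) := finite_equiv F V
  have h2F : (2 : F) ≠ 0 := by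
    apply Ring.two_ne_zero
    intro h
    rw [FiniteField.even_card_iff_char_two] at h
    obtain ⟨m, hm⟩ := hq
    omega
  have hq3 : 3 ≤ Fintype.card F := by
    have := Fintype.one_lt_card (α := F)
    obtain ⟨m, hm⟩ := hq
    omega
  obtain ⟨A, R, M0, hA0, hR1, hM0, hA, hT, hlt⟩ := constants (Fintype.card F)
    (Module.finrank F V) hq3 hq hn
  have hqr : (3 : ℝ) ≤ Fintype.card F := by exact_mod_cast hq3
  have hY1 : (1 : ℝ) ≤ R * (Fintype.card F : ℝ) ^ 2 := by nlinarith
  have hsize := size_thm hq hπ A (R * (Fintype.card F : ℝ) ^ 2) M0 hA0 hA hY1 hT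
    (Module.finrank F V) V B hB hs rfl hM0 H hH
  refine counting H (SOgp B) ((Fintype.card F - 1) * Fintype.card F ^ (Module.finrank F V - 3)) ?_ ?_
  · intro g hg hg1
    have hp := hH.2.1
    exact class_bound hB hs h2F hq (by omega) (hH.1 hg) (N := Nat.card H)
      (by have := pow_card_eq_one' (x := (⟨g, hg⟩ : H)); exact congrArg Subtype.val this)
      (hπ.odd hp) (hπ.ne_zero hp) hg1
  · have : ((Nat.card H : ℕ) : ℝ) ^ 4 <
        (((Fintype.card F : ℝ) - 1) * (Fintype.card F : ℝ) ^ (Module.finrank F V - 3)) ^ 3 := by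
      refine lt_of_le_of_lt ?_ hlt
      calc ((Nat.card H : ℕ) : ℝ) ^ 4 = (((Nat.card H : ℕ) : ℝ) ^ 2) ^ 2 := by ring
        _ ≤ ((R * (Fintype.card F : ℝ) ^ 2) ^ (Module.finrank F V / 2)) ^ 2 :=
          pow_le_pow_left₀ (by positivity) hsize 2
        _ = (R * (Fintype.card F : ℝ) ^ 2) ^ (2 * (Module.finrank F V / 2)) := by
          rw [← pow_mul, mul_comm (Module.finrank F V / 2) 2]
    have h1 : ((Fintype.card F - 1 : ℕ) : ℝ) = (Fintype.card F : ℝ) - 1 := by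
      rw [Nat.cast_sub (by omega)]; simp
    rw [← h1] at this
    exact_mod_cast this

end LinFinal


section Assembly

lemma relIndex_dvd_index_normal {Γ : Type*} [Group Γ] [Finite Γ] (H N : Subgroup Γ) [N.Normal] :
    H.relIndex N ∣ H.index := by
  have h1 := Subgroup.relIndex_mul_relIndex (H ⊓ N) H (H ⊔ N) inf_le_left le_sup_left
  have h2 := Subgroup.relIndex_mul_relIndex (H ⊓ N) N (H ⊔ N) inf_le_right le_sup_right
  rw [Subgroup.inf_relIndex_left] at h1
  rw [Subgroup.inf_relIndex_right, Subgroup.relIndex_sup_right] at h2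
  have h0 : N.relIndex H ≠ 0 := Subgroup.index_ne_zero_of_finite
  have h3 : H.relIndex N = H.relIndex (H ⊔ N) := by
    apply Nat.eq_of_mul_eq_mul_left (Nat.pos_of_ne_zero h0)
    rw [h1, mul_comm, h2]
  rw [h3, ← Subgroup.relIndex_mul_index (le_sup_left : H ≤ H ⊔ N)]
  exact dvd_mul_right _ _

lemma relIndex_dvd_normal {Γ : Type*} [Group Γ] [Finite Γ] (H N G : Subgroup Γ) (hN : N ≤ G)
    (hn : ∀ g ∈ G, ∀ o ∈ N, g * o * g⁻¹ ∈ N) : H.relIndex N ∣ H.relIndex G := by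
  haveI : (N.subgroupOf G).Normal := ⟨fun o ho g => by
    rw [Subgroup.mem_subgroupOf] at ho ⊢
    exact hn g g.2 o ho⟩
  have := relIndex_dvd_index_normal (H.subgroupOf G) (N.subgroupOf G)
  rwa [Subgroup.relIndex_subgroupOf hN] at this

variable {n : ℕ} {F : Type} [Field F]

/-- the linear automorphism attached to a matrix (homomorphic version of the row action) -/
noncomputable def rowAct (g : GL (Fin n) F) : (Fin n → F) ≃ₗ[F] (Fin n → F) where
  toFun v := Matrix.vecMul v ((g⁻¹ : GL (Fin n) F) : Matrix (Fin n) (Fin n) F)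
  invFun v := Matrix.vecMul v (g : Matrix (Fin n) (Fin n) F)
  map_add' u v := Matrix.add_vecMul _ u v
  map_smul' c v := Matrix.smul_vecMul c v _
  left_inv v := by
    beta_reduce
    rw [Matrix.vecMul_vecMul, g.inv_mul, Matrix.vecMul_one]
  right_inv v := by
    beta_reduce
    rw [Matrix.vecMul_vecMul, g.mul_inv, Matrix.vecMul_one]

/-- homomorphism version -/
noncomputable def rowHom : GL (Fin n) F →* ((Fin n → F) ≃ₗ[F] (Fin n → F)) where
  toFun := rowAct
  map_one' := by
    ext v
    simp [rowAct]
  map_mul' a b := by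
    apply LinearEquiv.ext
    intro v
    change Matrix.vecMul v (((a * b)⁻¹ : GL (Fin n) F) : Matrix (Fin n) (Fin n) F) =
      Matrix.vecMul (Matrix.vecMul v ((b⁻¹ : GL (Fin n) F) : Matrix (Fin n) (Fin n) F))
        ((a⁻¹ : GL (Fin n) F) : Matrix (Fin n) (Fin n) F)
    rw [Matrix.vecMul_vecMul, _root_.mul_inv_rev, Units.val_mul]

lemma rowHom_apply (g : GL (Fin n) F) (v : Fin n → F) :
    rowHom g v = Matrix.vecMul v ((g⁻¹ : GL (Fin n) F) : Matrix (Fin n) (Fin n) F) := rfl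

lemma rowHom_inj : Function.Injective (rowHom (n := n) (F := F)) := by
  rw [injective_iff_map_eq_one]
  intro g hg
  have h : ((g⁻¹ : GL (Fin n) F) : Matrix (Fin n) (Fin n) F) = 1 := by
    apply Matrix.ext_of_single_vecMul
    intro i
    rw [← rowHom_apply, hg, Matrix.vecMul_one]
    rfl
  have : g⁻¹ = 1 := Units.ext h
  exact inv_eq_one.1 this

lemma rowHom_surj : Function.Surjective (rowHom (n := n) (F := F)) := by
  intro x
  refine ⟨(⟨(LinearMap.toMatrix' (x : (Fin n → F) →ₗ[F] (Fin n → F)))ᵀ,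
    (LinearMap.toMatrix' (x.symm : (Fin n → F) →ₗ[F] (Fin n → F)))ᵀ, ?_, ?_⟩ : GL (Fin n) F)⁻¹, ?_⟩
  · rw [← Matrix.transpose_mul, ← LinearMap.toMatrix'_comp]
    simp
  · rw [← Matrix.transpose_mul, ← LinearMap.toMatrix'_comp]
    simp
  · apply LinearEquiv.ext
    intro v
    rw [rowHom_apply, inv_inv]
    change Matrix.vecMul v (LinearMap.toMatrix' (x : (Fin n → F) →ₗ[F] (Fin n → F)))ᵀ = _
    rw [Matrix.vecMul_transpose, LinearMap.toMatrix'_mulVec]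
    rfl

lemma rowHom_det (g : GL (Fin n) F) (h : rowHom g ∈ (LinearEquiv.det : ((Fin n → F) ≃ₗ[F] (Fin n → F)) →* Fˣ).ker) :
    g ∈ SLsub n F := by
  rw [← inv_mem_iff]
  rw [MonoidHom.mem_ker] at h
  have h2 := congrArg Units.val h
  rw [LinearEquiv.coe_det] at h2
  have h3 : ((rowHom g : (Fin n → F) ≃ₗ[F] (Fin n → F)) : (Fin n → F) →ₗ[F] (Fin n → F)) =
      Matrix.toLin' (((g⁻¹ : GL (Fin n) F) : Matrix (Fin n) (Fin n) F)ᵀ) := by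
    apply LinearMap.ext
    intro v
    rw [Matrix.toLin'_apply, Matrix.mulVec_transpose]
    rfl
  rw [h3, LinearMap.det_toLin', Matrix.det_transpose] at h2
  exact h2

/-- isometries of `Q` -/
noncomputable def qIso (Q : QuadraticForm F (Fin n → F)) : Subgroup (GL (Fin n) F) :=
  (Iso (QuadraticMap.polarBilin Q)).comap rowHom

lemma mem_qIso_iff (h2 : (2 : F) ≠ 0) (Q : QuadraticForm F (Fin n → F)) (g : GL (Fin n) F) :
    g ∈ qIso Q ↔ ∀ v, Q (Matrix.vecMul v (g : Matrix (Fin n) (Fin n) F)) = Q v := by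
  have key : ∀ g : GL (Fin n) F, g⁻¹ ∈ qIso Q ↔
      ∀ v, Q (Matrix.vecMul v (g : Matrix (Fin n) (Fin n) F)) = Q v := by
    intro g
    rw [qIso, Subgroup.mem_comap, mem_Iso]
    simp only [rowHom_apply, inv_inv, QuadraticMap.polarBilin_apply_apply]
    constructor
    · intro h v
      have := h v v
      rw [QuadraticMap.polar_self, QuadraticMap.polar_self] at this
      simpa [h2] using this
    · intro h u v
      simp only [QuadraticMap.polar, ← Matrix.add_vecMul, h]
  rw [← key, inv_mem_iff]

lemma qIso_le (h2 : (2 : F) ≠ 0) (Q : QuadraticForm F (Fin n → F)) :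
    qIso Q ≤ qSimilitudeGroup (⇑Q : (Fin n → F) → F) := by
  intro g hg
  exact ⟨1, fun v => by rw [(mem_qIso_iff h2 Q g).1 hg v]; simp⟩

lemma qIso_normal (h2 : (2 : F) ≠ 0) (Q : QuadraticForm F (Fin n → F)) (g : GL (Fin n) F)
    (hg : g ∈ qSimilitudeGroup (⇑Q : (Fin n → F) → F)) (o : GL (Fin n) F) (ho : o ∈ qIso Q) :
    g * o * g⁻¹ ∈ qIso Q := by
  rw [mem_qIso_iff h2] at ho ⊢
  obtain ⟨c, hc⟩ := inv_mem hg
  intro v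
  rw [Units.val_mul, Units.val_mul, ← Matrix.vecMul_vecMul, ← Matrix.vecMul_vecMul, hc, ho, ← hc,
    Matrix.vecMul_vecMul, g.mul_inv, Matrix.vecMul_one]

/-- scalar matrix -/
def scal (n : ℕ) {F : Type} [Field F] : Fˣ →* GL (Fin n) F :=
  Units.map (Matrix.scalar (Fin n) : F →+* Matrix (Fin n) (Fin n) F).toMonoidHom

lemma scal_val (c : Fˣ) : ((scal n c : GL (Fin n) F) : Matrix (Fin n) (Fin n) F) =
    (c : F) • (1 : Matrix (Fin n) (Fin n) F) := by
  simp [scal, Matrix.smul_one_eq_diagonal]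

lemma scal_comm (c : Fˣ) (g : GL (Fin n) F) : g * scal n c = scal n c * g := by
  apply Units.ext
  rw [Units.val_mul, Units.val_mul, scal_val]
  simp

lemma scal_vec (Q : QuadraticForm F (Fin n → F)) (c : Fˣ) (v : Fin n → F) :
    Q (Matrix.vecMul v ((scal n c : GL (Fin n) F) : Matrix (Fin n) (Fin n) F)) = (c : F) ^ 2 * Q v := by
  rw [scal_val, Matrix.vecMul_smul, Matrix.vecMul_one, QuadraticMap.map_smul, smul_eq_mul, pow_two]

lemma scal_mem (Q : QuadraticForm F (Fin n → F)) (c : Fˣ) :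
    scal n c ∈ qSimilitudeGroup (⇑Q : (Fin n → F) → F) :=
  ⟨c ^ 2, fun v => by rw [scal_vec]; simp⟩

lemma mult_pow (Q : QuadraticForm F (Fin n → F)) (g : GL (Fin n) F) (l : Fˣ)
    (h : ∀ v, Q (Matrix.vecMul v (g : Matrix (Fin n) (Fin n) F)) = (l : F) * Q v) (k : ℕ) :
    ∀ v, Q (Matrix.vecMul v ((g ^ k : GL (Fin n) F) : Matrix (Fin n) (Fin n) F)) =
      (l : F) ^ k * Q v := by
  induction k with
  | zero => intro v; simp
  | succ k ih =>
    intro v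
    rw [pow_succ, Units.val_mul, ← Matrix.vecMul_vecMul, h, ih]
    ring

lemma scal_in_hall [Fintype F] (Q : QuadraticForm F (Fin n → F)) {π : Set ℕ} (hπ : ∀ r ∈ π, r.Prime)
    (H : Subgroup (GL (Fin n) F))
    (hH : IsHallSubgroupIn π (qSimilitudeGroup (⇑Q : (Fin n → F) → F)) H) (c : Fˣ)
    (hc : c ^ Nat.card H = 1) : scal n c ∈ H := by
  have hle : Subgroup.zpowers (scal n c) ≤ qSimilitudeGroup (⇑Q : (Fin n → F) → F) := by
    rw [Subgroup.zpowers_le]; exact scal_mem Q c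
  have h1 : H.relIndex (Subgroup.zpowers (scal n c)) ∣
      H.relIndex (qSimilitudeGroup (⇑Q : (Fin n → F) → F)) := by
    apply relIndex_dvd_normal _ _ _ hle
    rintro g - o ho
    obtain ⟨k, rfl⟩ := Subgroup.mem_zpowers_iff.1 ho
    have h5 : g * scal n c ^ k * g⁻¹ = scal n c ^ k := by
      rw [← map_zpow, scal_comm, mul_inv_cancel_right]
    rw [h5]
    exact ho
  have h2 : H.relIndex (Subgroup.zpowers (scal n c)) ∣ Nat.card H := by
    refine (Subgroup.relIndex_dvd_card _ _).trans ?_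
    rw [Nat.card_zpowers]
    apply orderOf_dvd_of_pow_eq_one
    rw [← map_pow, hc, map_one]
  have h3 : H.relIndex (Subgroup.zpowers (scal n c)) = 1 := by
    by_contra hne
    obtain ⟨r, hr, hrd⟩ := Nat.exists_prime_and_dvd hne
    exact hH.2.2 r (hH.2.1 r hr (hrd.trans h2)) (hrd.trans h1)
  rw [Subgroup.relIndex_eq_one] at h3
  exact h3 (Subgroup.mem_zpowers _)

end Assembly

theorem stmt4 (p f q n : ℕ) (hp : p.Prime) (hpodd : p ≠ 2) (hf : 1 ≤ f) (hq : q = p ^ f)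
    (F : Type) [Field F] [Fintype F] (hcard : Fintype.card F = q)
    (hn : 7 ≤ n)
    (Q : QuadraticForm F (Fin n → F))
    (hnd : ∀ v : Fin n → F, (∀ w : Fin n → F, QuadraticMap.polar (⇑Q) v w = 0) → v = 0)
    (hnonsolv : ¬ IsSolvable ↥(qSimilitudeGroup (⇑Q : (Fin n → F) → F)))
    (π : Set ℕ) (hπ : ∀ r ∈ π, r.Prime) (h2pi : 2 ∉ π) (hppi : p ∉ π)
    (htwo : 2 ≤ (π ∩ {r : ℕ | r.Prime ∧ r ∣ Nat.card (qSimilitudeGroup (⇑Q : (Fin n → F) → F))}).ncard)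
    (H : Subgroup (GL (Fin n) F))
    (hH : IsHallSubgroupIn π (qSimilitudeGroup (⇑Q : (Fin n → F) → F)) H)
    :
    ∃ x y z : GL (Fin n) F,
      x ∈ (H : Set (GL (Fin n) F)) * ((qSimilitudeGroup (⇑Q : (Fin n → F) → F) ⊓ SLsub n F : Subgroup (GL (Fin n) F)) : Set (GL (Fin n) F)) ∧
      y ∈ (H : Set (GL (Fin n) F)) * ((qSimilitudeGroup (⇑Q : (Fin n → F) → F) ⊓ SLsub n F : Subgroup (GL (Fin n) F)) : Set (GL (Fin n) F)) ∧
      z ∈ (H : Set (GL (Fin n) F)) * ((qSimilitudeGroup (⇑Q : (Fin n → F) → F) ⊓ SLsub n F : Subgroup (GL (Fin n) F)) : Set (GL (Fin n) F)) ∧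
    ∀ g ∈ H ⊓ conjBy H x ⊓ conjBy H y ⊓ conjBy H z,
      ∃ c : F, (g : Matrix (Fin n) (Fin n) F) = c • (1 : Matrix (Fin n) (Fin n) F) := by
  have hchar : CharP F p := by
    haveI := Fact.mk hp
    obtain ⟨p', hp'⟩ := CharP.exists F
    obtain ⟨k, hk1, hk2⟩ := FiniteField.card F p'
    have : p' ∣ p ^ f := by
      rw [← hq, ← hcard, hk2]
      exact dvd_pow_self _ k.pos.ne'
    have h := (Nat.prime_dvd_prime_iff_eq hk1 hp).1 (hk1.dvd_of_dvd_pow this)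
    rwa [← h]
  have h2F : (2 : F) ≠ 0 := by
    intro h
    have h' : ((2 : ℕ) : F) = 0 := by exact_mod_cast h
    rw [CharP.cast_eq_zero_iff F p] at h'
    exact hpodd ((Nat.prime_dvd_prime_iff_eq hp Nat.prime_two).1 h')
  have hOK : PiOK F π := by
    intro r hr
    refine ⟨hπ r hr, fun h => h2pi (h ▸ hr), fun h => ?_⟩
    rw [CharP.cast_eq_zero_iff F p] at h
    exact hppi (((Nat.prime_dvd_prime_iff_eq hp (hπ r hr)).1 h) ▸ hr)
  have hodd : Odd (Fintype.card F) := by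
    rw [hcard, hq]
    exact (hp.odd_of_ne_two hpodd).pow
  have hs : LinearMap.BilinForm.IsSymm (QuadraticMap.polarBilin Q) := ⟨fun u v => by
    simp only [QuadraticMap.polarBilin_apply_apply]
    exact QuadraticMap.polar_comm _ _ _⟩
  have hB : (QuadraticMap.polarBilin Q).Nondegenerate := by
    refine ⟨fun v hv => hnd v fun w => ?_, fun v hv => hnd v fun w => ?_⟩
    · simpa using hv w
    · rw [QuadraticMap.polar_comm]; simpa using hv w
  have hfin : Finite (GL (Fin n) F) := inferInstance
  have hKO : IsHallSubgroupIn π (Iso (QuadraticMap.polarBilin Q)) ((H ⊓ qIso Q).map rowHom) := by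
    have hmap : (qIso Q).map rowHom = Iso (QuadraticMap.polarBilin Q) :=
      Subgroup.map_comap_eq_self_of_surjective rowHom_surj _
    refine ⟨?_, ?_, ?_⟩
    · rw [← hmap]
      exact Subgroup.map_mono inf_le_right
    · intro r hr hd
      rw [Subgroup.card_map_of_injective rowHom_inj] at hd
      exact hH.2.1 r hr (hd.trans (Subgroup.card_dvd_of_le inf_le_left))
    · intro r hr hd
      rw [← hmap, Subgroup.relIndex_map_map_of_injective _ _ rowHom_inj,
        Subgroup.inf_relIndex_right] at hd
      exact hH.2.2 r hr (hd.trans (relIndex_dvd_normal _ _ _ (qIso_le h2F Q) (qIso_normal h2F Q)))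
  obtain ⟨x', hx', y', hy', z', hz', hfinal⟩ :=
    lin_final hB hs hodd (by simpa using hn) hOK _ hKO
  obtain ⟨x, rfl⟩ := rowHom_surj x'
  obtain ⟨y, rfl⟩ := rowHom_surj y'
  obtain ⟨z, rfl⟩ := rowHom_surj z'
  have hmem : ∀ x : GL (Fin n) F, rowHom x ∈ SOgp (QuadraticMap.polarBilin Q) →
      x ∈ (H : Set (GL (Fin n) F)) * ((qSimilitudeGroup (⇑Q : (Fin n → F) → F) ⊓ SLsub n F : Subgroup (GL (Fin n) F)) : Set (GL (Fin n) F)) := by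
    intro x hx
    refine Set.mem_mul.2 ⟨1, H.one_mem, x, ⟨qIso_le h2F Q hx.1, rowHom_det x hx.2⟩, one_mul x⟩
  refine ⟨x, y, z, hmem x hx', hmem y hy', hmem z hz', ?_⟩
  rintro g ⟨⟨⟨hgH, hgx⟩, hgy⟩, hgz⟩
  obtain ⟨l, hl⟩ := hH.1 hgH
  -- multiplier has order dividing the order of `H`
  have hlH : l ^ Nat.card H = 1 := by
    have hgN : g ^ Nat.card H = 1 := by
      have := pow_card_eq_one' (x := (⟨g, hgH⟩ : H)); exact congrArg Subtype.val this
    have hQ : ∃ v, Q v ≠ 0 := by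
      by_contra hno
      push Not at hno
      have : (fun _ => 1 : Fin n → F) = 0 := hnd _ fun w => by simp [QuadraticMap.polar, hno]
      have := congrFun this ⟨0, by omega⟩
      simp at this
    obtain ⟨v, hv⟩ := hQ
    have := mult_pow Q g l hl (Nat.card H) v
    rw [hgN, Units.val_one, Matrix.vecMul_one] at this
    apply Units.ext
    rw [Units.val_pow_eq_pow_val, Units.val_one]
    apply mul_right_cancel₀ hv
    rw [← this, one_mul]
  have hHodd : Odd (Nat.card H) := hOK.odd hH.2.1
  obtain ⟨m, hm⟩ := hHodd
  set c : Fˣ := l ^ (m + 1) with hc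
  have hc2 : c ^ 2 = l := by
    rw [hc, ← pow_mul, show (m + 1) * 2 = Nat.card H + 1 by omega, pow_succ, hlH, one_mul]
  have hcH : scal n c ∈ H := by
    apply scal_in_hall Q hπ H hH
    rw [hc, ← pow_mul, mul_comm, pow_mul, hlH, one_pow]
  have hg0 : scal n c⁻¹ * g ∈ H := by
    rw [map_inv]
    exact H.mul_mem (H.inv_mem hcH) hgH
  have hg0O : scal n c⁻¹ * g ∈ qIso Q := by
    rw [mem_qIso_iff h2F]
    intro v
    rw [Units.val_mul, ← Matrix.vecMul_vecMul, hl, scal_vec, ← mul_assoc, ← hc2]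
    simp
  have hconj : ∀ x : GL (Fin n) F, rowHom x ∈ SOgp (QuadraticMap.polarBilin Q) →
      g ∈ conjBy H x →
      rowHom x * rowHom (scal n c⁻¹ * g) * (rowHom x)⁻¹ ∈ (H ⊓ qIso Q).map rowHom := by
    intro x hx hgx
    rw [← map_inv, ← map_mul, ← map_mul]
    apply Subgroup.mem_map_of_mem
    refine ⟨?_, (qIso Q).mul_mem ((qIso Q).mul_mem hx.1 hg0O) ((qIso Q).inv_mem hx.1)⟩
    obtain ⟨h, hh, rfl⟩ := Subgroup.mem_map.1 hgx
    have : x * (scal n c⁻¹ * (MulAut.conj x⁻¹).toMonoidHom h) * x⁻¹ = (scal n c)⁻¹ * h := by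
      rw [← mul_assoc x, scal_comm, map_inv]
      simp [mul_assoc]
    rw [this]
    exact H.mul_mem (H.inv_mem hcH) hh
  have hone := hfinal (rowHom (scal n c⁻¹ * g)) (Subgroup.mem_map_of_mem _ ⟨hg0, hg0O⟩)
    (hconj x hx' hgx) (hconj y hy' hgy) (hconj z hz' hgz)
  have hone' := rowHom_inj (hone.trans (map_one rowHom).symm)
  rw [map_inv, inv_mul_eq_one] at hone'
  exact ⟨c, by rw [← hone', scal_val]⟩
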